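/- arXiv:1203.3187 — 2 statements merged into one kernel-verified Lean document; each statement's English description precedes it below -/
import Mathlib

section
/- For every integer n ≥ 2, the opposite-boundary doubly-refined ASM generating function satisfies: (z1−z2)·Zopp_n(x,y;z1,z2)·Z_{n−1}(x,y) = (z1−1)·z2·Z_n(x,y;z1)·Z_{n−1}(x,y;z2) − z1·(z2−1)·Z_{n−1}(x,y;z1)·Z_n(x,y;z2), as an identity of polynomials in ℤ[x,y,z1,z2]. -/
open Finset

/-- The `n × n` integer matrix encoded by `e`, with entries in `{-1, 0, 1}`. -/
def asmMat {n : ℕ} (e : Fin n → Fin n → Fin 3) : Fin n → Fin n → ℤ :=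
  fun i j => (e i j : ℤ) - 1

/-- `A` is an alternating sign matrix: all entries lie in `{-1, 0, 1}`, every
partial row sum and every partial column sum is `0` or `1` (equivalently, the
nonzero entries of each row and of each column alternate in sign), and every
complete row sum and column sum is `1`. -/
def IsASM {n : ℕ} (A : Fin n → Fin n → ℤ) : Prop :=
  (∀ i j, A i j = -1 ∨ A i j = 0 ∨ A i j = 1) ∧
  (∀ (i j : Fin n), (∑ j' ∈ univ.filter (fun j' : Fin n => j' ≤ j), A i j') = 0 ∨
    (∑ j' ∈ univ.filter (fun j' : Fin n => j' ≤ j), A i j') = 1) ∧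
  (∀ (i j : Fin n), (∑ i' ∈ univ.filter (fun i' : Fin n => i' ≤ i), A i' j) = 0 ∨
    (∑ i' ∈ univ.filter (fun i' : Fin n => i' ≤ i), A i' j) = 1) ∧
  (∀ i : Fin n, (∑ j, A i j) = 1) ∧
  (∀ j : Fin n, (∑ i, A i j) = 1)

/-- `ν(A)`, the number of generalized inversions of `A`. -/
def nuASM {n : ℕ} (A : Fin n → Fin n → ℤ) : ℕ :=
  (∑ i : Fin n, ∑ i' : Fin n, ∑ j : Fin n, ∑ j' : Fin n,
      if i < i' ∧ j' ≤ j then A i j * A i' j' else 0).toNat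

/-- `μ(A)`, the number of entries of `A` equal to `-1`. -/
def muASM {n : ℕ} (A : Fin n → Fin n → ℤ) : ℕ :=
  (univ.filter (fun p : Fin n × Fin n => A p.1 p.2 = -1)).card

/-- `ρT(A)`, the number of `0`'s to the left of the `1` in the top row of `A`. -/
def rhoT {n : ℕ} (A : Fin n → Fin n → ℤ) : ℕ :=
  (univ.filter (fun j : Fin n =>
    A ⟨0, j.pos⟩ j = 0 ∧ ∃ j' : Fin n, j < j' ∧ A ⟨0, j.pos⟩ j' = 1)).card

/-- `ρR(A)`, the number of `0`'s below the `1` in the right-most column of `A`. -/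
def rhoR {n : ℕ} (A : Fin n → Fin n → ℤ) : ℕ :=
  (univ.filter (fun i : Fin n =>
    A i ⟨n - 1, Nat.sub_lt i.pos Nat.one_pos⟩ = 0 ∧
      ∃ i' : Fin n, i' < i ∧ A i' ⟨n - 1, Nat.sub_lt i.pos Nat.one_pos⟩ = 1)).card

/-- `ρB(A)`, the number of `0`'s to the right of the `1` in the bottom row of `A`. -/
def rhoB {n : ℕ} (A : Fin n → Fin n → ℤ) : ℕ :=
  (univ.filter (fun j : Fin n =>
    A ⟨n - 1, Nat.sub_lt j.pos Nat.one_pos⟩ j = 0 ∧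
      ∃ j' : Fin n, j' < j ∧ A ⟨n - 1, Nat.sub_lt j.pos Nat.one_pos⟩ j' = 1)).card

/-- `ρL(A)`, the number of `0`'s above the `1` in the left-most column of `A`. -/
def rhoL {n : ℕ} (A : Fin n → Fin n → ℤ) : ℕ :=
  (univ.filter (fun i : Fin n =>
    A i ⟨0, i.pos⟩ = 0 ∧ ∃ i' : Fin n, i < i' ∧ A i' ⟨0, i.pos⟩ = 1)).card

open Classical in
/-- The quadruply-refined ASM generating function
`Zqua_n(x,y;z1,z2,z3,z4) = Σ_A x^{ν(A)} y^{μ(A)} z1^{ρT(A)} z2^{ρR(A)} z3^{ρB(A)} z4^{ρL(A)}`. -/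
noncomputable def Zqua (n : ℕ) {R : Type*} [CommRing R] (x y z1 z2 z3 z4 : R) : R :=
  ∑ e : Fin n → Fin n → Fin 3,
    if IsASM (asmMat e) then
      x ^ nuASM (asmMat e) * y ^ muASM (asmMat e) * z1 ^ rhoT (asmMat e) *
        z2 ^ rhoR (asmMat e) * z3 ^ rhoB (asmMat e) * z4 ^ rhoL (asmMat e)
    else 0

/-- Adjacent-boundary doubly-refined generating function `Zadj_n(x,y;z1,z2)`. -/
noncomputable def Zadj (n : ℕ) {R : Type*} [CommRing R] (x y z1 z2 : R) : R :=
  Zqua n x y z1 1 1 z2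

/-- Alternative adjacent-boundary doubly-refined generating function `Zbaradj_n(x,y;z1,z2)`. -/
noncomputable def Zbaradj (n : ℕ) {R : Type*} [CommRing R] (x y z1 z2 : R) : R :=
  Zqua n x y z1 z2 1 1

/-- Triply-refined generating function `Ztri_n(x,y;z1,z2,z3)`. -/
noncomputable def Ztri (n : ℕ) {R : Type*} [CommRing R] (x y z1 z2 z3 : R) : R :=
  Zqua n x y z1 1 z2 z3

/-- Opposite-boundary doubly-refined generating function `Zopp_n(x,y;z1,z2)`. -/
noncomputable def Zopp (n : ℕ) {R : Type*} [CommRing R] (x y z1 z2 : R) : R :=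
  Zqua n x y z1 1 z2 1

/-- Singly-refined generating function `Z_n(x,y;z)`. -/
noncomputable def Zsing (n : ℕ) {R : Type*} [CommRing R] (x y z : R) : R :=
  Zqua n x y z 1 1 1

/-- Unrefined generating function `Z_n(x,y)`.  Note `Zun 0 x y = 1`. -/
noncomputable def Zun (n : ℕ) {R : Type*} [CommRing R] (x y : R) : R :=
  Zqua n x y 1 1 1 1

/-- The six-vertex weight of the vertex with spectral parameters `u` (row) and `v` (column),
edge `N` above, edge `h` to the left, and alternating sign matrix entry `e`. -/
def vertexWeight {K : Type*} [CommRing K] (t u v : K) (N h e : ℤ) : K :=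
  if N = 0 ∧ h = 0 ∧ e = 0 then v - t * u
  else if N = 1 ∧ h = 1 ∧ e = 0 then v - t * u
  else if N = 0 ∧ h = 1 ∧ e = 0 then v - u
  else if N = 1 ∧ h = 0 ∧ e = 0 then t * (v - u)
  else if N = 0 ∧ h = 0 ∧ e = 1 then (1 - t) * u
  else if N = 1 ∧ h = 1 ∧ e = -1 then (1 - t) * v
  else 0

/-- The transfer operator of a column with parameter `v` crossing the rows `us`: `N` is the state
of the top edge, the state of the bottom edge is `1`, `f` is the amplitude of the states to the
right of the column, and the last argument is the state to its left. -/
def columnOp {K : Type*} [CommRing K] (t v : K) :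
    List K → ℤ → (List ℤ → K) → List ℤ → K
  | [], N, f, _ => if N = 1 then f [] else 0
  | _ :: _, _, _, [] => 0
  | u :: us, N, f, h :: hs =>
      vertexWeight t u v N h (-1) * columnOp t v us (N - 1) (fun s => f ((h - 1) :: s)) hs +
      vertexWeight t u v N h 0 * columnOp t v us N (fun s => f (h :: s)) hs +
      vertexWeight t u v N h 1 * columnOp t v us (N + 1) (fun s => f ((h + 1) :: s)) hs

/-- The partition function of the six-vertex model with rows `us`, columns `vs`, upper edges `0`,
lower and right edges `1`, and a prescribed state of the left edges. -/
def amplitude {K : Type*} [CommRing K] (t : K) (us : List K) : List K → List ℤ → K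
  | [], hs => if hs = List.replicate us.length 1 then 1 else 0
  | v :: vs, hs => columnOp t v us 0 (amplitude t us vs) hs

/-- The domain wall partition function. -/
def domainWall {K : Type*} [CommRing K] (t : K) (us vs : List K) : K :=
  amplitude t us vs (List.replicate us.length 0)

section SixVertex

variable {K : Type*} [CommRing K]

theorem columnOp_add (t v : K) (us : List K) (N : ℤ) (f g : List ℤ → K) (hs : List ℤ) :
    columnOp t v us N (fun s => f s + g s) hs =
      columnOp t v us N f hs + columnOp t v us N g hs := by
  induction us generalizing N f g hs with
  | nil => simp only [columnOp]; split_ifs <;> simp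
  | cons u us ih =>
    cases hs with
    | nil => simp [columnOp]
    | cons h hs => simp only [columnOp, ih]; ring

theorem columnOp_mul (t v c : K) (us : List K) (N : ℤ) (f : List ℤ → K) (hs : List ℤ) :
    columnOp t v us N (fun s => c * f s) hs = c * columnOp t v us N f hs := by
  induction us generalizing N f hs with
  | nil => simp only [columnOp]; split_ifs <;> simp
  | cons u us ih =>
    cases hs with
    | nil => simp [columnOp]
    | cons h hs => simp only [columnOp, ih]; ring

theorem columnOp_zero (t v : K) (us : List K) (N : ℤ) (hs : List ℤ) :
    columnOp t v us N (fun _ => 0) hs = 0 := by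
  simpa using columnOp_mul t v 0 us N (fun _ => 0) hs

/-- The `R`-matrix acting on the states of the first two rows. -/
def braidOp (t u w : K) : (List ℤ → K) →ₗ[K] (List ℤ → K) where
  toFun f := fun hs => match hs with
    | h :: k :: s =>
      if h = 0 ∧ k = 0 then (u - t * w) * f (0 :: 0 :: s)
      else if h = 1 ∧ k = 1 then (u - t * w) * f (1 :: 1 :: s)
      else if h = 1 ∧ k = 0 then
        (1 - t) * u * f (1 :: 0 :: s) + (u - w) * f (0 :: 1 :: s)
      else if h = 0 ∧ k = 1 then
        t * (u - w) * f (1 :: 0 :: s) + (1 - t) * w * f (0 :: 1 :: s)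
      else 0
    | _ => 0
  map_add' f g := by
    funext hs
    rcases hs with _ | ⟨h, _ | ⟨k, s⟩⟩
    · simp
    · simp
    · simp only [Pi.add_apply]; split_ifs <;> ring
  map_smul' c f := by
    funext hs
    rcases hs with _ | ⟨h, _ | ⟨k, s⟩⟩
    · simp
    · simp
    · simp only [Pi.smul_apply, smul_eq_mul, RingHom.id_apply]; split_ifs <;> ring

/-- Apply an operator to the states of all rows but the first. -/
def tailOp (T : (List ℤ → K) →ₗ[K] (List ℤ → K)) : (List ℤ → K) →ₗ[K] (List ℤ → K) where
  toFun f := fun hs => match hs with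
    | h :: s => T (fun r => f (h :: r)) s
    | [] => 0
  map_add' f g := by
    funext hs
    rcases hs with _ | ⟨h, s⟩
    · simp
    · simp only [Pi.add_apply]
      exact congrFun (T.map_add (fun r => f (h :: r)) (fun r => g (h :: r))) s
  map_smul' c f := by
    funext hs
    rcases hs with _ | ⟨h, s⟩
    · simp
    · exact congrFun (T.map_smul c (fun r => f (h :: r))) s

theorem columnOp_braidOp (t u w v : K) (us : List K) (N : ℤ) (f : List ℤ → K) :
    columnOp t v (w :: u :: us) N (braidOp t u w f) =
      braidOp t u w (columnOp t v (u :: w :: us) N f) := by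
  funext hs
  rcases hs with _ | ⟨h, _ | ⟨k, s⟩⟩
  · simp [columnOp, braidOp]
  · simp [columnOp, braidOp]
  · by_cases hN : N = 0 <;> [skip; by_cases hN1 : N = 1] <;>
    (by_cases h0 : h = 0 <;> [skip; by_cases h1 : h = 1]) <;>
    (by_cases k0 : k = 0 <;> [skip; by_cases k1 : k = 1]) <;>
    subst_vars <;>
    simp [columnOp, braidOp, vertexWeight, columnOp_add, columnOp_mul, columnOp_zero, *] <;>
    ring

end SixVertex

section RowExchange
variable {K : Type*} [CommRing K]

theorem columnOp_tailOp {t v : K} {us us' : List K} (T : (List ℤ → K) →ₗ[K] (List ℤ → K))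
    (hT : ∀ N f, columnOp t v us' N (T f) = T (columnOp t v us N f)) (u : K) (N : ℤ)
    (f : List ℤ → K) :
    columnOp t v (u :: us') N (tailOp T f) = tailOp T (columnOp t v (u :: us) N f) := by
  funext hs
  rcases hs with _ | ⟨h, s⟩
  · simp [columnOp, tailOp]
  · have key : ∀ (M k : ℤ), columnOp t v us' M (fun r => tailOp T f (k :: r)) s =
        T (fun r => columnOp t v us M (fun q => f (k :: q)) r) s := fun M k =>
      congrFun (hT M (fun r => f (k :: r))) s
    have lin : ∀ (c : K) (g : List ℤ → K), c * T g s = T (fun r => c * g r) s := fun c g =>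
      (congrFun (T.map_smul c g) s).symm
    have ladd : ∀ (g g' : List ℤ → K), T g s + T g' s = T (fun r => g r + g' r) s := fun g g' =>
      (congrFun (T.map_add g g') s).symm
    simp only [columnOp, key, lin, ladd]
    rfl

/-- Permuting the rows of the six-vertex model is implemented by an intertwiner which acts by a
nonzero scalar on the boundary states. -/
theorem exists_intertwiner [IsDomain K] {t : K} {us us' : List K} (hp : us.Perm us')
    (hg : ∀ x ∈ us, ∀ y ∈ us, x ≠ t * y) :
    ∃ (T : (List ℤ → K) →ₗ[K] (List ℤ → K)) (c : K), c ≠ 0 ∧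
      (∀ v N f, columnOp t v us' N (T f) = T (columnOp t v us N f)) ∧
      T (amplitude t us []) = c • amplitude t us' [] ∧
      ∀ f, T f (List.replicate us.length 0) = c * f (List.replicate us'.length 0) := by
  induction hp with
  | nil => exact ⟨LinearMap.id, 1, one_ne_zero, by simp, by simp, by simp⟩
  | @cons u l l' _ ih =>
    obtain ⟨T, c, hc, h1, h2, h3⟩ := ih fun x hx y hy =>
      hg x (List.mem_cons_of_mem _ hx) y (List.mem_cons_of_mem _ hy)
    refine ⟨tailOp T, c, hc, fun v N f => columnOp_tailOp T (h1 v) u N f, ?_, ?_⟩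
    · funext hs
      rcases hs with _ | ⟨h, s⟩
      · simp [tailOp, amplitude, List.replicate_succ]
      · by_cases h1 : h = 1
        · have := congrFun h2 s
          simpa [tailOp, amplitude, List.replicate_succ, h1] using this
        · have : T (fun _ => 0) s = 0 := congrFun (T.map_zero) s
          simpa [tailOp, amplitude, List.replicate_succ, h1] using this
    · intro f
      exact h3 (fun r => f (0 :: r))
  | swap u w l =>
    refine ⟨braidOp t w u, w - t * u, sub_ne_zero.2 (hg w (by simp) u (by simp)),
      fun v N f => columnOp_braidOp t w u v l N f, ?_, ?_⟩
    · funext hs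
      rcases hs with _ | ⟨h, _ | ⟨k, s⟩⟩
      · simp [braidOp, amplitude, List.replicate_succ]
      · simp [braidOp, amplitude, List.replicate_succ]
      · by_cases h0 : h = 0 <;> [skip; by_cases h1 : h = 1] <;>
        (by_cases k0 : k = 0 <;> [skip; by_cases k1 : k = 1]) <;>
        simp [braidOp, amplitude, List.replicate_succ, *]
    · intro f
      simp [braidOp, List.replicate_succ]
  | trans hp₁ hp₂ ih₁ ih₂ =>
    obtain ⟨T, c, hc, h1, h2, h3⟩ := ih₁ hg
    obtain ⟨T', c', hc', h1', h2', h3'⟩ := ih₂ fun x hx y hy =>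
      hg x (hp₁.mem_iff.2 hx) y (hp₁.mem_iff.2 hy)
    refine ⟨T' ∘ₗ T, c * c', mul_ne_zero hc hc', ?_, ?_, ?_⟩
    · intro v N f
      simp [h1, h1']
    · simp [h2, h2', smul_smul]
    · intro f
      simp only [LinearMap.comp_apply]
      rw [hp₁.length_eq, h3', ← hp₂.length_eq, ← hp₁.length_eq, h3, hp₁.length_eq, hp₂.length_eq]
      ring

theorem domainWall_perm [IsDomain K] {t : K} {us us' : List K} (hp : us.Perm us')
    (hg : ∀ x ∈ us, ∀ y ∈ us, x ≠ t * y) (vs : List K) :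
    domainWall t us vs = domainWall t us' vs := by
  obtain ⟨T, c, hc, h1, h2, h3⟩ := exists_intertwiner hp hg
  have key : T (amplitude t us vs) = c • amplitude t us' vs := by
    induction vs with
    | nil => exact h2
    | cons v vs ih =>
      change T (columnOp t v us 0 (amplitude t us vs)) = _
      rw [← h1, ih]
      funext hs
      exact columnOp_mul t v c us' 0 (amplitude t us' vs) hs
  have := h3 (amplitude t us vs)
  rw [key, Pi.smul_apply, smul_eq_mul] at this
  have h4 := mul_left_cancel₀ hc this
  unfold domainWall
  rw [hp.length_eq] at h4 ⊢
  exact h4.symm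
end RowExchange

section CornerRecursion
variable {K : Type*} [CommRing K]

theorem columnOp_one_zeros (t v : K) (us : List K) (f : List ℤ → K) :
    columnOp t v us 1 f (List.replicate us.length 0) =
      (us.map fun w => t * (v - w)).prod * f (List.replicate us.length 0) := by
  induction us generalizing f with
  | nil => simp [columnOp]
  | cons u us ih => simp [columnOp, List.replicate_succ, vertexWeight, ih, mul_assoc]

theorem columnOp_zero_zeros_cons (t v u : K) (us : List K) (f : List ℤ → K) :
    columnOp t v (u :: us) 0 f (List.replicate (u :: us).length 0) =
      (v - t * u) * columnOp t v us 0 (fun s => f (0 :: s)) (List.replicate us.length 0) +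
      (1 - t) * u * ((us.map fun w => t * (v - w)).prod *
        f (1 :: List.replicate us.length 0)) := by
  simp [columnOp, List.replicate_succ, vertexWeight, columnOp_one_zeros]

theorem exists_polynomial_eval_eq_prod (us : List K) (f : K → K → K)
    (hf : ∀ u, ∃ p : Polynomial K, p.degree ≤ 1 ∧ ∀ v, p.eval v = f u v) :
    ∃ p : Polynomial K, p.degree ≤ (us.length : ℕ) ∧
      ∀ v, p.eval v = (us.map fun u => f u v).prod := by
  induction us with
  | nil => exact ⟨1, by simp, by simp⟩
  | cons u us ih =>
    obtain ⟨p, hp, hpe⟩ := ih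
    obtain ⟨q, hq, hqe⟩ := hf u
    refine ⟨q * p, (Polynomial.degree_mul_le _ _).trans ?_, by simp [hpe, hqe]⟩
    refine (add_le_add hq hp).trans ?_
    simp [add_comm]

theorem exists_polynomial_columnOp (t : K) (us : List K) (f : List ℤ → K) :
    ∃ p : Polynomial K, p.degree < us.length ∧
      ∀ v, p.eval v = columnOp t v us 0 f (List.replicate us.length 0) := by
  induction us generalizing f with
  | nil => exact ⟨0, by simp, by simp [columnOp]⟩
  | cons u us ih =>
    obtain ⟨p, hp, hpe⟩ := ih (fun s => f (0 :: s))
    obtain ⟨q, hq, hqe⟩ := exists_polynomial_eval_eq_prod us (fun w v => t * (v - w)) fun w =>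
      ⟨Polynomial.C t * (Polynomial.X - Polynomial.C w), by compute_degree, by simp⟩
    refine ⟨(Polynomial.X - Polynomial.C (t * u)) * p +
      Polynomial.C ((1 - t) * u * f (1 :: List.replicate us.length 0)) * q, ?_, fun v => ?_⟩
    · have h1 : (Polynomial.X - Polynomial.C (t * u)).degree ≤ 1 := by compute_degree
      have hlt : ((us.length : ℕ) : WithBot ℕ) < ((u :: us).length : ℕ) := by
        exact_mod_cast Nat.lt_succ_self _
      refine (Polynomial.degree_add_le _ _).trans_lt (max_lt ?_ ?_)
      · refine (Polynomial.degree_mul_le _ _).trans_lt ?_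
        rcases eq_or_ne p 0 with rfl | h0
        · simp
        · rw [Polynomial.degree_eq_natDegree h0] at hp ⊢
          refine (add_le_add_left h1 _).trans_lt ?_
          have : p.natDegree < us.length := by exact_mod_cast hp
          have h2 : 1 + p.natDegree < (u :: us).length := by simp; omega
          exact_mod_cast h2
      · rw [← Polynomial.smul_eq_C_mul]
        exact (Polynomial.degree_smul_le _ _).trans_lt (hq.trans_lt hlt)
    · rw [columnOp_zero_zeros_cons]
      simp [hpe, hqe]
      ring

theorem amplitude_cons_one (t u : K) (us vs : List K) (hs : List ℤ) :
    amplitude t (u :: us) vs (1 :: hs) = (vs.map fun v => v - u).prod * amplitude t us vs hs := by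
  induction vs generalizing hs with
  | nil => simp [amplitude, List.replicate_succ]
  | cons v vs ih => simp [amplitude, columnOp, vertexWeight, ih, columnOp_mul, mul_assoc]

theorem columnOp_append_one (t v u : K) (us : List K) (N : ℤ) (f : List ℤ → K) (hs : List ℤ)
    (hl : hs.length = us.length) :
    columnOp t v (us ++ [u]) N f (hs ++ [1]) =
      (v - t * u) * columnOp t v us N (fun s => f (s ++ [1])) hs := by
  induction us generalizing N f hs with
  | nil =>
    obtain rfl := List.length_eq_zero_iff.1 hl
    by_cases h1 : N = 1
    · simp [columnOp, vertexWeight, h1]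
    · by_cases h0 : N = 0
      · simp [columnOp, vertexWeight, h0]
      · simp [columnOp, vertexWeight, h0, h1]
  | cons w us ih =>
    rcases hs with _ | ⟨h, s⟩
    · simp at hl
    · have hl' : s.length = us.length := by simpa using hl
      simp only [List.cons_append, columnOp, ih _ _ s hl']
      ring

theorem columnOp_congr (t v : K) (us : List K) (N : ℤ) (f g : List ℤ → K) (hs : List ℤ)
    (hfg : ∀ s, s.length = us.length → f s = g s) :
    columnOp t v us N f hs = columnOp t v us N g hs := by
  induction us generalizing N f g hs with
  | nil => simp [columnOp, hfg]
  | cons w us ih =>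
    rcases hs with _ | ⟨h, s⟩
    · simp [columnOp]
    · simp only [columnOp]
      rw [ih _ _ (fun s => g ((h - 1) :: s)) s fun r hr => hfg _ (by simp [hr]),
        ih _ _ (fun s => g (h :: s)) s fun r hr => hfg _ (by simp [hr]),
        ih _ _ (fun s => g ((h + 1) :: s)) s fun r hr => hfg _ (by simp [hr])]

theorem amplitude_append_one (t u : K) (us vs : List K) (hs : List ℤ)
    (hl : hs.length = us.length) :
    amplitude t (us ++ [u]) vs (hs ++ [1]) =
      (vs.map fun v => v - t * u).prod * amplitude t us vs hs := by
  induction vs generalizing hs with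
  | nil =>
    have : List.replicate (us ++ [u]).length (1 : ℤ) = List.replicate us.length 1 ++ [1] := by
      simp [List.replicate_succ']
    simp only [amplitude, this, List.append_left_inj]
    simp
  | cons v vs ih =>
    simp only [amplitude, columnOp_append_one _ _ _ _ _ _ _ hl]
    rw [columnOp_congr _ _ _ _ _ _ _ ih, columnOp_mul]
    simp [mul_assoc]

theorem columnOp_append_self (t u : K) (us : List K) (f : List ℤ → K) :
    columnOp t u (us ++ [u]) 0 f (List.replicate (us ++ [u]).length 0) =
      (1 - t) * u * (us.map fun w => u - t * w).prod * f (List.replicate us.length 0 ++ [1]) := by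
  induction us generalizing f with
  | nil => simp [columnOp, vertexWeight]
  | cons w us ih =>
    rw [List.cons_append, columnOp_zero_zeros_cons, ih]
    simp [List.replicate_succ]
    ring

theorem domainWall_cons_mul_self (t u : K) (us vs : List K) :
    domainWall t (u :: us) (t * u :: vs) =
      (1 - t) * u * (us.map fun w => t * (t * u - w)).prod * (vs.map fun v => v - u).prod *
        domainWall t us vs := by
  simp only [domainWall, amplitude, columnOp_zero_zeros_cons, amplitude_cons_one]
  ring

theorem domainWall_cons_self [IsDomain K] (t u : K) (us vs : List K)
    (hg : ∀ x ∈ u :: us, ∀ y ∈ u :: us, x ≠ t * y) :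
    domainWall t (u :: us) (u :: vs) =
      (1 - t) * u * (us.map fun w => u - t * w).prod * (vs.map fun v => v - t * u).prod *
        domainWall t us vs := by
  rw [domainWall_perm (List.perm_append_singleton u us).symm hg]
  simp only [domainWall, amplitude, columnOp_append_self]
  rw [amplitude_append_one _ _ _ _ _ (by simp)]
  ring

end CornerRecursion

/-- Row parameters are generic if they are pairwise distinct and no one of them is `t` times
another one. -/
def GenericRows {K : Type*} [CommRing K] (t : K) (us : List K) : Prop :=
  us.Nodup ∧ ∀ x ∈ us, ∀ y ∈ us, x ≠ t * y

/-- The left-hand side of the three-term relation between partition functions with `vs.length` and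
`vs.length + 1` columns. -/
def mixedRelation {K : Type*} [CommRing K] (t v : K) (vs : List K) (a b c : K) (us : List K) : K :=
  (a - b) * ((v - t * c) * (v - c)) *
      (domainWall t (a :: b :: us) (v :: vs) * domainWall t (c :: us) vs) +
    (b - c) * ((v - t * a) * (v - a)) *
      (domainWall t (b :: c :: us) (v :: vs) * domainWall t (a :: us) vs) +
    (c - a) * ((v - t * b) * (v - b)) *
      (domainWall t (c :: a :: us) (v :: vs) * domainWall t (b :: us) vs)

/-- The left-hand side of the three-term (Plücker) relation between partition functions with the
same columns. -/
def plueckerRelation {K : Type*} [CommRing K] (t : K) (vs : List K) (a b c d : K) (us : List K) :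
    K :=
  (a - b) * (c - d) * (domainWall t (a :: b :: us) vs * domainWall t (c :: d :: us) vs) +
    (b - c) * (a - d) * (domainWall t (b :: c :: us) vs * domainWall t (a :: d :: us) vs) +
    (c - a) * (b - d) * (domainWall t (c :: a :: us) vs * domainWall t (b :: d :: us) vs)

section ThreeTermRelations
variable {K : Type*} [CommRing K]

theorem GenericRows.subperm {t : K} {us us' : List K} (h : GenericRows t us)
    (hs : us'.Subperm us) : GenericRows t us' := by
  obtain ⟨l, hl, hl'⟩ := hs
  refine ⟨hl.nodup_iff.1 (hl'.nodup h.1), fun x hx y hy => h.2 x ?_ y ?_⟩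
  · exact hl'.subset (hl.mem_iff.2 hx)
  · exact hl'.subset (hl.mem_iff.2 hy)

theorem GenericRows.perm {t : K} {us us' : List K} (h : GenericRows t us)
    (hs : us'.Perm us) : GenericRows t us' := h.subperm hs.subperm

theorem GenericRows.tail {t u : K} {us : List K} (h : GenericRows t (u :: us)) :
    GenericRows t us := h.subperm (List.sublist_cons_self u us).subperm

variable [IsDomain K]

theorem eq_zero_of_forall_rows {t : K} (ht : t ≠ 0) {us : List K} (hg : GenericRows t us)
    (F : K → K) (hF : ∃ p : Polynomial K, p.degree < (2 * us.length : ℕ) ∧ ∀ v, p.eval v = F v)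
    (h0 : ∀ u ∈ us, F u = 0) (h1 : ∀ u ∈ us, F (t * u) = 0) (v : K) : F v = 0 := by
  classical
  obtain ⟨p, hp, hpe⟩ := hF
  have hnd : (us ++ us.map (t * ·)).Nodup := by
    refine List.Nodup.append hg.1 (hg.1.map (mul_right_injective₀ ht)) ?_
    intro x hx hx'
    obtain ⟨y, hy, rfl⟩ := List.mem_map.1 hx'
    exact hg.2 _ hx y hy rfl
  have : p = 0 := by
    refine Polynomial.eq_zero_of_degree_lt_of_eval_finset_eq_zero
      (us ++ us.map (t * ·)).toFinset ?_ ?_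
    · rw [List.toFinset_card_of_nodup hnd]
      simpa [two_mul] using hp
    · intro x hx
      rw [List.mem_toFinset, List.mem_append, List.mem_map] at hx
      rw [hpe]
      rcases hx with hx | ⟨y, hy, rfl⟩
      · exact h0 x hx
      · exact h1 y hy
  rw [← hpe, this, Polynomial.eval_zero]

omit [IsDomain K] in
theorem exists_polynomial_domainWall (t : K) (us vs : List K) :
    ∃ p : Polynomial K, p.degree < us.length ∧ ∀ v, p.eval v = domainWall t us (v :: vs) :=
  exists_polynomial_columnOp t us (amplitude t us vs)

theorem domainWall_perm_of_generic {t : K} {us us' : List K} (hg : GenericRows t us)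
    (hp : us.Perm us') (vs : List K) : domainWall t us vs = domainWall t us' vs :=
  domainWall_perm hp hg.2 vs

theorem mixedRelation_perm {t a b c : K} {us us' : List K}
    (hg : GenericRows t (a :: b :: c :: us)) (hp : us.Perm us') (v : K) (vs : List K) :
    mixedRelation t v vs a b c us = mixedRelation t v vs a b c us' := by
  have hab : GenericRows t (a :: b :: us) := hg.subperm (List.Sublist.subperm (by simp))
  have hbc : GenericRows t (b :: c :: us) := hg.tail
  have hca : GenericRows t (c :: a :: us) :=
    (hg.subperm (List.Sublist.subperm (by simp)) : GenericRows t (a :: c :: us)).perm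
      (List.Perm.swap _ _ _)
  unfold mixedRelation
  rw [domainWall_perm_of_generic hab ((hp.cons b).cons a),
    domainWall_perm_of_generic hbc ((hp.cons c).cons b),
    domainWall_perm_of_generic hca ((hp.cons a).cons c),
    domainWall_perm_of_generic hab.tail (hp.cons b),
    domainWall_perm_of_generic hbc.tail (hp.cons c),
    domainWall_perm_of_generic hca.tail (hp.cons a)]

theorem plueckerRelation_perm {t a b c d : K} {us us' : List K}
    (hg : GenericRows t (a :: b :: c :: d :: us)) (hp : us.Perm us') (vs : List K) :
    plueckerRelation t vs a b c d us = plueckerRelation t vs a b c d us' := by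
  have hab : GenericRows t (a :: b :: us) := hg.subperm (List.Sublist.subperm (by simp))
  have hcd : GenericRows t (c :: d :: us) := hg.tail.tail
  have hbc : GenericRows t (b :: c :: us) := hg.subperm (List.Sublist.subperm (by simp))
  have had : GenericRows t (a :: d :: us) := hg.subperm (List.Sublist.subperm (by simp))
  have hbd : GenericRows t (b :: d :: us) := hg.subperm (List.Sublist.subperm (by simp))
  have hca : GenericRows t (c :: a :: us) :=
    (hg.subperm (List.Sublist.subperm (by simp)) : GenericRows t (a :: c :: us)).perm
      (List.Perm.swap _ _ _)
  unfold plueckerRelation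
  rw [domainWall_perm_of_generic hab ((hp.cons b).cons a),
    domainWall_perm_of_generic hcd ((hp.cons d).cons c),
    domainWall_perm_of_generic hbc ((hp.cons c).cons b),
    domainWall_perm_of_generic had ((hp.cons d).cons a),
    domainWall_perm_of_generic hca ((hp.cons a).cons c),
    domainWall_perm_of_generic hbd ((hp.cons d).cons b)]

omit [IsDomain K] in
theorem mixedRelation_rotate (t v : K) (vs : List K) (a b c : K) (us : List K) :
    mixedRelation t v vs a b c us = mixedRelation t v vs b c a us := by
  unfold mixedRelation; ring

omit [IsDomain K] in
theorem plueckerRelation_rotate (t : K) (vs : List K) (a b c d : K) (us : List K) :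
    plueckerRelation t vs a b c d us = plueckerRelation t vs b c a d us := by
  unfold plueckerRelation; ring

theorem GenericRows.domainWall_cons_self {t u : K} {us : List K} (hg : GenericRows t (u :: us))
    (vs : List K) :
    domainWall t (u :: us) (u :: vs) =
      (1 - t) * u * (us.map fun w => u - t * w).prod * (vs.map fun v => v - t * u).prod *
        domainWall t us vs :=
  _root_.domainWall_cons_self t u us vs hg.2

theorem mixedRelation_self {t a b c : K} {us : List K} (hg : GenericRows t (a :: b :: c :: us))
    (vs : List K) : mixedRelation t a vs a b c us = 0 := by
  have hab : GenericRows t (a :: b :: us) := hg.subperm (List.Sublist.subperm (by simp))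
  have hac : GenericRows t (a :: c :: us) := hg.subperm (List.Sublist.subperm (by simp))
  unfold mixedRelation
  rw [hab.domainWall_cons_self, domainWall_perm_of_generic (hac.perm (List.Perm.swap _ _ _))
    (List.Perm.swap _ _ _), hac.domainWall_cons_self]
  simp only [List.map_cons, List.prod_cons]
  ring

theorem mixedRelation_mul_self {t a b c : K} {us : List K}
    (hg : GenericRows t (a :: b :: c :: us)) (vs : List K) :
    mixedRelation t (t * a) vs a b c us = 0 := by
  have hac : GenericRows t (a :: c :: us) := hg.subperm (List.Sublist.subperm (by simp))
  unfold mixedRelation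
  rw [domainWall_cons_mul_self, domainWall_perm_of_generic (hac.perm (List.Perm.swap _ _ _))
    (List.Perm.swap _ _ _), domainWall_cons_mul_self]
  simp only [List.map_cons, List.prod_cons]
  ring

theorem List.perm_rotate_two {α : Type*} (a b p : α) (l : List α) :
    (a :: b :: p :: l).Perm (p :: a :: b :: l) :=
  ((List.Perm.swap p b l).cons a).trans (List.Perm.swap p a (b :: l))

theorem mixedRelation_eq_zero {t : K} (ht : t ≠ 0) (vs : List K)
    (hP : ∀ (a b c d : K) (us : List K), GenericRows t (a :: b :: c :: d :: us) →
      plueckerRelation t vs a b c d us = 0)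
    {a b c : K} {us : List K} (hg : GenericRows t (a :: b :: c :: us)) (v : K) :
    mixedRelation t v vs a b c us = 0 := by
  have hbca : GenericRows t (b :: c :: a :: us) :=
    hg.perm (List.perm_rotate_two b c a us)
  have hcab : GenericRows t (c :: a :: b :: us) :=
    hbca.perm (List.perm_rotate_two c a b us)
  have inner : ∀ p ∈ us, mixedRelation t p vs a b c us = 0 ∧
      mixedRelation t (t * p) vs a b c us = 0 := by
    classical
    intro p hp
    have hperm := List.perm_cons_erase hp
    set us' := us.erase p
    rw [mixedRelation_perm hg hperm, mixedRelation_perm hg hperm]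
    have hg' : GenericRows t (a :: b :: c :: p :: us') :=
      hg.perm (((hperm.symm.cons c).cons b).cons a)
    have hrel := hP a b c p us' hg'
    have hab : GenericRows t (a :: b :: p :: us') := hg'.subperm (List.Sublist.subperm (by simp))
    have hbc : GenericRows t (b :: c :: p :: us') := hg'.tail
    have hca : GenericRows t (c :: a :: p :: us') :=
      (hg'.subperm (List.Sublist.subperm (by simp)) : GenericRows t (a :: c :: p :: us')).perm
        (List.Perm.swap _ _ _)
    unfold mixedRelation
    rw [domainWall_perm_of_generic hab (List.perm_rotate_two _ _ _ _),
      domainWall_perm_of_generic hbc (List.perm_rotate_two _ _ _ _),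
      domainWall_perm_of_generic hca (List.perm_rotate_two _ _ _ _),
      domainWall_perm_of_generic hab (List.perm_rotate_two _ _ _ _),
      domainWall_perm_of_generic hbc (List.perm_rotate_two _ _ _ _),
      domainWall_perm_of_generic hca (List.perm_rotate_two _ _ _ _),
      (hab.perm (List.perm_rotate_two _ _ _ _).symm).domainWall_cons_self,
      (hbc.perm (List.perm_rotate_two _ _ _ _).symm).domainWall_cons_self,
      (hca.perm (List.perm_rotate_two _ _ _ _).symm).domainWall_cons_self,
      domainWall_cons_mul_self, domainWall_cons_mul_self, domainWall_cons_mul_self]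
    unfold plueckerRelation at hrel
    simp only [List.map_cons, List.prod_cons]
    constructor
    · linear_combination (-(1 - t) * p * (us'.map fun w => p - t * w).prod *
        (vs.map fun v => v - t * p).prod * (p - t * a) * (p - t * b) * (p - t * c)) * hrel
    · linear_combination (-(1 - t) * p * (us'.map fun w => t * (t * p - w)).prod *
        (vs.map fun v => v - p).prod * (t * p - a) * (t * p - b) * (t * p - c) * t ^ 3) * hrel
  refine eq_zero_of_forall_rows ht hg (fun v => mixedRelation t v vs a b c us) ?_ ?_ ?_ v
  · obtain ⟨p, hp, hpe⟩ := exists_polynomial_domainWall t (a :: b :: us) vs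
    obtain ⟨q, hq, hqe⟩ := exists_polynomial_domainWall t (b :: c :: us) vs
    obtain ⟨r, hr, hre⟩ := exists_polynomial_domainWall t (c :: a :: us) vs
    have term : ∀ (s : Polynomial K) (d x y : K), s.degree < ((a :: b :: us).length : ℕ) →
        (Polynomial.C x * ((Polynomial.X - Polynomial.C (t * d)) *
          (Polynomial.X - Polynomial.C d)) * (s * Polynomial.C y)).degree <
          ((2 * (a :: b :: c :: us).length : ℕ) : WithBot ℕ) := by
      intro s d x y hs
      have h2 : (Polynomial.C x * ((Polynomial.X - Polynomial.C (t * d)) *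
          (Polynomial.X - Polynomial.C d))).degree ≤ 2 := by compute_degree
      have hs' : s.degree ≤ (us.length + 2 : ℕ) := hs.le
      have hC : (s * Polynomial.C y).degree ≤ (us.length + 2 : ℕ) := by
        rw [mul_comm, ← Polynomial.smul_eq_C_mul]
        exact (Polynomial.degree_smul_le _ _).trans hs'
      refine (Polynomial.degree_mul_le _ _).trans_lt ((add_le_add h2 hC).trans_lt ?_)
      have : 2 + (us.length + 2) < 2 * (a :: b :: c :: us).length := by simp; omega
      exact_mod_cast this
    refine ⟨_, (Polynomial.degree_add_le _ _).trans_lt (max_lt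
      ((Polynomial.degree_add_le _ _).trans_lt (max_lt
        (term p c (a - b) (domainWall t (c :: us) vs) hp)
        (term q a (b - c) (domainWall t (a :: us) vs) hq)))
        (term r b (c - a) (domainWall t (b :: us) vs) hr)), fun v => ?_⟩
    simp [hpe, hqe, hre, mixedRelation]
  · intro u hu
    simp only [List.mem_cons] at hu
    rcases hu with rfl | rfl | rfl | hu
    · exact mixedRelation_self hg vs
    · simp only [mixedRelation_rotate t _ vs a]
      exact mixedRelation_self hbca vs
    · simp only [mixedRelation_rotate t _ vs a]
      rw [mixedRelation_rotate]
      exact mixedRelation_self hcab vs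
    · exact (inner u hu).1
  · intro u hu
    simp only [List.mem_cons] at hu
    rcases hu with rfl | rfl | rfl | hu
    · exact mixedRelation_mul_self hg vs
    · simp only [mixedRelation_rotate t _ vs a]
      exact mixedRelation_mul_self hbca vs
    · simp only [mixedRelation_rotate t _ vs a]
      rw [mixedRelation_rotate]
      exact mixedRelation_mul_self hcab vs
    · exact (inner u hu).2

theorem plueckerRelation_self {t a b c d : K} {us : List K}
    (hg : GenericRows t (a :: b :: c :: d :: us)) (vs : List K)
    (hQ : ∀ v, mixedRelation t v vs b c d us = 0) :
    plueckerRelation t (a :: vs) a b c d us = 0 ∧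
      plueckerRelation t (t * a :: vs) a b c d us = 0 := by
  have hab : GenericRows t (a :: b :: us) := hg.subperm (List.Sublist.subperm (by simp))
  have hac : GenericRows t (a :: c :: us) := hg.subperm (List.Sublist.subperm (by simp))
  have had : GenericRows t (a :: d :: us) := hg.subperm (List.Sublist.subperm (by simp))
  have hbd : GenericRows t (b :: d :: us) := hg.subperm (List.Sublist.subperm (by simp))
  have e1 := domainWall_perm_of_generic (hac.perm (List.Perm.swap _ _ _)) (List.Perm.swap _ _ _)
  have e2 := domainWall_perm_of_generic hbd (List.Perm.swap _ _ _)
  have h1 := hQ a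
  have h2 := hQ (t * a)
  unfold mixedRelation at h1 h2
  unfold plueckerRelation
  rw [hab.domainWall_cons_self, had.domainWall_cons_self, e1, e1, hac.domainWall_cons_self,
    domainWall_cons_mul_self, domainWall_cons_mul_self, domainWall_cons_mul_self, e2, e2]
  simp only [List.map_cons, List.prod_cons]
  constructor
  · linear_combination ((1 - t) * a * (us.map fun w => a - t * w).prod *
        (vs.map fun v => v - t * a).prod) * h1
  · linear_combination ((1 - t) * a * (us.map fun w => t * (t * a - w)).prod *
        (vs.map fun v => v - a).prod) * h2

theorem plueckerRelation_last {t a b c d : K} {us : List K}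
    (hg : GenericRows t (a :: b :: c :: d :: us)) (vs : List K)
    (hQ : ∀ v, mixedRelation t v vs a b c us = 0) :
    plueckerRelation t (d :: vs) a b c d us = 0 ∧
      plueckerRelation t (t * d :: vs) a b c d us = 0 := by
  have had : GenericRows t (a :: d :: us) := hg.subperm (List.Sublist.subperm (by simp))
  have hbd : GenericRows t (b :: d :: us) := hg.subperm (List.Sublist.subperm (by simp))
  have hcd : GenericRows t (c :: d :: us) := hg.subperm (List.Sublist.subperm (by simp))
  have e1 := domainWall_perm_of_generic had (List.Perm.swap _ _ _)
  have e2 := domainWall_perm_of_generic hbd (List.Perm.swap _ _ _)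
  have e3 := domainWall_perm_of_generic hcd (List.Perm.swap _ _ _)
  have h1 := hQ d
  have h2 := hQ (t * d)
  unfold mixedRelation at h1 h2
  unfold plueckerRelation
  rw [e1, e1, e2, e2, e3, e3, (had.perm (List.Perm.swap _ _ _)).domainWall_cons_self,
    (hbd.perm (List.Perm.swap _ _ _)).domainWall_cons_self,
    (hcd.perm (List.Perm.swap _ _ _)).domainWall_cons_self,
    domainWall_cons_mul_self, domainWall_cons_mul_self, domainWall_cons_mul_self]
  simp only [List.map_cons, List.prod_cons]
  constructor
  · linear_combination (-(1 - t) * d * (us.map fun w => d - t * w).prod *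
        (vs.map fun v => v - t * d).prod) * h1
  · linear_combination (-(1 - t) * d * (us.map fun w => t * (t * d - w)).prod *
        (vs.map fun v => v - d).prod) * h2

theorem plueckerRelation_cons_eq_zero {t : K} (ht : t ≠ 0) (vs : List K)
    (hP : ∀ (a b c d : K) (us : List K), GenericRows t (a :: b :: c :: d :: us) →
      plueckerRelation t vs a b c d us = 0)
    {a b c d : K} {us : List K} (hg : GenericRows t (a :: b :: c :: d :: us)) (v : K) :
    plueckerRelation t (v :: vs) a b c d us = 0 := by
  have hbca : GenericRows t (b :: c :: a :: d :: us) :=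
    hg.perm (List.perm_rotate_two b c a (d :: us))
  have hcab : GenericRows t (c :: a :: b :: d :: us) :=
    hbca.perm (List.perm_rotate_two c a b (d :: us))
  have hQ : ∀ {x y z : K}, GenericRows t (x :: y :: z :: us) → ∀ w,
      mixedRelation t w vs x y z us = 0 := fun h => mixedRelation_eq_zero ht vs hP h
  have inner : ∀ p ∈ us, plueckerRelation t (p :: vs) a b c d us = 0 ∧
      plueckerRelation t (t * p :: vs) a b c d us = 0 := by
    classical
    intro p hp
    have hperm := List.perm_cons_erase hp
    set us' := us.erase p
    rw [plueckerRelation_perm hg hperm, plueckerRelation_perm hg hperm]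
    have hg' : GenericRows t (a :: b :: c :: d :: p :: us') :=
      hg.perm ((((hperm.symm.cons d).cons c).cons b).cons a)
    have hrel := hP a b c d us' (hg'.subperm (List.Sublist.subperm (by simp)))
    have hab : GenericRows t (a :: b :: p :: us') := hg'.subperm (List.Sublist.subperm (by simp))
    have hcd : GenericRows t (c :: d :: p :: us') := hg'.tail.tail
    have hbc : GenericRows t (b :: c :: p :: us') := hg'.subperm (List.Sublist.subperm (by simp))
    have had : GenericRows t (a :: d :: p :: us') := hg'.subperm (List.Sublist.subperm (by simp))
    have hbd : GenericRows t (b :: d :: p :: us') := hg'.subperm (List.Sublist.subperm (by simp))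
    have hca : GenericRows t (c :: a :: p :: us') :=
      (hg'.subperm (List.Sublist.subperm (by simp)) : GenericRows t (a :: c :: p :: us')).perm
        (List.Perm.swap _ _ _)
    have red : ∀ {x y : K}, GenericRows t (x :: y :: p :: us') →
        domainWall t (x :: y :: p :: us') (p :: vs) = (1 - t) * p *
          ((p - t * x) * ((p - t * y) * (us'.map fun w => p - t * w).prod)) *
          (vs.map fun v => v - t * p).prod * domainWall t (x :: y :: us') vs ∧
        domainWall t (x :: y :: p :: us') (t * p :: vs) = (1 - t) * p *
          (t * (t * p - x) * (t * (t * p - y) * (us'.map fun w => t * (t * p - w)).prod)) *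
          (vs.map fun v => v - p).prod * domainWall t (x :: y :: us') vs := by
      intro x y h
      have e := domainWall_perm_of_generic h (List.perm_rotate_two _ _ _ _)
      rw [e, e, (h.perm (List.perm_rotate_two _ _ _ _).symm).domainWall_cons_self,
        domainWall_cons_mul_self]
      simp only [List.map_cons, List.prod_cons, and_self]
    unfold plueckerRelation at hrel ⊢
    rw [(red hab).1, (red hcd).1, (red hbc).1, (red had).1, (red hbd).1, (red hca).1,
      (red hab).2, (red hcd).2, (red hbc).2, (red had).2, (red hbd).2, (red hca).2]
    constructor
    · linear_combination (((1 - t) * p * (us'.map fun w => p - t * w).prod *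
        (vs.map fun v => v - t * p).prod) ^ 2 *
          ((p - t * a) * (p - t * b) * (p - t * c) * (p - t * d))) * hrel
    · linear_combination (((1 - t) * p * (us'.map fun w => t * (t * p - w)).prod *
        (vs.map fun v => v - p).prod) ^ 2 *
          (t ^ 4 * (t * p - a) * (t * p - b) * (t * p - c) * (t * p - d))) * hrel
  have last := plueckerRelation_last hg vs
    (hQ (hg.subperm (List.Sublist.subperm (by simp))))
  have fst : ∀ {x y z : K}, GenericRows t (x :: y :: z :: d :: us) →
      plueckerRelation t (x :: vs) x y z d us = 0 ∧
        plueckerRelation t (t * x :: vs) x y z d us = 0 := fun h =>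
    plueckerRelation_self h vs (hQ h.tail)
  refine eq_zero_of_forall_rows ht hg (fun v => plueckerRelation t (v :: vs) a b c d us) ?_ ?_ ?_ v
  · obtain ⟨p₁, hp₁, he₁⟩ := exists_polynomial_domainWall t (a :: b :: us) vs
    obtain ⟨p₂, hp₂, he₂⟩ := exists_polynomial_domainWall t (c :: d :: us) vs
    obtain ⟨p₃, hp₃, he₃⟩ := exists_polynomial_domainWall t (b :: c :: us) vs
    obtain ⟨p₄, hp₄, he₄⟩ := exists_polynomial_domainWall t (a :: d :: us) vs
    obtain ⟨p₅, hp₅, he₅⟩ := exists_polynomial_domainWall t (c :: a :: us) vs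
    obtain ⟨p₆, hp₆, he₆⟩ := exists_polynomial_domainWall t (b :: d :: us) vs
    have term : ∀ (s r : Polynomial K) (x : K), s.degree < ((a :: b :: us).length : ℕ) →
        r.degree < ((a :: b :: us).length : ℕ) →
        (Polynomial.C x * (s * r)).degree <
          ((2 * (a :: b :: c :: d :: us).length : ℕ) : WithBot ℕ) := by
      intro s r x hs hr
      have hs' : s.degree ≤ (us.length + 2 : ℕ) := hs.le
      have hr' : r.degree ≤ (us.length + 2 : ℕ) := hr.le
      rw [← Polynomial.smul_eq_C_mul]
      refine (Polynomial.degree_smul_le _ _).trans_lt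
        ((Polynomial.degree_mul_le _ _).trans_lt ((add_le_add hs' hr').trans_lt ?_))
      have : (us.length + 2) + (us.length + 2) < 2 * (a :: b :: c :: d :: us).length := by
        simp; omega
      exact_mod_cast this
    refine ⟨_, (Polynomial.degree_add_le _ _).trans_lt (max_lt
      ((Polynomial.degree_add_le _ _).trans_lt (max_lt
        (term p₁ p₂ ((a - b) * (c - d)) hp₁ hp₂)
        (term p₃ p₄ ((b - c) * (a - d)) hp₃ hp₄)))
        (term p₅ p₆ ((c - a) * (b - d)) hp₅ hp₆)), fun v => ?_⟩
    simp [he₁, he₂, he₃, he₄, he₅, he₆, plueckerRelation]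
  · intro u hu
    simp only [List.mem_cons] at hu
    rcases hu with rfl | rfl | rfl | rfl | hu
    · exact (fst hg).1
    · simp only [plueckerRelation_rotate t _ a]
      exact (fst hbca).1
    · simp only [plueckerRelation_rotate t _ a]
      rw [plueckerRelation_rotate]
      exact (fst hcab).1
    · exact last.1
    · exact (inner u hu).1
  · intro u hu
    simp only [List.mem_cons] at hu
    rcases hu with rfl | rfl | rfl | rfl | hu
    · exact (fst hg).2
    · simp only [plueckerRelation_rotate t _ a]
      exact (fst hbca).2
    · simp only [plueckerRelation_rotate t _ a]
      rw [plueckerRelation_rotate]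
      exact (fst hcab).2
    · exact last.2
    · exact (inner u hu).2

theorem plueckerRelation_eq_zero {t : K} (ht : t ≠ 0) (vs : List K) (a b c d : K) (us : List K)
    (hg : GenericRows t (a :: b :: c :: d :: us)) : plueckerRelation t vs a b c d us = 0 := by
  induction vs generalizing a b c d us with
  | nil => simp [plueckerRelation, domainWall, amplitude, List.replicate_succ]
  | cons v vs ih => exact plueckerRelation_cons_eq_zero ht vs ih hg v

end ThreeTermRelations

section Specialization

theorem map_columnOp {K L : Type*} [CommRing K] [CommRing L] (φ : K →+* L) (t v : K) (us : List K)
    (N : ℤ) (f : List ℤ → K) (hs : List ℤ) :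
    φ (columnOp t v us N f hs) = columnOp (φ t) (φ v) (us.map φ) N (fun s => φ (f s)) hs := by
  induction us generalizing N f hs with
  | nil => simp only [columnOp, List.map_nil]; split_ifs <;> simp
  | cons u us ih =>
    rcases hs with _ | ⟨h, s⟩
    · simp [columnOp]
    · have hw : ∀ N h e, φ (vertexWeight t u v N h e) = vertexWeight (φ t) (φ u) (φ v) N h e := by
        intro N h e
        unfold vertexWeight
        split_ifs <;> simp
      simp only [columnOp, List.map_cons, map_add, map_mul, ih, hw]

theorem map_domainWall {K L : Type*} [CommRing K] [CommRing L] (φ : K →+* L) (t : K)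
    (us vs : List K) :
    φ (domainWall t us vs) = domainWall (φ t) (us.map φ) (vs.map φ) := by
  have : ∀ hs, φ (amplitude t us vs hs) = amplitude (φ t) (us.map φ) (vs.map φ) hs := by
    induction vs with
    | nil => intro hs; simp only [amplitude, List.map_nil, List.length_map]; split_ifs <;> simp
    | cons v vs ih => intro hs; simp only [amplitude, List.map_cons, map_columnOp, ih]
  simp [domainWall, this]

theorem genericRows_X (l : List ℕ) (hl : l.Nodup) (h0 : 0 ∉ l) :
    GenericRows (MvPolynomial.X 0 : MvPolynomial ℕ ℤ) (l.map MvPolynomial.X) := by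
  refine ⟨hl.map (MvPolynomial.X_injective), ?_⟩
  intro x hx y hy h
  obtain ⟨i, hi, rfl⟩ := List.mem_map.1 hx
  obtain ⟨j, hj, rfl⟩ := List.mem_map.1 hy
  have hi0 : i ≠ 0 := fun h => h0 (h ▸ hi)
  have := congrArg (MvPolynomial.eval fun k => if k = 0 then (0 : ℤ) else 1) h
  simp [hi0] at this

/-- The three-term relation when all columns and all but two rows are homogeneous. -/
theorem domainWall_homogeneous_relation {L : Type*} [CommRing L] (t r a b : L) (m k : ℕ) :
    (a - b) * ((1 - t * r) * (1 - r)) *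
      (domainWall t (a :: (List.replicate m r ++ [b])) (List.replicate (k + 1) 1) *
        domainWall t (r :: List.replicate m r) (List.replicate k 1)) +
    (b - r) * ((1 - t * a) * (1 - a)) *
      (domainWall t (b :: r :: List.replicate m r) (List.replicate (k + 1) 1) *
        domainWall t (a :: List.replicate m r) (List.replicate k 1)) +
    (r - a) * ((1 - t * b) * (1 - b)) *
      (domainWall t (a :: r :: List.replicate m r) (List.replicate (k + 1) 1) *
        domainWall t (b :: List.replicate m r) (List.replicate k 1)) = 0 := by
  let W : List ℕ := (List.range m).map (· + 4)
  have hnd : (1 :: 2 :: 3 :: W).Nodup := by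
    have : W.Nodup := List.nodup_range.map (add_left_injective 4)
    simp [W, this, List.nodup_cons]
  let x : ℕ → MvPolynomial ℕ ℤ := MvPolynomial.X
  have hg : GenericRows (x 0) (x 1 :: x 2 :: x 3 :: W.map x) :=
    genericRows_X (1 :: 2 :: 3 :: W) hnd (by simp [W])
  have h12 : GenericRows (x 0) (x 1 :: x 2 :: W.map x) :=
    hg.subperm (List.Sublist.subperm (by simp))
  have h31 : GenericRows (x 0) (x 3 :: x 1 :: W.map x) :=
    (hg.subperm (List.Sublist.subperm (by simp)) :
      GenericRows (x 0) (x 1 :: x 3 :: W.map x)).perm (List.Perm.swap _ _ _)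
  have key := mixedRelation_eq_zero (MvPolynomial.X_ne_zero 0) (List.replicate k 1)
    (fun a b c d us => plueckerRelation_eq_zero (MvPolynomial.X_ne_zero 0) _ a b c d us) hg 1
  unfold mixedRelation at key
  rw [domainWall_perm_of_generic h12 ((List.perm_append_singleton _ _).symm.cons _),
    domainWall_perm_of_generic h31 (List.Perm.swap _ _ _)] at key
  let φ : MvPolynomial ℕ ℤ →+* L := MvPolynomial.eval₂Hom (Int.castRingHom L)
    (fun i => if i = 0 then t else if i = 1 then a else if i = 2 then b else r)
  have hW : (W.map x).map φ = List.replicate m r := by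
    rw [List.eq_replicate_iff]
    simp [W, φ, x]
  have h := congrArg φ key
  have hx0 : φ (x 0) = t := by simp [φ, x]
  have hx1 : φ (x 1) = a := by simp [φ, x]
  have hx2 : φ (x 2) = b := by simp [φ, x]
  have hx3 : φ (x 3) = r := by simp [φ, x]
  change φ (_ * ((_ - x 0 * _) * _) * _ + _ * ((_ - x 0 * _) * _) * _ +
    _ * ((_ - x 0 * _) * _) * _) = φ 0 at h
  simp only [map_add, map_mul, map_sub, map_domainWall, hx0, hx1, hx2, hx3, map_one,
    List.map_cons, List.map_append, hW, List.map_nil, List.map_replicate, map_zero] at h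
  exact h

end Specialization

section AlternatingSignMatrices
variable {K : Type*} [CommRing K]

theorem sum_fun_fin_succ {M : Type*} [AddCommMonoid M] {α : Type*} [Fintype α] {m : ℕ}
    (F : (Fin (m + 1) → α) → M) :
    ∑ e, F e = ∑ a, ∑ e : Fin m → α, F (Fin.cons a e) := by
  rw [← (Fin.consEquiv fun _ => α).sum_comp, Fintype.sum_prod_type]
  rfl

theorem sum_lt_succ {m : ℕ} (e : Fin (m + 1) → ℤ) (i : Fin m) :
    ∑ i' with i' < i.succ, e i' = e 0 + ∑ i' with i' < i, e i'.succ := by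
  simp only [sum_filter, Fin.sum_univ_succ, Fin.succ_pos, if_true, Fin.succ_lt_succ_iff]

theorem columnOp_ofFn (t v : K) {m : ℕ} (us : Fin m → K) (N : ℤ) (f : List ℤ → K)
    (h : Fin m → ℤ) :
    columnOp t v (List.ofFn us) N f (List.ofFn h) =
      ∑ e : Fin m → Fin 3,
        (∏ i, vertexWeight t (us i) v (N + ∑ i' with i' < i, ((e i' : ℤ) - 1)) (h i)
          ((e i : ℤ) - 1)) *
        if N + ∑ i, ((e i : ℤ) - 1) = 1 then f (List.ofFn fun i => h i + ((e i : ℤ) - 1))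
        else 0 := by
  induction m generalizing N f with
  | zero => simp [columnOp]
  | succ m ih =>
    rw [List.ofFn_succ, List.ofFn_succ, columnOp, sum_fun_fin_succ, Fin.sum_univ_three]
    simp only [ih, Fin.prod_univ_succ, sum_lt_succ, Fin.cons_zero, Fin.cons_succ, Fin.sum_univ_succ,
      List.ofFn_succ, mul_sum, ← add_assoc, mul_assoc]
    simp
    rfl

theorem amplitude_ofFn (t : K) {m n : ℕ} (us : Fin m → K) (vs : Fin n → K) (h : Fin m → ℤ) :
    amplitude t (List.ofFn us) (List.ofFn vs) (List.ofFn h) =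
      ∑ g : Fin n → Fin m → Fin 3,
        (∏ j, (∏ i, vertexWeight t (us i) (vs j) (∑ i' with i' < i, ((g j i' : ℤ) - 1))
          (h i + ∑ j' with j' < j, ((g j' i : ℤ) - 1)) ((g j i : ℤ) - 1)) *
          if ∑ i, ((g j i : ℤ) - 1) = 1 then 1 else 0) *
        if ∀ i, h i + ∑ j, ((g j i : ℤ) - 1) = 1 then 1 else 0 := by
  induction n generalizing h with
  | zero =>
    have : (List.ofFn h = List.replicate m 1) ↔ ∀ i, h i = 1 := by
      rw [← List.ofFn_const, List.ofFn_inj, funext_iff]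
    simp [amplitude, this]
  | succ n ih =>
    rw [List.ofFn_succ, amplitude, columnOp_ofFn, sum_fun_fin_succ]
    refine sum_congr rfl fun e _ => ?_
    rw [ih]
    simp only [Fin.prod_univ_succ, sum_lt_succ, Fin.cons_zero, Fin.cons_succ, Fin.sum_univ_succ,
      ← add_assoc, zero_add, mul_assoc]
    by_cases he : ∑ i, ((e i : ℤ) - 1) = 1
    · simp only [he, if_true, one_mul, mul_sum, Fin.not_lt_zero, filter_false, sum_empty, add_zero]
    · simp only [he, if_false, zero_mul, mul_zero, sum_const_zero]

theorem vertexWeight_support {t u v : K} {N h e : ℤ} (hw : vertexWeight t u v N h e ≠ 0) :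
    (N + e = 0 ∨ N + e = 1) ∧ (h + e = 0 ∨ h + e = 1) := by
  unfold vertexWeight at hw
  split_ifs at hw <;> first | exact absurd rfl hw | omega

theorem sum_le_eq_sum_lt_add {n : ℕ} (f : Fin n → ℤ) (i : Fin n) :
    ∑ i' with i' ≤ i, f i' = ∑ i' with i' < i, f i' + f i := by
  have : univ.filter (fun i' : Fin n => i' ≤ i) = insert i (univ.filter fun i' => i' < i) := by
    ext k; simp [le_iff_eq_or_lt]
  rw [this, sum_insert (by simp), add_comm]

open Classical in
theorem domainWall_ofFn (t : K) {n : ℕ} (us vs : Fin n → K) :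
    domainWall t (List.ofFn us) (List.ofFn vs) =
      ∑ e : Fin n → Fin n → Fin 3, if IsASM (asmMat e) then
        ∏ i, ∏ j, vertexWeight t (us i) (vs j) (∑ i' with i' < i, asmMat e i' j)
          (∑ j' with j' < j, asmMat e i j') (asmMat e i j) else 0 := by
  have h0 : List.replicate (List.ofFn us).length (0 : ℤ) = List.ofFn fun _ : Fin n => 0 := by
    simp
  rw [domainWall, h0, amplitude_ofFn, ← (Equiv.piComm fun _ _ => Fin 3).sum_comp]
  refine sum_congr rfl fun e _ => ?_
  simp only [Equiv.piComm_apply, Function.swap, zero_add, prod_mul_distrib]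
  change _ * (∏ j, if ∑ i, asmMat e i j = 1 then (1 : K) else 0) *
    (if ∀ i, ∑ j, asmMat e i j = 1 then (1 : K) else 0) = _
  rw [prod_comm]
  split_ifs with hr hA hA
  · rw [prod_eq_one fun j _ => if_pos (hA.2.2.2.2 j)]
    simp [asmMat]
  · by_contra hne
    apply hA
    rw [mul_one] at hne
    have hc : ∀ j, ∑ i, asmMat e i j = 1 := fun j => by
      by_contra hj
      exact right_ne_zero_of_mul hne (prod_eq_zero (mem_univ j) (if_neg hj))
    have hw : ∀ i j, vertexWeight t (us i) (vs j) (∑ i' with i' < i, asmMat e i' j)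
        (∑ j' with j' < j, asmMat e i j') (asmMat e i j) ≠ 0 := fun i j h =>
      left_ne_zero_of_mul hne (prod_eq_zero (mem_univ i) (prod_eq_zero (mem_univ j) h))
    refine ⟨fun i j => ?_, fun i j => ?_, fun i j => ?_, hr, hc⟩
    · have : (e i j : ℕ) < 3 := (e i j).isLt
      simp only [asmMat]
      omega
    · rw [sum_le_eq_sum_lt_add (asmMat e i)]
      exact (vertexWeight_support (hw i j)).2
    · rw [sum_le_eq_sum_lt_add (fun i' => asmMat e i' j)]
      exact (vertexWeight_support (hw i j)).1
  · exact absurd hA.2.2.2.1 hr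
  · simp

end AlternatingSignMatrices

section HomogeneousWeights

/-- The weight of row `i` of the matrix `A` when all column parameters are `1` and the row
parameter is `s`. -/
def rowWeight {K : Type*} [CommRing K] (t s : K) {n : ℕ} (A : Fin n → Fin n → ℤ) (i : Fin n) : K :=
  ∏ j, vertexWeight t s 1 (∑ i' with i' < i, A i' j) (∑ j' with j' < j, A i j') (A i j)

variable {K : Type*} [Field K]

theorem IsASM.above_eq {n : ℕ} {A : Fin n → Fin n → ℤ} (hA : IsASM A) (i j : Fin n) :
    ∑ i' with i' < i, A i' j = 0 ∨ ∑ i' with i' < i, A i' j = 1 := by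
  obtain ⟨i, hi⟩ := i
  rcases i with _ | i
  · left
    refine sum_eq_zero fun k hk => ?_
    simp [Fin.lt_def] at hk
  · have h := hA.2.2.1 ⟨i, by omega⟩ j
    have : univ.filter (fun k : Fin n => k ≤ ⟨i, by omega⟩) =
        univ.filter (fun k : Fin n => k < ⟨i + 1, hi⟩) := by
      ext k; simp [Fin.le_def, Fin.lt_def]
    rwa [this] at h

theorem IsASM.left_eq {n : ℕ} {A : Fin n → Fin n → ℤ} (hA : IsASM A) (i j : Fin n) :
    ∑ j' with j' < j, A i j' = 0 ∨ ∑ j' with j' < j, A i j' = 1 := by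
  have hT : IsASM fun i j => A j i :=
    ⟨fun i j => hA.1 j i, fun i j => hA.2.2.1 j i, fun i j => hA.2.1 j i, hA.2.2.2.2, hA.2.2.2.1⟩
  exact hT.above_eq j i

theorem vertexWeight_eq {t r : K} (ht : t ≠ 0) (hr : r ≠ 0) (ht1 : 1 - t ≠ 0) (ha : 1 - t * r ≠ 0)
    (hb : 1 - r ≠ 0) {N W e : ℤ} (hN : N = 0 ∨ N = 1) (hW : W = 0 ∨ W = 1)
    (hNe : N + e = 0 ∨ N + e = 1) (hWe : W + e = 0 ∨ W + e = 1) :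
    vertexWeight t r 1 N W e =
      t * (1 - r) ^ 2 / ((1 - t) * r) * ((1 - r) / (1 - t * r)) ^ (W + e).toNat *
        (t * (1 - r) / (1 - t * r)) ^ (N + e).toNat *
        ((1 - t) * r * (1 - t * r) / (t * (1 - r) ^ 2)) ^ (e + 1).toNat *
        ((1 - t * r) ^ 2 / (t * (1 - r) ^ 2)) ^ (N * (W + e)).toNat *
        ((1 - t) ^ 2 * r / (t * (1 - r) ^ 2)) ^ (if e = -1 then 1 else 0) := by
  have ha' : 1 - r * t ≠ 0 := by rwa [mul_comm r t]
  have he : e = -1 ∨ e = 0 ∨ e = 1 := by omega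
  rcases hN with rfl | rfl <;> rcases hW with rfl | rfl <;> rcases he with rfl | rfl | rfl <;>
    first
    | omega
    | (simp [vertexWeight]; try field_simp)

theorem sum_sum_le_eq {n : ℕ} (A : Fin n → Fin n → ℤ) (hc : ∀ j, ∑ i, A i j = 1) :
    ∑ i, ∑ j, ∑ j' with j' ≤ j, A i j' = ∑ j : Fin n, ((j : ℤ) + 1) := by
  rw [sum_comm]
  refine sum_congr rfl fun j _ => ?_
  rw [sum_comm, sum_congr rfl fun j' _ => hc j']
  have : univ.filter (fun j' : Fin n => j' ≤ j) = Iic j := by ext; simp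
  simp [this]

theorem sum_toNat_eq {α : Type*} (s : Finset α) (f : α → ℤ) (hf : ∀ a ∈ s, 0 ≤ f a) :
    ∑ a ∈ s, (f a).toNat = (∑ a ∈ s, f a).toNat := by
  zify
  rw [Int.toNat_of_nonneg (sum_nonneg hf)]
  exact sum_congr rfl fun a ha => Int.toNat_of_nonneg (hf a ha)

theorem nuASM_eq {n : ℕ} (A : Fin n → Fin n → ℤ) :
    nuASM A =
      (∑ i, ∑ j, (∑ i' with i' < i, A i' j) * (∑ j' with j' ≤ j, A i j')).toNat := by
  unfold nuASM
  congr 1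
  rw [sum_comm]
  refine sum_congr rfl fun i _ => ?_
  rw [sum_comm]
  refine sum_congr rfl fun j _ => ?_
  rw [sum_mul_sum, sum_filter]
  refine sum_congr rfl fun i' _ => ?_
  by_cases h : i' < i
  · simp [h, sum_filter]
  · simp [h]

theorem prod_rowWeight_eq {t r : K} (ht : t ≠ 0) (hr : r ≠ 0) (ht1 : 1 - t ≠ 0)
    (ha : 1 - t * r ≠ 0) (hb : 1 - r ≠ 0) (n : ℕ) :
    ∃ C : K, C ≠ 0 ∧ ∀ A : Fin n → Fin n → ℤ, IsASM A →
      ∏ i, rowWeight t r A i = C * ((1 - t * r) ^ 2 / (t * (1 - r) ^ 2)) ^ nuASM A *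
        ((1 - t) ^ 2 * r / (t * (1 - r) ^ 2)) ^ muASM A := by
  refine ⟨(t * (1 - r) ^ 2 / ((1 - t) * r)) ^ (n * n) *
    ((1 - r) / (1 - t * r)) ^ (∑ j : Fin n, ((j : ℤ) + 1)).toNat *
    (t * (1 - r) / (1 - t * r)) ^ (∑ j : Fin n, ((j : ℤ) + 1)).toNat *
    ((1 - t) * r * (1 - t * r) / (t * (1 - r) ^ 2)) ^ (n + n * n), ?_, ?_⟩
  · have ha' : 1 - r * t ≠ 0 := by rwa [mul_comm r t]
    refine mul_ne_zero (mul_ne_zero (mul_ne_zero ?_ ?_) ?_) ?_ <;> refine pow_ne_zero _ ?_ <;>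
      simp [*]
  · intro A hA
    have hS : ∀ i j, ∑ i' with i' < i, A i' j + A i j = ∑ i' with i' ≤ i, A i' j := fun i j =>
      (sum_le_eq_sum_lt_add (fun i' => A i' j) i).symm
    have hE : ∀ i j, ∑ j' with j' < j, A i j' + A i j = ∑ j' with j' ≤ j, A i j' := fun i j =>
      (sum_le_eq_sum_lt_add (A i) j).symm
    have hw : ∀ i j, _ := fun i j =>
      vertexWeight_eq ht hr ht1 ha hb (hA.above_eq i j) (hA.left_eq i j)
        (by rw [hS]; exact hA.2.2.1 i j) (by rw [hE]; exact hA.2.1 i j)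
    simp only [rowWeight, hw, prod_mul_distrib, prod_pow_eq_pow_sum, hS, hE]
    have e1 : ∑ i, ∑ j, (∑ j' with j' ≤ j, A i j').toNat =
        (∑ j : Fin n, ((j : ℤ) + 1)).toNat := by
      have nn : ∀ i j, 0 ≤ ∑ j' with j' ≤ j, A i j' := fun i j => by
        rcases hA.2.1 i j with h | h <;> omega
      rw [← sum_sum_le_eq A hA.2.2.2.2, ← sum_toNat_eq _ _ fun i _ => sum_nonneg fun j _ => nn i j]
      exact sum_congr rfl fun i _ => sum_toNat_eq _ _ fun j _ => nn i j
    have e2 : ∑ i, ∑ j, (∑ i' with i' ≤ i, A i' j).toNat =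
        (∑ j : Fin n, ((j : ℤ) + 1)).toNat := by
      have nn : ∀ i j, 0 ≤ ∑ i' with i' ≤ i, A i' j := fun i j => by
        rcases hA.2.2.1 i j with h | h <;> omega
      rw [sum_comm, ← sum_sum_le_eq (fun i j => A j i) hA.2.2.2.1,
        ← sum_toNat_eq _ _ fun j _ => sum_nonneg fun i _ => nn i j]
      exact sum_congr rfl fun j _ => sum_toNat_eq _ _ fun i _ => nn i j
    have e3 : ∑ i, ∑ j, (A i j + 1).toNat = n + n * n := by
      have nn : ∀ i j, 0 ≤ A i j + 1 := fun i j => by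
        rcases hA.1 i j with h | h | h <;> omega
      rw [sum_congr rfl fun i _ => sum_toNat_eq _ _ fun j _ => nn i j,
        sum_toNat_eq _ _ fun i _ => sum_nonneg fun j _ => nn i j]
      simp only [sum_add_distrib, hA.2.2.2.1]
      simp
      norm_cast
    have e4 : ∑ i, ∑ j, ((∑ i' with i' < i, A i' j) * ∑ j' with j' ≤ j, A i j').toNat =
        nuASM A := by
      have nn : ∀ i j, 0 ≤ (∑ i' with i' < i, A i' j) * ∑ j' with j' ≤ j, A i j' := fun i j => by
        rcases hA.above_eq i j with h | h <;> rcases hA.2.1 i j with h' | h' <;> simp [h, h']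
      rw [nuASM_eq, sum_congr rfl fun i _ => sum_toNat_eq _ _ fun j _ => nn i j,
        sum_toNat_eq _ _ fun i _ => sum_nonneg fun j _ => nn i j]
    have e5 : ∑ i, ∑ j, (if A i j = -1 then 1 else 0) = muASM A := by
      rw [muASM, card_filter, Fintype.sum_prod_type]
    rw [e1, e2, e3, e4, e5]
    simp only [prod_const, card_univ, Fintype.card_fin, pow_mul]

theorem exists_eq_single {n : ℕ} {f : Fin n → ℤ} (h01 : ∀ j, f j = 0 ∨ f j = 1)
    (hs : ∑ j, f j = 1) : ∃ k, ∀ j, f j = if j = k then 1 else 0 := by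
  obtain ⟨k, -, hk⟩ := exists_ne_zero_of_sum_ne_zero (hs.trans_ne one_ne_zero)
  have hk1 := (h01 k).resolve_left hk
  refine ⟨k, fun j => ?_⟩
  split_ifs with hj
  · rw [hj, hk1]
  · rw [← add_sum_erase _ _ (mem_univ k), hk1] at hs
    exact (sum_eq_zero_iff_of_nonneg fun i _ => by rcases h01 i with h | h <;> omega).1
      (by omega : ∑ i ∈ univ.erase k, f i = 0) j (by simp [hj])

/-- The ratio of the weight of a boundary row to that of a homogeneous row. -/
def boundaryFactor (r s : K) (n : ℕ) : K :=
  ((1 - s) / (1 - r)) ^ n * (s * (1 - r) / (r * (1 - s)))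

/-- The ratio of the weights of the two types of horizontal steps in a boundary row, relative to
that in a homogeneous row. -/
def boundaryRatio (t r s : K) : K :=
  (1 - t * s) * (1 - r) / ((1 - s) * (1 - t * r))

theorem rowWeight_of_single {t r s : K} (hr : r ≠ 0) (ha : 1 - t * r ≠ 0) (hb : 1 - r ≠ 0)
    (hs : 1 - s ≠ 0) {n : ℕ} (A : Fin n → Fin n → ℤ) (i k : Fin n)
    (hk : ∀ j, A i j = if j = k then 1 else 0) (p : Fin n → Prop) [DecidablePred p]
    (hp : ∀ j, p j ↔ j ≠ k ∧ ∑ i' with i' < i, A i' j = if k < j then 1 else 0)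
    (hN : ∀ j, if j = k then ∑ i' with i' < i, A i' j = 0
      else ∑ i' with i' < i, A i' j = 0 ∨ ∑ i' with i' < i, A i' j = 1) :
    rowWeight t s A i = boundaryFactor r s n * boundaryRatio t r s ^ #{j | p j} *
      rowWeight t r A i := by
  have hW : ∀ j, ∑ j' with j' < j, A i j' = if k < j then 1 else 0 := fun j => by
    simp [hk]
  have hpt : ∀ j, vertexWeight t s 1 (∑ i' with i' < i, A i' j) (∑ j' with j' < j, A i j') (A i j) =
      ((1 - s) / (1 - r)) * (if j = k then s * (1 - r) / (r * (1 - s)) else 1) *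
      (if p j then boundaryRatio t r s else 1) *
      vertexWeight t r 1 (∑ i' with i' < i, A i' j) (∑ j' with j' < j, A i j') (A i j) := by
    intro j
    have hNj := hN j
    rw [hW, hk]
    by_cases hj : j = k
    · subst hj
      have hpj : ¬ p j := fun h => ((hp j).1 h).1 rfl
      rw [if_pos rfl] at hNj
      simp [hpj, hNj, vertexWeight]
      field_simp
    · rw [if_neg hj] at hNj
      by_cases hkj : k < j <;> rcases hNj with h | h <;>
        simp [hp, hj, hkj, h, vertexWeight, boundaryRatio] <;> field_simp
  simp only [rowWeight, hpt, prod_mul_distrib, boundaryFactor]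
  rw [prod_ite_eq' univ k, if_pos (mem_univ k), prod_ite, prod_const_one, prod_const, mul_one,
    prod_const, card_univ, Fintype.card_fin]

theorem IsASM.rowWeight_top {t r s : K} (hr : r ≠ 0) (ha : 1 - t * r ≠ 0) (hb : 1 - r ≠ 0)
    (hs : 1 - s ≠ 0) {n : ℕ} {A : Fin (n + 1) → Fin (n + 1) → ℤ} (hA : IsASM A) :
    rowWeight t s A 0 = boundaryFactor r s (n + 1) * boundaryRatio t r s ^ rhoT A *
      rowWeight t r A 0 := by
  have hN : ∀ j, ∑ i' with i' < 0, A i' j = 0 := fun j => by simp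
  obtain ⟨k, hk⟩ := exists_eq_single (f := A 0) (fun j => by
    have := hA.2.2.1 0 j
    rwa [sum_le_eq_sum_lt_add (fun i' => A i' j), hN, zero_add] at this) (hA.2.2.2.1 0)
  have := rowWeight_of_single hr ha hb hs A 0 k hk (fun j => j < k) ?_ ?_
  · rw [this, rhoT]
    congr 4
    ext j
    simp only [Fin.zero_eta, hk, mem_filter_univ]
    constructor
    · intro h
      exact ⟨if_neg h.ne, k, h, if_pos rfl⟩
    · rintro ⟨-, j', h, h1⟩
      grind
  · intro j
    simp
    grind
  · intro j
    simp

theorem IsASM.rowWeight_bottom {t r s : K} (hr : r ≠ 0) (ha : 1 - t * r ≠ 0) (hb : 1 - r ≠ 0)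
    (hs : 1 - s ≠ 0) {n : ℕ} {A : Fin (n + 1) → Fin (n + 1) → ℤ} (hA : IsASM A) :
    rowWeight t s A (Fin.last n) = boundaryFactor r s (n + 1) * boundaryRatio t r s ^ rhoB A *
      rowWeight t r A (Fin.last n) := by
  have hN : ∀ j, ∑ i' with i' < Fin.last n, A i' j = 1 - A (Fin.last n) j := fun j => by
    have := sum_le_eq_sum_lt_add (fun i' => A i' j) (Fin.last n)
    have h1 := hA.2.2.2.2 j
    have : univ.filter (fun i : Fin (n + 1) => i ≤ Fin.last n) = univ := by
      ext i; simp [Fin.le_last]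
    simp_all
  obtain ⟨k, hk⟩ := exists_eq_single (f := A (Fin.last n)) (fun j => by
    have := hA.above_eq (Fin.last n) j
    rw [hN] at this
    omega) (hA.2.2.2.1 _)
  have := rowWeight_of_single hr ha hb hs A (Fin.last n) k hk (fun j => k < j) ?_ ?_
  · rw [this, rhoB]
    congr 4
    ext j
    have hl : (⟨n + 1 - 1, Nat.sub_lt j.pos Nat.one_pos⟩ : Fin (n + 1)) = Fin.last n := rfl
    simp only [hl, hk, mem_filter_univ]
    constructor
    · intro h
      exact ⟨if_neg h.ne', k, h, if_pos rfl⟩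
    · rintro ⟨-, j', h, h1⟩
      grind
  · intro j
    simp [hN, hk]
    grind
  · intro j
    simp [hN, hk]
    grind

end HomogeneousWeights

section Assembly

variable {K : Type*} [Field K]

open Classical in
theorem domainWall_ofFn_one (t : K) {n : ℕ} (us : Fin n → K) :
    domainWall t (List.ofFn us) (List.replicate n 1) =
      ∑ e : Fin n → Fin n → Fin 3,
        if IsASM (asmMat e) then ∏ i, rowWeight t (us i) (asmMat e) i else 0 := by
  rw [← List.ofFn_const, domainWall_ofFn]
  rfl

section

variable {t r : K} (hr : r ≠ 0) (ha : 1 - t * r ≠ 0) (hb : 1 - r ≠ 0) {C x y : K}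

include hr ha hb

theorem domainWall_eq_Zopp {n : ℕ}
    (hC : ∀ A : Fin (n + 2) → Fin (n + 2) → ℤ, IsASM A →
      ∏ i, rowWeight t r A i = C * x ^ nuASM A * y ^ muASM A)
    {a b : K} (hsa : 1 - a ≠ 0) (hsb : 1 - b ≠ 0) :
    domainWall t (a :: (List.replicate n r ++ [b])) (List.replicate (n + 2) 1) =
      C * boundaryFactor r a (n + 2) * boundaryFactor r b (n + 2) *
        Zopp (n + 2) x y (boundaryRatio t r a) (boundaryRatio t r b) := by
  classical
  have hl : a :: (List.replicate n r ++ [b]) =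
      List.ofFn (Fin.cons a (Fin.snoc (fun _ : Fin n => r) b : Fin (n + 1) → K) :
        Fin (n + 2) → K) := by
    have hs : List.replicate n r ++ [b] =
        List.ofFn (Fin.snoc (fun _ : Fin n => r) b : Fin (n + 1) → K) := by
      rw [List.ofFn_succ']
      simp [List.ofFn_const]
    rw [hs, List.ofFn_succ]
    simp
  rw [hl, domainWall_ofFn_one, Zopp, Zqua, mul_sum]
  refine sum_congr rfl fun e _ => ?_
  split_ifs with hA
  · have h := hC _ hA
    rw [Fin.prod_univ_succ, Fin.prod_univ_castSucc] at h ⊢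
    simp only [Fin.cons_zero, Fin.cons_succ, Fin.snoc_castSucc, Fin.snoc_last, one_pow,
      mul_one] at h ⊢
    rw [Fin.succ_last] at h ⊢
    rw [hA.rowWeight_top hr ha hb hsa, hA.rowWeight_bottom hr ha hb hsb]
    linear_combination boundaryFactor r a (n + 2) * boundaryFactor r b (n + 2) *
      boundaryRatio t r a ^ rhoT (asmMat e) * boundaryRatio t r b ^ rhoB (asmMat e) * h
  · rw [mul_zero]

theorem domainWall_eq_Zsing {n : ℕ}
    (hC : ∀ A : Fin (n + 1) → Fin (n + 1) → ℤ, IsASM A →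
      ∏ i, rowWeight t r A i = C * x ^ nuASM A * y ^ muASM A) {a : K} (hsa : 1 - a ≠ 0) :
    domainWall t (a :: List.replicate n r) (List.replicate (n + 1) 1) =
      C * boundaryFactor r a (n + 1) * Zsing (n + 1) x y (boundaryRatio t r a) := by
  classical
  have hl : a :: List.replicate n r =
      List.ofFn (Fin.cons a (fun _ : Fin n => r) : Fin (n + 1) → K) := by
    rw [List.ofFn_succ]
    simp [List.ofFn_const]
  rw [hl, domainWall_ofFn_one, Zsing, Zqua, mul_sum]
  refine sum_congr rfl fun e _ => ?_
  split_ifs with hA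
  · have h := hC _ hA
    rw [Fin.prod_univ_succ] at h ⊢
    simp only [Fin.cons_zero, Fin.cons_succ, one_pow, mul_one] at h ⊢
    rw [hA.rowWeight_top hr ha hb hsa]
    linear_combination boundaryFactor r a (n + 1) * boundaryRatio t r a ^ rhoT (asmMat e) * h
  · rw [mul_zero]

theorem domainWall_eq_Zun {n : ℕ}
    (hC : ∀ A : Fin (n + 1) → Fin (n + 1) → ℤ, IsASM A →
      ∏ i, rowWeight t r A i = C * x ^ nuASM A * y ^ muASM A) :
    domainWall t (r :: List.replicate n r) (List.replicate (n + 1) 1) = C * Zun (n + 1) x y := by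
  have h1 : boundaryFactor r r (n + 1) = 1 := by
    simp [boundaryFactor, hb, hr]
  have h2 : boundaryRatio t r r = 1 := by
    rw [boundaryRatio, mul_comm, div_self (mul_ne_zero hb ha)]
  rw [domainWall_eq_Zsing hr ha hb hC hb, h1, h2, mul_one]
  rfl

end

theorem Zopp_relation_of_param {t r a b : K} (ht : t ≠ 0) (hr : r ≠ 0) (ht1 : 1 - t ≠ 0)
    (ha : 1 - t * r ≠ 0) (hb : 1 - r ≠ 0) (ha0 : a ≠ 0) (hb0 : b ≠ 0) (hsa : 1 - a ≠ 0)
    (hsb : 1 - b ≠ 0) {x y z₁ z₂ : K} (hx : x = (1 - t * r) ^ 2 / (t * (1 - r) ^ 2))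
    (hy : y = (1 - t) ^ 2 * r / (t * (1 - r) ^ 2)) (hz₁ : z₁ = boundaryRatio t r a)
    (hz₂ : z₂ = boundaryRatio t r b) (m : ℕ) :
    (z₁ - z₂) * Zopp (m + 2) x y z₁ z₂ * Zun (m + 1) x y =
      (z₁ - 1) * z₂ * Zsing (m + 2) x y z₁ * Zsing (m + 1) x y z₂
      - z₁ * (z₂ - 1) * Zsing (m + 1) x y z₁ * Zsing (m + 2) x y z₂ := by
  obtain ⟨C, hC0, hC⟩ := prod_rowWeight_eq ht hr ht1 ha hb (m + 2)
  obtain ⟨D, hD0, hD⟩ := prod_rowWeight_eq ht hr ht1 ha hb (m + 1)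
  simp only [← hx, ← hy] at hC hD
  have key := domainWall_homogeneous_relation t r a b m (m + 1)
  rw [domainWall_eq_Zopp hr ha hb hC hsa hsb, domainWall_eq_Zun hr ha hb hD,
    domainWall_eq_Zsing hr ha hb hD hsa, domainWall_eq_Zsing hr ha hb hD hsb,
    ← List.replicate_succ, domainWall_eq_Zsing hr ha hb hC hsa,
    domainWall_eq_Zsing hr ha hb hC hsb, ← hz₁, ← hz₂] at key
  have hfac : ∀ s, boundaryFactor r s (m + 2) = (1 - s) / (1 - r) * boundaryFactor r s (m + 1) :=
    fun s => by simp only [boundaryFactor]; ring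
  rw [hfac, hfac] at key
  have hne : ∀ s, s ≠ 0 → 1 - s ≠ 0 → boundaryFactor r s (m + 1) ≠ 0 := fun s h0 h1 => by
    simp [boundaryFactor, h0, h1, hr, hb]
  have hP : C * D * boundaryFactor r a (m + 1) * boundaryFactor r b (m + 1) ≠ 0 :=
    mul_ne_zero (mul_ne_zero (mul_ne_zero hC0 hD0) (hne a ha0 hsa)) (hne b hb0 hsb)
  generalize Zopp (m + 2) x y z₁ z₂ = O at *
  generalize Zun (m + 1) x y = U at *
  generalize Zsing (m + 2) x y z₁ = S₁ at *
  generalize Zsing (m + 2) x y z₂ = S₂ at *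
  generalize Zsing (m + 1) x y z₁ = T₁ at *
  generalize Zsing (m + 1) x y z₂ = T₂ at *
  have key' : (a - b) * (1 - t * r) * O * U + (b - r) * (1 - t * a) * S₂ * T₁ +
      (r - a) * (1 - t * b) * S₁ * T₂ = 0 := by
    refine (mul_eq_zero.1 ?_).resolve_left (mul_ne_zero (mul_ne_zero hP hsa) hsb)
    field_simp at key
    linear_combination key
  have e1 : z₁ - 1 = (1 - t) * (a - r) / ((1 - a) * (1 - t * r)) := by
    rw [hz₁, boundaryRatio]; field_simp; ring
  have e2 : z₂ - 1 = (1 - t) * (b - r) / ((1 - b) * (1 - t * r)) := by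
    rw [hz₂, boundaryRatio]; field_simp; ring
  have e3 : z₁ - z₂ = (1 - t) * (1 - r) * (a - b) / ((1 - a) * (1 - b) * (1 - t * r)) := by
    rw [hz₁, hz₂, boundaryRatio, boundaryRatio]; field_simp; ring
  rw [e1, e2, e3, hz₁, hz₂, boundaryRatio, boundaryRatio]
  field_simp
  linear_combination key'

end Assembly

section Uniformization

variable {K : Type*} [Field K] [IsAlgClosed K]

theorem exists_param {x y : K} (hx : x ≠ 0) (hD : (1 + x - y) ^ 2 ≠ 4 * x) :
    ∃ q X : K, q ≠ 0 ∧ X ^ 2 = x ∧ 1 - q ^ 2 ≠ 0 ∧ X * (q ^ 2 + 1) = (1 + x - y) * q := by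
  obtain ⟨X, hX⟩ := IsAlgClosed.exists_pow_nat_eq x (n := 2) two_pos
  have hX0 : X ≠ 0 := by
    rintro rfl
    exact hx (by rw [← hX]; ring)
  obtain ⟨q, hq⟩ : ∃ q : K, X * q ^ 2 - (1 + x - y) * q + X = 0 := by
    have hdeg : (Polynomial.C X * Polynomial.X ^ 2 + Polynomial.C (-(1 + x - y)) * Polynomial.X +
        Polynomial.C X).degree ≠ 0 := by
      rw [Polynomial.degree_quadratic hX0]
      decide
    obtain ⟨q, hq⟩ := IsAlgClosed.exists_root _ hdeg
    refine ⟨q, ?_⟩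
    simp [Polynomial.IsRoot.def] at hq
    linear_combination hq
  refine ⟨q, X, ?_, hX, ?_, by linear_combination hq⟩
  · rintro rfl
    exact hX0 (by linear_combination hq)
  · intro h1
    apply hD
    have h2 : (1 + x - y) * q = 2 * X := by linear_combination -hq - X * h1
    linear_combination (((1 + x - y) * q) + 2 * X) * h2 + 4 * hX + (1 + x - y) ^ 2 * h1

theorem Zopp_relation_of_generic {x y z₁ z₂ : K} (hx : x ≠ 0) (hy : y ≠ 0)
    (hD : (1 + x - y) ^ 2 ≠ 4 * x) (hz₁ : 1 + z₁ ^ 2 * x - z₁ * (1 + x - y) ≠ 0)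
    (hz₂ : 1 + z₂ ^ 2 * x - z₂ * (1 + x - y) ≠ 0) (m : ℕ) :
    (z₁ - z₂) * Zopp (m + 2) x y z₁ z₂ * Zun (m + 1) x y =
      (z₁ - 1) * z₂ * Zsing (m + 2) x y z₁ * Zsing (m + 1) x y z₂
      - z₁ * (z₂ - 1) * Zsing (m + 1) x y z₁ * Zsing (m + 2) x y z₂ := by
  obtain ⟨q, X, hq, hX, hq1, hqX⟩ := exists_param hx hD
  have hX0 : X ≠ 0 := by
    rintro rfl
    exact hx (by rw [← hX]; ring)
  have hfac : ∀ z, (1 - q * z * X) * (q - z * X) = q * (1 + z ^ 2 * x - z * (1 + x - y)) :=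
    fun z => by linear_combination -z * hqX + q * z ^ 2 * hX
  have hne : ∀ z, 1 + z ^ 2 * x - z * (1 + x - y) ≠ 0 → 1 - q * z * X ≠ 0 ∧ q - z * X ≠ 0 :=
    fun z hz => by
      rw [← mul_ne_zero_iff, hfac]
      exact mul_ne_zero hq hz
  have hq1' : q ^ 2 - 1 ≠ 0 := by rwa [← neg_ne_zero, neg_sub]
  have h1 : 1 - q * X ≠ 0 ∧ q - X ≠ 0 := by
    simpa using hne 1 (by convert hy using 1; ring)
  obtain ⟨hn, hd⟩ := h1
  have hr1 : 1 - (1 - q * X) / (q * (q - X)) = (q ^ 2 - 1) / (q * (q - X)) := by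
    field_simp; ring
  have hr2 : 1 - q ^ 2 * ((1 - q * X) / (q * (q - X))) = X * (q ^ 2 - 1) / (q - X) := by
    field_simp; ring
  have hs1 : ∀ z, q - z * X ≠ 0 →
      1 - (1 - q * z * X) / (q * (q - z * X)) = (q ^ 2 - 1) / (q * (q - z * X)) := fun z hz => by
    field_simp; ring
  have hs2 : ∀ z, q - z * X ≠ 0 →
      1 - q ^ 2 * ((1 - q * z * X) / (q * (q - z * X))) = z * X * (q ^ 2 - 1) / (q - z * X) :=
    fun z hz => by field_simp; ring
  obtain ⟨hn₁, hd₁⟩ := hne z₁ hz₁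
  obtain ⟨hn₂, hd₂⟩ := hne z₂ hz₂
  have hy' : (1 - q * X) * (q - X) = q * y := by linear_combination hfac 1
  refine Zopp_relation_of_param (t := q ^ 2) (r := (1 - q * X) / (q * (q - X)))
    (a := (1 - q * z₁ * X) / (q * (q - z₁ * X))) (b := (1 - q * z₂ * X) / (q * (q - z₂ * X)))
    (pow_ne_zero _ hq) (div_ne_zero hn (mul_ne_zero hq hd)) hq1 ?_ ?_
    (div_ne_zero hn₁ (mul_ne_zero hq hd₁)) (div_ne_zero hn₂ (mul_ne_zero hq hd₂))
    ?_ ?_ ?_ ?_ ?_ ?_ m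
  · rw [hr2]
    exact div_ne_zero (mul_ne_zero hX0 hq1') hd
  · rw [hr1]
    exact div_ne_zero hq1' (mul_ne_zero hq hd)
  · rw [hs1 _ hd₁]
    exact div_ne_zero hq1' (mul_ne_zero hq hd₁)
  · rw [hs1 _ hd₂]
    exact div_ne_zero hq1' (mul_ne_zero hq hd₂)
  · rw [hr1, hr2, ← hX]
    field_simp
  · rw [hr1]
    field_simp
    linear_combination -(q ^ 2 - 1) ^ 2 * hy'
  · rw [boundaryRatio, hr1, hr2, hs1 _ hd₁, hs2 _ hd₁]
    field_simp
  · rw [boundaryRatio, hr1, hr2, hs1 _ hd₂, hs2 _ hd₂]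
    field_simp

end Uniformization

section Transfer

theorem map_Zqua {R S : Type*} [CommRing R] [CommRing S] (φ : R →+* S) (n : ℕ)
    (x y z1 z2 z3 z4 : R) :
    φ (Zqua n x y z1 z2 z3 z4) = Zqua n (φ x) (φ y) (φ z1) (φ z2) (φ z3) (φ z4) := by
  simp only [Zqua, map_sum, apply_ite φ, map_mul, map_pow, map_zero]

open MvPolynomial in
theorem Zopp_relation_X (m : ℕ) :
    ((X 2 - X 3) * Zopp (m + 2) (X 0) (X 1) (X 2) (X 3) * Zun (m + 1) (X 0) (X 1) :
      MvPolynomial (Fin 4) ℤ) =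
      (X 2 - 1) * X 3 * Zsing (m + 2) (X 0) (X 1) (X 2) * Zsing (m + 1) (X 0) (X 1) (X 3)
      - X 2 * (X 3 - 1) * Zsing (m + 1) (X 0) (X 1) (X 2) * Zsing (m + 2) (X 0) (X 1) (X 3) := by
  let F := FractionRing (MvPolynomial (Fin 4) ℤ)
  let φ : MvPolynomial (Fin 4) ℤ →+* AlgebraicClosure F :=
    (algebraMap F (AlgebraicClosure F)).comp (algebraMap (MvPolynomial (Fin 4) ℤ) F)
  have hφ : Function.Injective φ :=
    (algebraMap F (AlgebraicClosure F)).injective.comp (IsFractionRing.injective _ F)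
  have hev : ∀ p : MvPolynomial (Fin 4) ℤ, eval ![2, 3, 1, 1] p ≠ 0 → φ p ≠ 0 := fun p hp h =>
    hp (by rw [(map_eq_zero_iff φ hφ).1 h, map_zero])
  apply hφ
  have := Zopp_relation_of_generic (x := φ (X 0)) (y := φ (X 1)) (z₁ := φ (X 2)) (z₂ := φ (X 3))
    (hev _ (by simp)) (hev _ (by simp))
    (by
      have := hev ((1 + X 0 - X 1) ^ 2 - 4 * X 0) (by simp)
      simpa [sub_ne_zero, map_ofNat φ 4] using this)
    (by
      have := hev (1 + X 2 ^ 2 * X 0 - X 2 * (1 + X 0 - X 1)) (by simp)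
      simpa using this)
    (by
      have := hev (1 + X 3 ^ 2 * X 0 - X 3 * (1 + X 0 - X 1)) (by simp)
      simpa using this) m
  simpa only [Zopp, Zun, Zsing, map_sub, map_mul, map_one, map_Zqua] using this

end Transfer

/-- Identity for the opposite-boundary doubly-refined ASM generating function,
stated for all values of the variables in any commutative ring, equivalently
as an identity of polynomials in `ℤ[x,y,z1,z2]`. -/
theorem stmt5 {R : Type*} [CommRing R] (x y z1 z2 : R) (n : ℕ) (hn : 2 ≤ n) :
    (z1 - z2) * Zopp n x y z1 z2 * Zun (n - 1) x y =
      (z1 - 1) * z2 * Zsing n x y z1 * Zsing (n - 1) x y z2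
      - z1 * (z2 - 1) * Zsing (n - 1) x y z1 * Zsing n x y z2 := by
  obtain ⟨m, rfl⟩ := Nat.exists_eq_add_of_le' hn
  have h := congrArg (MvPolynomial.eval₂Hom (Int.castRingHom R) ![x, y, z1, z2])
    (Zopp_relation_X m)
  simp only [Zopp, Zun, Zsing, map_sub, map_mul, map_one, map_Zqua] at h
  simpa [Zopp, Zun, Zsing] using h
end

section
/- For every integer n ≥ 2, as an identity in the field of rational functions ℚ(x,y,z1,z2) (with the convention Z_0(x,y) = 1), the adjacent-boundary doubly-refined ASM generating function can be expressed as: Zadj_n(x,y;z1,z2) = Z_{n−1}(x,y)·( 1 + Σ_{i=1}^{n−1} ( y·z1·z2 / ((z1−1)(z2−1)) )^{n−i} · ( 1 + (x(z1−1)(z2−1)−y)·Z_i(x,y;z1)·Z_i(x,y;z2) / ( y·Z_{i−1}(x,y)·Z_i(x,y) ) ) ). -/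
open Finset

/-- The field of rational functions over `ℚ` in 4 variables. -/
noncomputable abbrev K4 : Type := FractionRing (MvPolynomial (Fin 4) ℚ)

noncomputable def vx : K4 := algebraMap (MvPolynomial (Fin 4) ℚ) K4 (MvPolynomial.X 0)
noncomputable def vy : K4 := algebraMap (MvPolynomial (Fin 4) ℚ) K4 (MvPolynomial.X 1)
noncomputable def vz1 : K4 := algebraMap (MvPolynomial (Fin 4) ℚ) K4 (MvPolynomial.X 2)
noncomputable def vz2 : K4 := algebraMap (MvPolynomial (Fin 4) ℚ) K4 (MvPolynomial.X 3)


namespace SixVertex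

section Weights

variable {R : Type*} [CommRing R]

/-- Weights of the six-vertex model. The arguments of type `Bool` are the states of the left,
right, top and bottom edges of the vertex. -/
def vertexWeight (q u v : R) : Bool → Bool → Bool → Bool → R
  | true, true, true, true => u - q * v
  | false, false, false, false => u - q * v
  | true, true, false, false => q * (u - v)
  | false, false, true, true => u - v
  | true, false, true, false => 1
  | false, true, false, true => (q - 1) ^ 2 * u * v
  | _, _, _, _ => 0

/-- The vertex weights with given left and right states, as a matrix in the vertical states. -/
def vertexMatrix (q u v : R) (l r : Bool) : Matrix Bool Bool R :=
  Matrix.of fun t d => vertexWeight q u v l r t d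

/-- The transfer matrix of a column of `n` vertices. -/
def columnMatrix (q v : R) : {n : ℕ} → (Fin n → R) → (Fin n → Bool) → (Fin n → Bool) →
    Matrix Bool Bool R
  | 0, _, _, _ => 1
  | _ + 1, u, l, r =>
    vertexMatrix q (u 0) v (l 0) (r 0) * columnMatrix q v (Fin.tail u) (Fin.tail l) (Fin.tail r)

/-- The partition function of the six-vertex model on the columns `vs`, with left boundary `l`,
empty right and bottom boundaries, and full top boundary. -/
def partitionFrom (q : R) {n : ℕ} (u : Fin n → R) : List R → (Fin n → Bool) → R
  | [], l => if l = fun _ => false then 1 else 0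
  | v :: vs, l => ∑ r, columnMatrix q v u l r true false * partitionFrom q u vs r

/-- The partition function of the six-vertex model with domain wall boundary conditions. -/
def partition (q : R) {n : ℕ} (u : Fin n → R) (vs : List R) : R :=
  partitionFrom q u vs fun _ => true

/-- The weights of two horizontally adjacent vertices, as a matrix in the vertical states. -/
def pairMatrix (q u v w : R) (l r : Bool) : Matrix (Bool × Bool) (Bool × Bool) R :=
  Matrix.of fun s t =>
    ∑ m, vertexWeight q u v l m s.1 t.1 * vertexWeight q u w m r s.2 t.2

/-- The transfer matrix of two adjacent columns. -/
def pairColumnMatrix (q v w : R) : {n : ℕ} → (Fin n → R) → (Fin n → Bool) → (Fin n → Bool) →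
    Matrix (Bool × Bool) (Bool × Bool) R
  | 0, _, _, _ => 1
  | _ + 1, u, l, r =>
    pairMatrix q (u 0) v w (l 0) (r 0) *
      pairColumnMatrix q v w (Fin.tail u) (Fin.tail l) (Fin.tail r)

/-- The matrix intertwining two adjacent columns. -/
def crossing (q v w : R) : Matrix (Bool × Bool) (Bool × Bool) R :=
  Matrix.of fun s t => match s, t with
    | (true, true), (true, true) => q * w - v
    | (false, false), (false, false) => q * w - v
    | (true, false), (true, false) => (q - 1) * v
    | (true, false), (false, true) => w - v
    | (false, true), (true, false) => q * (w - v)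
    | (false, true), (false, true) => (q - 1) * w
    | _, _ => 0

theorem crossing_mul_pairMatrix (q u v w : R) (l r : Bool) :
    crossing q v w * pairMatrix q u v w l r = pairMatrix q u w v l r * crossing q v w := by
  ext ⟨a, b⟩ ⟨c, d⟩
  simp only [pairMatrix, Matrix.mul_apply, Fintype.sum_prod_type, Fintype.sum_bool,
    Matrix.of_apply, crossing]
  cases l <;> cases r <;> cases a <;> cases b <;> cases c <;> cases d <;>
    simp only [vertexWeight] <;> ring

theorem crossing_mul_pairColumnMatrix (q v w : R) {n : ℕ} (u : Fin n → R) (l r : Fin n → Bool) :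
    crossing q v w * pairColumnMatrix q v w u l r =
      pairColumnMatrix q w v u l r * crossing q v w := by
  induction n with
  | zero => simp [pairColumnMatrix]
  | succ n ih =>
    rw [pairColumnMatrix, pairColumnMatrix, ← mul_assoc, crossing_mul_pairMatrix, mul_assoc, ih,
      mul_assoc]

theorem sum_columnMatrix_mul_columnMatrix (q v w : R) {n : ℕ} (u : Fin n → R)
    (l r : Fin n → Bool) (t t' d d' : Bool) :
    ∑ m, columnMatrix q v u l m t d * columnMatrix q w u m r t' d' =
      pairColumnMatrix q v w u l r (t, t') (d, d') := by
  induction n generalizing t t' with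
  | zero =>
    simp only [columnMatrix, pairColumnMatrix, Matrix.one_apply, Prod.mk.injEq]
    cases t <;> cases t' <;> cases d <;> cases d' <;> simp
  | succ n ih =>
    rw [← (Fin.consEquiv fun _ => Bool).sum_comp, Fintype.sum_prod_type]
    simp only [pairColumnMatrix, columnMatrix, Matrix.mul_apply, Fintype.sum_prod_type, ← ih,
      pairMatrix, vertexMatrix, Matrix.of_apply, Fintype.sum_bool]
    simp only [Fin.consEquiv, Equiv.coe_fn_mk, Fin.cons_zero, Fin.tail_cons,
      Finset.mul_sum, ← Finset.sum_add_distrib]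
    exact Finset.sum_congr rfl fun m _ => by ring

theorem sum_columnMatrix_swap {q v w : R} [NoZeroDivisors R] (h : q * w - v ≠ 0) {n : ℕ}
    (u : Fin n → R) (l r : Fin n → Bool) :
    ∑ m, columnMatrix q v u l m true false * columnMatrix q w u m r true false =
      ∑ m, columnMatrix q w u l m true false * columnMatrix q v u m r true false := by
  have key := congrFun₂ (crossing_mul_pairColumnMatrix q v w u l r) (true, true) (false, false)
  simp only [Matrix.mul_apply, Fintype.sum_prod_type, Fintype.sum_bool, crossing,
    Matrix.of_apply, zero_mul, mul_zero, add_zero, zero_add] at key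
  rw [mul_comm] at key
  rw [sum_columnMatrix_mul_columnMatrix, sum_columnMatrix_mul_columnMatrix]
  exact mul_right_cancel₀ h key

theorem partitionFrom_perm {q : R} [NoZeroDivisors R] {n : ℕ} (u : Fin n → R) {vs ws : List R}
    (h : vs.Perm ws) (hv : ∀ v ∈ vs, ∀ w ∈ vs, q * w - v ≠ 0) (l : Fin n → Bool) :
    partitionFrom q u vs l = partitionFrom q u ws l := by
  induction h generalizing l with
  | nil => rfl
  | cons x _ ih =>
    exact Finset.sum_congr rfl fun r _ => by
      rw [ih fun v h w h' => hv v (List.mem_cons_of_mem _ h) w (List.mem_cons_of_mem _ h')]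
  | swap x y vs =>
    have expand (x y : R) : partitionFrom q u (y :: x :: vs) l = ∑ r,
        (∑ m, columnMatrix q y u l m true false * columnMatrix q x u m r true false) *
          partitionFrom q u vs r := by
      simp only [partitionFrom, Finset.mul_sum, Finset.sum_mul, ← mul_assoc]
      exact Finset.sum_comm
    simp only [expand, sum_columnMatrix_swap (hv y (by simp) x (by simp))]
  | trans h₁ h₂ ih₁ ih₂ =>
    rw [ih₁ hv, ih₂ fun v h w h' => hv v (h₁.mem_iff.2 h) w (h₁.mem_iff.2 h')]

end Weights

section FirstRow

variable {R : Type*} [CommRing R]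

theorem partitionFrom_cons_false (q t : R) {n : ℕ} (u : Fin n → R) (vs : List R)
    (l : Fin n → Bool) :
    partitionFrom q (Fin.cons t u : Fin (n + 1) → R) vs (Fin.cons false l) =
      (vs.map fun w => t - w).prod * partitionFrom q u vs l := by
  induction vs generalizing l with
  | nil =>
    have : (Fin.cons false l : Fin (n + 1) → Bool) = (fun _ => false) ↔ l = fun _ => false := by
      simp [funext_iff, Fin.forall_fin_succ]
    simp [partitionFrom, this]
  | cons v vs ih =>
    rw [partitionFrom, ← (Fin.consEquiv fun _ => Bool).sum_comp, Fintype.sum_prod_type]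
    simp only [Fin.consEquiv, Equiv.coe_fn_mk, Fintype.sum_bool, ih, columnMatrix, Fin.cons_zero,
      Matrix.mul_apply, vertexMatrix, Matrix.of_apply, vertexWeight, Fin.tail_cons, zero_mul,
      add_zero, zero_add, sum_const_zero, List.map_cons, List.prod_cons, partitionFrom, mul_sum]
    exact sum_congr rfl fun r _ => by ring

theorem partitionFrom_cons_true (q t : R) {n : ℕ} (u : Fin n → R) (v : R) (vs : List R)
    (l : Fin n → Bool) :
    partitionFrom q (Fin.cons t u : Fin (n + 1) → R) (v :: vs) (Fin.cons true l) =
      ∑ r, ((t - q * v) * columnMatrix q v u l r true false *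
          partitionFrom q (Fin.cons t u : Fin (n + 1) → R) vs (Fin.cons true r) +
        columnMatrix q v u l r false false * (vs.map fun w => t - w).prod *
          partitionFrom q u vs r) := by
  rw [partitionFrom, ← (Fin.consEquiv fun _ => Bool).sum_comp, Fintype.sum_prod_type]
  simp only [Fin.consEquiv, Equiv.coe_fn_mk, Fintype.sum_bool, partitionFrom_cons_false,
    columnMatrix, Fin.cons_zero, Matrix.mul_apply, vertexMatrix, Matrix.of_apply, vertexWeight,
    Fin.tail_cons, zero_mul, add_zero, zero_add, one_mul, ← sum_add_distrib]
  exact sum_congr rfl fun r _ => by ring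

open Polynomial in
theorem exists_polynomial_partitionFrom [Nontrivial R] (q : R) {n : ℕ} (u : Fin n → R)
    (vs : List R) (l : Fin n → Bool) :
    ∃ p : R[X], p.degree < vs.length ∧ ∀ t,
      partitionFrom q (Fin.cons t u : Fin (n + 1) → R) vs (Fin.cons true l) = p.eval t := by
  induction vs generalizing l with
  | nil =>
    refine ⟨0, by simp, fun t => ?_⟩
    have : (Fin.cons true l : Fin (n + 1) → Bool) ≠ fun _ => false :=
      fun h => by simpa using congrFun h 0
    simp [partitionFrom, this]
  | cons v vs ih =>
    choose p hp hpe using ih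
    refine ⟨∑ r, ((X - C (q * v)) * C (columnMatrix q v u l r true false) * p r +
      C (columnMatrix q v u l r false false) * (vs.map fun w => X - C w).prod *
        C (partitionFrom q u vs r)), ?_, fun t => ?_⟩
    · rw [← mem_degreeLT]
      refine Submodule.sum_mem _ fun r _ => Submodule.add_mem _ ?_ ?_
      · rw [mem_degreeLT, mul_assoc]
        refine (degree_mul_le _ _).trans_lt ?_
        have h1 : (C (columnMatrix q v u l r true false) * p r).degree < vs.length := by
          rw [← smul_eq_C_mul]
          exact (degree_smul_le _ _).trans_lt (hp r)
        rw [degree_X_sub_C, List.length_cons, Nat.cast_add, add_comm, Nat.cast_one]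
        exact WithBot.add_lt_add_right (by simp) h1
      · rw [mem_degreeLT, mul_assoc, ← smul_eq_C_mul, mul_comm, ← smul_eq_C_mul]
        refine ((degree_smul_le _ _).trans (degree_smul_le _ _)).trans_lt ?_
        refine (degree_list_prod_le _).trans_lt ?_
        rw [List.map_map, show (degree ∘ fun w : R => X - C w) = fun _ => 1 from
          funext fun w => degree_X_sub_C w]
        simp only [List.map_const', List.sum_replicate, List.length_cons, nsmul_eq_mul, mul_one]
        exact_mod_cast Nat.lt_succ_self _
    · rw [partitionFrom_cons_true, eval_finsetSum]
      refine sum_congr rfl fun r _ => ?_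
      rw [hpe]
      simp [eval_list_prod, Function.comp_def]

theorem columnMatrix_true_false_false (q v : R) {n : ℕ} (u : Fin n → R) (r : Fin n → Bool) :
    columnMatrix q v u (fun _ => true) r false false =
      if r = fun _ => true then ∏ i, q * (u i - v) else 0 := by
  induction n with
  | zero => simp [columnMatrix, Subsingleton.elim r fun _ => true]
  | succ n ih =>
    have htail : (Fin.tail (fun _ => true) : Fin n → Bool) = fun _ => true := rfl
    have hr : r = (fun _ => true) ↔ r 0 = true ∧ Fin.tail r = fun _ => true := by
      simp [funext_iff, Fin.forall_fin_succ, Fin.tail]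
    rw [columnMatrix, Matrix.mul_apply, htail, Fintype.sum_bool, ih, Fin.prod_univ_succ]
    simp only [hr]
    cases h : r 0 <;> simp [vertexMatrix, vertexWeight, Fin.tail]

/-- When the top left vertex cannot be passed straight through, the partition function reduces to
one of smaller size. -/
theorem partition_cons_mul (q v : R) {n : ℕ} (u : Fin n → R) (vs : List R) :
    partition q (Fin.cons (q * v) u : Fin (n + 1) → R) (v :: vs) =
      (∏ i, q * (u i - v)) * (vs.map fun w => q * v - w).prod * partition q u vs := by
  have h : (fun _ => true : Fin (n + 1) → Bool) = Fin.cons true fun _ => true :=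
    funext fun i => by cases i using Fin.cases <;> rfl
  rw [partition, h, partitionFrom_cons_true]
  simp [columnMatrix_true_false_false, partition]

theorem map_columnMatrix {S : Type*} [CommRing S] (f : R →+* S) (q v : R) {n : ℕ} (u : Fin n → R)
    (l r : Fin n → Bool) (t d : Bool) :
    f (columnMatrix q v u l r t d) = columnMatrix (f q) (f v) (f ∘ u) l r t d := by
  induction n generalizing t with
  | zero => simp [columnMatrix, Matrix.one_apply, apply_ite f]
  | succ n ih =>
    have hf (l r t d : Bool) :
        f (vertexWeight q (u 0) v l r t d) = vertexWeight (f q) (f (u 0)) (f v) l r t d := by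
      cases l <;> cases r <;> cases t <;> cases d <;> simp [vertexWeight]
    simp only [columnMatrix, Matrix.mul_apply, map_sum, map_mul, ih, vertexMatrix,
      Matrix.of_apply, hf]
    rfl

theorem map_partition {S : Type*} [CommRing S] (f : R →+* S) (q : R) {n : ℕ} (u : Fin n → R)
    (vs : List R) : f (partition q u vs) = partition (f q) (f ∘ u) (vs.map f) := by
  suffices ∀ l, f (partitionFrom q u vs l) = partitionFrom (f q) (f ∘ u) (vs.map f) l from this _
  induction vs with
  | nil => simp [partitionFrom, apply_ite f]
  | cons v vs ih => simp [partitionFrom, map_columnMatrix, ih]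

end FirstRow

section Determinant

variable {F : Type*} [Field F]

theorem det_vandermonde_succAbove {R : Type*} [CommRing R] {n : ℕ} (v : Fin (n + 1) → R)
    (j : Fin (n + 1)) :
    (Matrix.vandermonde v).det = (-1) ^ (j : ℕ) * (∏ k, (v (j.succAbove k) - v j)) *
      (Matrix.vandermonde (v ∘ j.succAbove)).det := by
  have h := Matrix.det_permute (Equiv.symm j.cycleRange) (Matrix.vandermonde v)
  have hsub : (Matrix.vandermonde v).submatrix (Equiv.symm j.cycleRange) id =
      Matrix.vandermonde (v ∘ Equiv.symm j.cycleRange) := rfl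
  rw [hsub, Equiv.Perm.sign_symm, Fin.sign_cycleRange] at h
  have h2 : (Matrix.vandermonde (v ∘ Equiv.symm j.cycleRange)).det =
      (∏ k, (v (j.succAbove k) - v j)) * (Matrix.vandermonde (v ∘ j.succAbove)).det := by
    simp only [Matrix.det_vandermonde, Fin.prod_univ_succ, Fin.prod_Ioi_zero, Fin.prod_Ioi_succ,
      Function.comp_apply, Fin.cycleRange_symm_zero, Fin.cycleRange_symm_succ]
  rw [mul_assoc, ← h2, h, ← mul_assoc]
  simp [← mul_pow]

theorem ofFn_perm_cons_succAbove {α : Type*} {n : ℕ} (v : Fin (n + 1) → α) (j : Fin (n + 1)) :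
    (List.ofFn v).Perm (v j :: List.ofFn (v ∘ j.succAbove)) := by
  have h := (Equiv.Perm.ofFn_comp_perm (Equiv.symm j.cycleRange) v).symm
  have hs : List.ofFn (v ∘ Equiv.symm j.cycleRange) = v j :: List.ofFn (v ∘ j.succAbove) := by
    simp [Function.comp_def, Fin.cycleRange_symm_zero, Fin.cycleRange_symm_succ]
  rwa [hs] at h

/-- The product of the two kinds of straight-through weights. -/
def straightWeight {R : Type*} [CommRing R] (q u v : R) : R := (u - q * v) * (u - v)

/-- The matrix of the Izergin-Korepin determinant. -/
def izerginMatrix (q : F) {n : ℕ} (u v : Fin n → F) : Matrix (Fin n) (Fin n) F :=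
  Matrix.of fun i j => (straightWeight q (u i) (v j))⁻¹

/-- The product of all differences of the entries of a vector. -/
def differenceProduct {R : Type*} [CommRing R] {n : ℕ} (u : Fin n → R) : R :=
  ∏ i, ∏ j ∈ Ioi i, (u i - u j)

theorem differenceProduct_succ {R : Type*} [CommRing R] {n : ℕ} (u : Fin (n + 1) → R) :
    differenceProduct u = (∏ j, (u 0 - Fin.tail u j)) * differenceProduct (Fin.tail u) := by
  simp [differenceProduct, Fin.prod_univ_succ, Fin.prod_Ioi_succ, Fin.tail]

/-- Parameters of the six-vertex model for which no straight-through weight vanishes. -/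
structure Generic (q : F) {n : ℕ} (u v : Fin n → F) : Prop where
  q_ne : q ≠ 0
  u_inj : Function.Injective u
  v_inj : Function.Injective v
  v_ne : ∀ i j, q * v i - v j ≠ 0
  weight_ne : ∀ i j, straightWeight q (u i) (v j) ≠ 0

theorem Generic.comp {q : F} {m n : ℕ} {u v : Fin n → F} (h : Generic q u v) {f g : Fin m → Fin n}
    (hf : Function.Injective f) (hg : Function.Injective g) : Generic q (u ∘ f) (v ∘ g) :=
  ⟨h.q_ne, h.u_inj.comp hf, h.v_inj.comp hg, fun _ _ => h.v_ne _ _, fun _ _ => h.weight_ne _ _⟩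

open Polynomial in
/-- The Laplace expansion of the Izergin-Korepin determinant, as a polynomial. -/
theorem exists_polynomial_izergin (q : F) {n : ℕ} (u : Fin n → F) (v : Fin (n + 1) → F) :
    ∃ p : F[X], p.degree < (2 * n + 1 : ℕ) ∧
      (∀ t, p.eval t = ∑ j : Fin (n + 1), (-1) ^ (j : ℕ) *
          (∏ k, straightWeight q t (v (j.succAbove k))) *
        (izerginMatrix q u (v ∘ j.succAbove)).det) ∧
      ∀ t, (∀ j, straightWeight q t (v j) ≠ 0) → p.eval t =
        (∏ j, straightWeight q t (v j)) *
          (izerginMatrix q (Fin.cons t u : Fin (n + 1) → F) v).det := by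
  have heval (t : F) : (∑ j : Fin (n + 1), C ((-1) ^ (j : ℕ) *
      (izerginMatrix q u (v ∘ j.succAbove)).det) *
        ∏ k, ((X - C (q * v (j.succAbove k))) * (X - C (v (j.succAbove k))))).eval t =
      ∑ j : Fin (n + 1), (-1) ^ (j : ℕ) *
          (∏ k, straightWeight q t (v (j.succAbove k))) *
        (izerginMatrix q u (v ∘ j.succAbove)).det := by
    rw [eval_finsetSum]
    refine sum_congr rfl fun j _ => ?_
    simp only [eval_mul, eval_C, eval_prod, eval_sub, eval_X, straightWeight]
    ring
  refine ⟨_, ?_, heval, fun t ht => ?_⟩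
  · rw [← mem_degreeLT]
    refine Submodule.sum_mem _ fun j _ => ?_
    rw [← smul_eq_C_mul]
    refine Submodule.smul_mem _ _ ?_
    rw [mem_degreeLT, degree_prod]
    simp only [degree_mul, degree_X_sub_C, sum_const, card_univ, Fintype.card_fin, nsmul_eq_mul]
    have : (n : WithBot ℕ) * (1 + 1) = ((2 * n : ℕ) : WithBot ℕ) := by
      rw [mul_comm, one_add_one_eq_two]; norm_cast
    rw [this]
    exact_mod_cast Nat.lt_succ_self _
  · rw [heval, Matrix.det_succ_row_zero, mul_sum]
    refine sum_congr rfl fun j _ => ?_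
    rw [Fin.prod_univ_succAbove _ j]
    have : (izerginMatrix q (Fin.cons t u : Fin (n + 1) → F) v).submatrix Fin.succ j.succAbove =
        izerginMatrix q u (v ∘ j.succAbove) := rfl
    rw [this]
    have h0 : izerginMatrix q (Fin.cons t u : Fin (n + 1) → F) v 0 j =
      (straightWeight q t (v j))⁻¹ := rfl
    rw [h0]
    field_simp [ht j]

/-- The **Izergin-Korepin formula**. -/
theorem partition_eq_det {q : F} {n : ℕ} {u v : Fin n → F} (h : Generic q u v) :
    partition q u (List.ofFn v) * differenceProduct u * (Matrix.vandermonde v).det =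
      (∏ i, ∏ j, straightWeight q (u i) (v j)) * (izerginMatrix q u v).det := by
  induction n with
  | zero => simp [partition, partitionFrom, differenceProduct, Subsingleton.elim (fun _ => true)
      (fun _ => false : Fin 0 → Bool)]
  | succ n ih =>
    obtain ⟨p, hp, hpe⟩ := exists_polynomial_partitionFrom q (Fin.tail u) (List.ofFn v)
      fun _ => true
    obtain ⟨r, hr, hre, hre'⟩ := exists_polynomial_izergin q (Fin.tail u) v
    have hcons : (fun _ => true : Fin (n + 1) → Bool) = Fin.cons true fun _ => true :=
      funext fun i => by cases i using Fin.cases <;> rfl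
    replace hpe (t : F) : partition q (Fin.cons t (Fin.tail u) : Fin (n + 1) → F) (List.ofFn v) =
        p.eval t := by rw [← hpe, ← hcons, partition]
    have key : p * (∏ j, (Polynomial.X - Polynomial.C (Fin.tail u j))) *
          Polynomial.C (differenceProduct (Fin.tail u) * (Matrix.vandermonde v).det) =
        Polynomial.C (∏ i, ∏ j, straightWeight q (Fin.tail u i) (v j)) * r := by
      refine Polynomial.eq_of_degrees_lt_of_eval_index_eq
        (v := Sum.elim (Fin.tail u) fun j => q * v j) univ ?_ ?_ ?_ ?_
      · refine Function.Injective.injOn (Function.Injective.sumElim ?_ ?_ ?_)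
        · exact h.u_inj.comp (Fin.succ_injective _)
        · exact fun i j hij => h.v_inj (mul_left_cancel₀ h.q_ne hij)
        · intro i j hij
          exact h.weight_ne i.succ j (by simp [straightWeight, ← hij, Fin.tail])
      · rw [mul_comm, ← Polynomial.smul_eq_C_mul]
        refine (Polynomial.degree_smul_le _ _).trans_lt ?_
        rw [Polynomial.degree_mul, Polynomial.degree_prod]
        simp only [Polynomial.degree_X_sub_C, List.length_ofFn] at hp ⊢
        simp only [sum_const, card_univ, Fintype.card_sum, Fintype.card_fin, nsmul_eq_mul, mul_one]
        rw [Nat.cast_add, add_comm]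
        exact WithBot.add_lt_add_left (by simp) hp
      · rw [← Polynomial.smul_eq_C_mul]
        refine (Polynomial.degree_smul_le _ _).trans_lt (hr.trans_eq ?_)
        simp only [card_univ, Fintype.card_sum, Fintype.card_fin]
        congr 1
        ring
      · rintro (i | j) -
        · rw [Polynomial.eval_mul, Polynomial.eval_mul, Polynomial.eval_mul, Polynomial.eval_prod,
            prod_eq_zero (mem_univ i) (by simp), Sum.elim_inl,
            hre' (Fin.tail u i) fun j => h.weight_ne i.succ j,
            Matrix.det_zero_of_row_eq
              (M := izerginMatrix q (Fin.cons (Fin.tail u i) (Fin.tail u) : Fin (n + 1) → F) v)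
              (Fin.succ_ne_zero i).symm rfl]
          simp
        · rw [Polynomial.eval_mul, Polynomial.eval_mul, Polynomial.eval_mul, Polynomial.eval_prod,
            Sum.elim_inr, ← hpe, hre, sum_eq_single j, partition,
            partitionFrom_perm _ (ofFn_perm_cons_succAbove v j), ← partition, partition_cons_mul,
            List.map_ofFn, List.prod_ofFn, det_vandermonde_succAbove v j]
          · have ih' := ih (h.comp (Fin.succ_injective n) j.succAbove_right_injective)
            have hprod : (∏ i, q * (Fin.tail u i - v j)) *
                  (∏ i, (q * v j - v (j.succAbove i))) * (∏ i, (q * v j - Fin.tail u i)) *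
                  (∏ k, (v (j.succAbove k) - v j)) =
                (∏ i, straightWeight q (Fin.tail u i) (v j)) *
                  ∏ k, straightWeight q (q * v j) (v (j.succAbove k)) := by
              simp only [← prod_mul_distrib, straightWeight]
              exact prod_congr rfl fun i _ => by ring
            have hsplit : ∏ i, ∏ k, straightWeight q (Fin.tail u i) (v k) =
                (∏ i, straightWeight q (Fin.tail u i) (v j)) *
                  ∏ i, ∏ k, straightWeight q (Fin.tail u i) (v (j.succAbove k)) := by
              rw [← prod_mul_distrib]
              exact prod_congr rfl fun i _ => Fin.prod_univ_succAbove _ j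
            simp only [Polynomial.eval_C, Polynomial.eval_sub, Polynomial.eval_X,
              Function.comp_apply, hsplit] at ih' ⊢
            change partition q (Fin.tail u) _ * differenceProduct (Fin.tail u) * _ =
              (∏ i, ∏ k, straightWeight q (Fin.tail u i) (v (j.succAbove k))) *
                (izerginMatrix q (Fin.tail u) (v ∘ j.succAbove)).det at ih'
            linear_combination (-1) ^ (j : ℕ) * (∏ i, straightWeight q (Fin.tail u i) (v j)) *
              (∏ k, straightWeight q (q * v j) (v (j.succAbove k))) * ih' + (-1) ^ (j : ℕ) *
              (partition q (Fin.tail u) (List.ofFn (v ∘ j.succAbove)) *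
                differenceProduct (Fin.tail u) *
                (Matrix.vandermonde (v ∘ j.succAbove)).det) * hprod
          · intro v hv w hw
            obtain ⟨i, rfl⟩ := (List.mem_ofFn' _ _).1 hv
            obtain ⟨j, rfl⟩ := (List.mem_ofFn' _ _).1 hw
            exact h.v_ne _ _
          · intro k _ hk
            obtain ⟨i, hi⟩ := Fin.exists_succAbove_eq hk.symm
            rw [prod_eq_zero (mem_univ i) (by simp [straightWeight, hi])]
            simp
          · simp
    have := congrArg (Polynomial.eval (u 0)) key
    rw [Polynomial.eval_mul, Polynomial.eval_mul, Polynomial.eval_mul, Polynomial.eval_prod,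
      hre' _ fun j => h.weight_ne 0 j, ← hpe] at this
    simp only [Fin.cons_self_tail, Polynomial.eval_C, Polynomial.eval_sub,
      Polynomial.eval_X] at this
    rw [differenceProduct_succ, Fin.prod_univ_succ]
    change _ = (∏ j, straightWeight q (u 0) (v j)) *
      (∏ i, ∏ j, straightWeight q (Fin.tail u i) (v j)) * _
    linear_combination this

end Determinant

section Condensation

open Matrix

theorem det_of_column_zero {R : Type*} [CommRing R] {n : ℕ}
    {A : Matrix (Fin (n + 1)) (Fin (n + 1)) R} {c : R} (h : ∀ i, A i 0 = if i = 0 then c else 0) :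
    A.det = c * (A.submatrix Fin.succ Fin.succ).det := by
  rw [det_succ_column_zero, Fin.sum_univ_succ]
  simp [h, Fin.succ_ne_zero]

/-- A cofactor identity for the minors of a matrix with two deleted rows and columns. -/
theorem det_mul_det_mul_det {R : Type*} [CommRing R] {n : ℕ}
    (M : Matrix (Fin (n + 2)) (Fin (n + 2)) R) :
    M.det * (M.adjugate 0 0 * M.adjugate 1 1 - M.adjugate 0 1 * M.adjugate 1 0) =
      M.det * (M.det * (M.submatrix (Fin.succ ∘ Fin.succ) (Fin.succ ∘ Fin.succ)).det) := by
  let N : Matrix (Fin (n + 2)) (Fin (n + 2)) R := Matrix.of fun i =>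
    Fin.cons (M.adjugate i 0) (Fin.cons (M.adjugate i 1) fun j => (1 : Matrix _ _ R) i j.succ.succ)
  let e : Fin 2 ⊕ Fin n ≃ Fin (n + 2) := finSumFinEquiv.trans (finCongr (add_comm 2 n))
  have e0 : e (Sum.inl 0) = 0 := rfl
  have e1 : e (Sum.inl 1) = 1 := rfl
  have e2 (j : Fin n) : e (Sum.inr j) = j.succ.succ := by
    ext
    simp only [e, Equiv.trans_apply, finSumFinEquiv_apply_right, finCongr_apply, Fin.val_cast,
      Fin.val_natAdd, Fin.val_succ]
    ring
  have hN : N.det = M.adjugate 0 0 * M.adjugate 1 1 - M.adjugate 0 1 * M.adjugate 1 0 := by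
    have : N.submatrix e e = fromBlocks (N.submatrix (e ∘ Sum.inl) (e ∘ Sum.inl)) 0
        (N.submatrix (e ∘ Sum.inr) (e ∘ Sum.inl)) 1 := by
      ext (i | i) (j | j)
      · rfl
      · fin_cases i
        · change N (e (Sum.inl 0)) (e (Sum.inr j)) = 0
          rw [e2, e0]
          exact one_apply_ne (Fin.succ_ne_zero j.succ).symm
        · change N (e (Sum.inl 1)) (e (Sum.inr j)) = 0
          rw [e2, e1]
          exact one_apply_ne fun h => (Fin.succ_ne_zero j).symm (Fin.succ_injective _ h)
      · rfl
      · change N (e (Sum.inr i)) (e (Sum.inr j)) = _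
        rw [e2, e2]
        change (1 : Matrix _ _ R) i.succ.succ j.succ.succ = _
        simp [one_apply]
    rw [← det_submatrix_equiv_self e, this, det_fromBlocks_zero₁₂, det_one, mul_one, det_fin_two]
    rfl
  have hMN : (M * N).det =
      M.det * (M.det * (M.submatrix (Fin.succ ∘ Fin.succ) (Fin.succ ∘ Fin.succ)).det) := by
    have hadj (i j) : ∑ k, M i k * M.adjugate k j = if i = j then M.det else 0 := by
      rw [← Matrix.mul_apply, mul_adjugate]
      simp [one_apply]
    have h0 (i) : (M * N) i 0 = if i = 0 then M.det else 0 := hadj i 0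
    have h1 (i) : (M * N) i 1 = if i = 1 then M.det else 0 := hadj i 1
    have h2 (i) (j : Fin n) : (M * N) i j.succ.succ = M i j.succ.succ := by
      simp [Matrix.mul_apply, N, one_apply]
    rw [det_of_column_zero h0,
      det_of_column_zero (A := (M * N).submatrix Fin.succ Fin.succ) (c := M.det)]
    · congr 3
      exact Matrix.ext fun i j => h2 _ _
    · intro i
      refine (h1 i.succ).trans ?_
      rw [← Fin.succ_zero_eq_one]
      simp only [Fin.succ_inj]
  rw [← hN, ← hMN, det_mul]

/-- The **Desnanot-Jacobi identity**. -/
theorem det_mul_det_submatrix {R : Type*} [CommRing R] {n : ℕ}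
    (M : Matrix (Fin (n + 2)) (Fin (n + 2)) R) :
    M.det * (M.submatrix (Fin.succ ∘ Fin.succ) (Fin.succ ∘ Fin.succ)).det =
      (M.submatrix Fin.succ Fin.succ).det *
          (M.submatrix (Fin.succAbove 1) (Fin.succAbove 1)).det -
        (M.submatrix Fin.succ (Fin.succAbove 1)).det *
          (M.submatrix (Fin.succAbove 1) Fin.succ).det := by
  have h := mul_left_cancel₀ (det_mvPolynomialX_ne_zero (Fin (n + 2)) ℤ)
    (det_mul_det_mul_det (mvPolynomialX (Fin (n + 2)) (Fin (n + 2)) ℤ))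
  have hM : (mvPolynomialX (Fin (n + 2)) (Fin (n + 2)) ℤ).map
      (MvPolynomial.eval₂Hom (Int.castRingHom R) fun p => M p.1 p.2) = M :=
    mvPolynomialX_map_eval₂ _ _
  replace h := congrArg (MvPolynomial.eval₂Hom (Int.castRingHom R) fun p => M p.1 p.2) h.symm
  simp only [adjugate_fin_succ_eq_det_submatrix, map_mul, map_sub, RingHom.map_det,
    RingHom.mapMatrix_apply, ← submatrix_map, hM, map_pow, map_neg, map_one,
    Fin.succAbove_zero] at h
  rw [h]
  simp
  ring

end Condensation

section Bilinear

theorem cons_cons_comp_succAbove_one {α : Type*} {n : ℕ} (a b : α) (u : Fin n → α) :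
    (Fin.cons a (Fin.cons b u : Fin (n + 1) → α) : Fin (n + 2) → α) ∘ Fin.succAbove 1 =
      (Fin.cons a u : Fin (n + 1) → α) := by
  funext i
  cases i using Fin.cases with
  | zero => rfl
  | succ i =>
    rw [Function.comp_apply, ← Fin.succ_zero_eq_one, Fin.succ_succAbove_succ]
    rfl

theorem differenceProduct_cons {R : Type*} [CommRing R] {n : ℕ} (a : R) (u : Fin n → R) :
    differenceProduct (Fin.cons a u : Fin (n + 1) → R) =
      (∏ i, (a - u i)) * differenceProduct u := by
  rw [differenceProduct_succ]
  rfl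

theorem det_vandermonde_cons {R : Type*} [CommRing R] {n : ℕ} (a : R) (u : Fin n → R) :
    (Matrix.vandermonde (Fin.cons a u : Fin (n + 1) → R)).det =
      (∏ i, (u i - a)) * (Matrix.vandermonde u).det := by
  rw [det_vandermonde_succAbove _ 0]
  simp [Function.comp_def]

theorem prod_straightWeight_cons {R : Type*} [CommRing R] (q : R) {n : ℕ} (a b : R)
    (u v : Fin n → R) :
    ∏ i, ∏ j, straightWeight q ((Fin.cons a u : Fin (n + 1) → R) i)
        ((Fin.cons b v : Fin (n + 1) → R) j) =
      straightWeight q a b * (∏ j, straightWeight q a (v j)) *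
        (∏ i, straightWeight q (u i) b) * ∏ i, ∏ j, straightWeight q (u i) (v j) := by
  simp only [Fin.prod_univ_succ, Fin.cons_zero, Fin.cons_succ, prod_mul_distrib]
  ring

theorem partition_bilinear_of_generic {F : Type*} [Field F] {q : F} {n : ℕ} (a b c d : F)
    (u v : Fin n → F)
    (h : Generic q (Fin.cons a (Fin.cons b u : Fin (n + 1) → F) : Fin (n + 2) → F)
      (Fin.cons c (Fin.cons d v : Fin (n + 1) → F))) :
    (a - b) * (d - c) * partition q
        (Fin.cons a (Fin.cons b u : Fin (n + 1) → F) : Fin (n + 2) → F) (c :: d :: List.ofFn v) *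
        partition q u (List.ofFn v) =
      straightWeight q a d * straightWeight q b c *
          partition q (Fin.cons b u : Fin (n + 1) → F) (d :: List.ofFn v) *
          partition q (Fin.cons a u : Fin (n + 1) → F) (c :: List.ofFn v) -
        straightWeight q a c * straightWeight q b d *
          partition q (Fin.cons b u : Fin (n + 1) → F) (c :: List.ofFn v) *
          partition q (Fin.cons a u : Fin (n + 1) → F) (d :: List.ofFn v) := by
  have hs := Fin.succ_injective (n + 1)
  have ho := Fin.succAbove_right_injective (p := (1 : Fin (n + 2)))
  have hss := hs.comp (Fin.succ_injective n)
  have k := partition_eq_det h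
  have k00 := h.comp hs hs
  have k01 := h.comp hs ho
  have k10 := h.comp ho hs
  have k11 := h.comp ho ho
  have k2 := h.comp hss hss
  have hJ := det_mul_det_submatrix (izerginMatrix q
    (Fin.cons a (Fin.cons b u : Fin (n + 1) → F) : Fin (n + 2) → F)
      (Fin.cons c (Fin.cons d v : Fin (n + 1) → F)))
  have hsub {m : ℕ} (f g : Fin m → Fin (n + 2)) (u v : Fin (n + 2) → F) :
    (izerginMatrix q u v).submatrix f g = izerginMatrix q (u ∘ f) (v ∘ g) := rfl
  have hsucc (a b : F) (u : Fin n → F) :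
    (Fin.cons a (Fin.cons b u : Fin (n + 1) → F) : Fin (n + 2) → F) ∘ Fin.succ =
      (Fin.cons b u : Fin (n + 1) → F) := rfl
  have hsuccsucc (a b : F) (u : Fin n → F) :
    (Fin.cons a (Fin.cons b u : Fin (n + 1) → F) : Fin (n + 2) → F) ∘ Fin.succ ∘ Fin.succ =
      u := rfl
  have hl (a : F) {m : ℕ} (u : Fin m → F) :
      List.ofFn (Fin.cons a u : Fin (m + 1) → F) = a :: List.ofFn u := by
    simp [List.ofFn_succ]
  simp only [hsub, cons_cons_comp_succAbove_one, hsucc, hsuccsucc] at k00 k01 k10 k11 k2 hJ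
  have hu : differenceProduct u ≠ 0 := by
    refine prod_ne_zero_iff.2 fun i _ => prod_ne_zero_iff.2 fun j hj => sub_ne_zero.2 ?_
    exact k2.u_inj.ne (mem_Ioi.1 hj).ne
  have hv : (Matrix.vandermonde v).det ≠ 0 := Matrix.det_vandermonde_ne_zero_iff.2 k2.v_inj
  have ha : ∏ i, (a - u i) ≠ 0 := prod_ne_zero_iff.2 fun i _ => sub_ne_zero.2 fun e =>
    absurd (k11.u_inj (a₁ := 0) (a₂ := i.succ) e) (Fin.succ_ne_zero i).symm
  have hb : ∏ i, (b - u i) ≠ 0 := prod_ne_zero_iff.2 fun i _ => sub_ne_zero.2 fun e =>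
    absurd (k00.u_inj (a₁ := 0) (a₂ := i.succ) e) (Fin.succ_ne_zero i).symm
  have hc : ∏ i, (v i - c) ≠ 0 := prod_ne_zero_iff.2 fun i _ => sub_ne_zero.2 fun e =>
    absurd (k11.v_inj (a₁ := i.succ) (a₂ := 0) e) (Fin.succ_ne_zero i)
  have hd : ∏ i, (v i - d) ≠ 0 := prod_ne_zero_iff.2 fun i _ => sub_ne_zero.2 fun e =>
    absurd (k00.v_inj (a₁ := i.succ) (a₂ := 0) e) (Fin.succ_ne_zero i)
  replace k00 := partition_eq_det k00
  replace k01 := partition_eq_det k01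
  replace k10 := partition_eq_det k10
  replace k11 := partition_eq_det k11
  replace k2 := partition_eq_det k2
  simp only [hl, differenceProduct_cons, det_vandermonde_cons, prod_straightWeight_cons]
    at k k00 k01 k10 k11 k2
  simp only [Fin.prod_univ_succ, Fin.cons_zero, Fin.cons_succ] at k
  generalize ∏ i, (a - u i) = A at *
  generalize ∏ i, (b - u i) = B at *
  generalize ∏ i, (v i - c) = C at *
  generalize ∏ i, (v i - d) = D at *
  generalize differenceProduct u = U at *
  generalize (Matrix.vandermonde v).det = V at *
  generalize ∏ i, straightWeight q a (v i) = wa at *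
  generalize ∏ i, straightWeight q b (v i) = wb at *
  generalize ∏ i, straightWeight q (u i) c = wc at *
  generalize ∏ i, straightWeight q (u i) d = wd at *
  generalize ∏ i, ∏ j, straightWeight q (u i) (v j) = W at *
  have hne : A * B * C * D * U ^ 2 * V ^ 2 ≠ 0 := by positivity
  refine mul_left_cancel₀ hne ?_
  generalize (izerginMatrix q (Fin.cons a (Fin.cons b u : Fin (n + 1) → F) : Fin (n + 2) → F)
      (Fin.cons c (Fin.cons d v : Fin (n + 1) → F))).det = M at *
  generalize (izerginMatrix q (Fin.cons b u : Fin (n + 1) → F) (Fin.cons d v)).det = M00 at *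
  generalize (izerginMatrix q (Fin.cons b u : Fin (n + 1) → F) (Fin.cons c v)).det = M01 at *
  generalize (izerginMatrix q (Fin.cons a u : Fin (n + 1) → F) (Fin.cons d v)).det = M10 at *
  generalize (izerginMatrix q (Fin.cons a u : Fin (n + 1) → F) (Fin.cons c v)).det = M11 at *
  generalize (izerginMatrix q u v).det = M2 at *
  have e := congrArg₂ (· * ·) k k2
  have e1 := congrArg₂ (· * ·) k00 k11
  have e2 := congrArg₂ (· * ·) k01 k10
  linear_combination e - straightWeight q a d * straightWeight q b c * e1 +
    straightWeight q a c * straightWeight q b d * e2 + straightWeight q a d *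
      straightWeight q b c * straightWeight q a c * straightWeight q b d * wa * wb * wc * wd *
        W ^ 2 * hJ

end Bilinear

section Universal

open MvPolynomial in
theorem generic_X {F : Type*} [Field F] {n : ℕ}
    {f : MvPolynomial (Option (Fin n ⊕ Fin n)) ℤ →+* F} (hf : Function.Injective f) :
    Generic (f (X none)) (fun i => f (X (some (Sum.inl i)))) fun i => f (X (some (Sum.inr i))) := by
  have hX := X_injective (R := ℤ) (σ := Option (Fin n ⊕ Fin n))
  have hne {p : MvPolynomial (Option (Fin n ⊕ Fin n)) ℤ} (i) (hp : eval (Pi.single i 1) p ≠ 0) :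
      f p ≠ 0 := by
    rw [Ne, map_eq_zero_iff _ hf]
    rintro rfl
    simp at hp
  refine ⟨?_, ?_, ?_, fun i j => ?_, fun i j => mul_ne_zero ?_ (sub_ne_zero.2 (hf.ne (hX.ne ?_)))⟩
  · exact hne none (by simp)
  · exact hf.comp (hX.comp ((Option.some_injective _).comp Sum.inl_injective))
  · exact hf.comp (hX.comp ((Option.some_injective _).comp Sum.inr_injective))
  · rw [← map_mul, ← map_sub]
    exact hne (some (Sum.inr j)) (by simp)
  · rw [← map_mul, ← map_sub]
    exact hne (some (Sum.inl i)) (by simp)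
  · simp

theorem map_straightWeight {R S : Type*} [CommRing R] [CommRing S] (f : R →+* S) (q u v : R) :
    f (straightWeight q u v) = straightWeight (f q) (f u) (f v) := by
  simp [straightWeight]

/-- A bilinear identity satisfied by the partition functions of the six-vertex model. -/
theorem partition_bilinear {R : Type*} [CommRing R] (q : R) {n : ℕ} (a b c d : R)
    (u v : Fin n → R) :
    (a - b) * (d - c) * partition q
        (Fin.cons a (Fin.cons b u : Fin (n + 1) → R) : Fin (n + 2) → R) (c :: d :: List.ofFn v) *
        partition q u (List.ofFn v) =
      straightWeight q a d * straightWeight q b c *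
          partition q (Fin.cons b u : Fin (n + 1) → R) (d :: List.ofFn v) *
          partition q (Fin.cons a u : Fin (n + 1) → R) (c :: List.ofFn v) -
        straightWeight q a c * straightWeight q b d *
          partition q (Fin.cons b u : Fin (n + 1) → R) (c :: List.ofFn v) *
          partition q (Fin.cons a u : Fin (n + 1) → R) (d :: List.ofFn v) := by
  let P := MvPolynomial (Option (Fin (n + 2) ⊕ Fin (n + 2))) ℤ
  let U : Fin (n + 2) → P := fun i => MvPolynomial.X (some (Sum.inl i))
  let V : Fin (n + 2) → P := fun i => MvPolynomial.X (some (Sum.inr i))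
  let q' : P := MvPolynomial.X none
  let ι := algebraMap P (FractionRing P)
  have hcons {S : Type _} (f : Fin (n + 2) → S) :
      (Fin.cons (f 0) (Fin.cons (f 1) (f ∘ Fin.succ ∘ Fin.succ) : Fin (n + 1) → S) :
        Fin (n + 2) → S) = f := by
    funext i
    refine Fin.cases rfl (fun i => ?_) i
    exact Fin.cases rfl (fun i => rfl) i
  have hP : (U 0 - U 1) * (V 1 - V 0) * partition q' (Fin.cons (U 0)
          (Fin.cons (U 1) (U ∘ Fin.succ ∘ Fin.succ) : Fin (n + 1) → P) : Fin (n + 2) → P)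
          (V 0 :: V 1 :: List.ofFn (V ∘ Fin.succ ∘ Fin.succ)) *
        partition q' (U ∘ Fin.succ ∘ Fin.succ) (List.ofFn (V ∘ Fin.succ ∘ Fin.succ)) =
      straightWeight q' (U 0) (V 1) * straightWeight q' (U 1) (V 0) *
          partition q' (Fin.cons (U 1) (U ∘ Fin.succ ∘ Fin.succ) : Fin (n + 1) → P)
            (V 1 :: List.ofFn (V ∘ Fin.succ ∘ Fin.succ)) *
          partition q' (Fin.cons (U 0) (U ∘ Fin.succ ∘ Fin.succ) : Fin (n + 1) → P)
            (V 0 :: List.ofFn (V ∘ Fin.succ ∘ Fin.succ)) -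
        straightWeight q' (U 0) (V 0) * straightWeight q' (U 1) (V 1) *
          partition q' (Fin.cons (U 1) (U ∘ Fin.succ ∘ Fin.succ) : Fin (n + 1) → P)
            (V 0 :: List.ofFn (V ∘ Fin.succ ∘ Fin.succ)) *
          partition q' (Fin.cons (U 0) (U ∘ Fin.succ ∘ Fin.succ) : Fin (n + 1) → P)
            (V 1 :: List.ofFn (V ∘ Fin.succ ∘ Fin.succ)) := by
    refine IsFractionRing.injective P (FractionRing P) ?_
    simp only [map_mul, map_sub, map_partition, map_straightWeight, Fin.comp_cons, List.map_cons,
      List.map_ofFn]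
    refine partition_bilinear_of_generic _ _ _ _ _ _ ?_
    have h := generic_X (IsFractionRing.injective P (FractionRing P))
    rw [← hcons fun i => _, ← hcons fun i : Fin (n + 2) => algebraMap P _ (V i)] at h
    exact h
  have := congrArg (MvPolynomial.eval₂Hom (Int.castRingHom R) fun o => o.elim q
    (Sum.elim (Fin.cons a (Fin.cons b u : Fin (n + 1) → R))
      (Fin.cons c (Fin.cons d v : Fin (n + 1) → R)))) hP
  have hU : (MvPolynomial.eval₂Hom (Int.castRingHom R) fun o => o.elim q
      (Sum.elim (Fin.cons a (Fin.cons b u : Fin (n + 1) → R) : Fin (n + 2) → R)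
        (Fin.cons c (Fin.cons d v : Fin (n + 1) → R) : Fin (n + 2) → R))) ∘ U =
      (Fin.cons a (Fin.cons b u : Fin (n + 1) → R) : Fin (n + 2) → R) := by
    funext i
    exact MvPolynomial.eval₂Hom_X' _ _ _
  have hV : (MvPolynomial.eval₂Hom (Int.castRingHom R) fun o => o.elim q
      (Sum.elim (Fin.cons a (Fin.cons b u : Fin (n + 1) → R) : Fin (n + 2) → R)
        (Fin.cons c (Fin.cons d v : Fin (n + 1) → R) : Fin (n + 2) → R))) ∘ V =
      (Fin.cons c (Fin.cons d v : Fin (n + 1) → R) : Fin (n + 2) → R) := by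
    funext i
    exact MvPolynomial.eval₂Hom_X' _ _ _
  have hq : (MvPolynomial.eval₂Hom (Int.castRingHom R) fun o => o.elim q
      (Sum.elim (Fin.cons a (Fin.cons b u : Fin (n + 1) → R) : Fin (n + 2) → R)
        (Fin.cons c (Fin.cons d v : Fin (n + 1) → R) : Fin (n + 2) → R))) q' = q :=
    MvPolynomial.eval₂Hom_X' _ _ _
  simp only [map_mul, map_sub, map_partition, map_straightWeight, Fin.comp_cons, List.map_cons,
    List.map_ofFn, hq, ← Function.comp_assoc, hU, hV] at this
  have hU0 := congrFun hU 0
  have hU1 := congrFun hU 1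
  have hV0 := congrFun hV 0
  have hV1 := congrFun hV 1
  simp only [Function.comp_apply] at hU0 hU1 hV0 hV1
  rw [hU0, hU1, hV0, hV1] at this
  exact this

end Universal

section Configurations

variable {R : Type*} [CommRing R]

/-- The number of paths on an edge with the given state. -/
def occupation (b : Bool) : ℤ := if b then 1 else 0

/-- The vertex weights in terms of integral edge variables. -/
def edgeWeight (q u v : R) (l r t d : ℤ) : R :=
  if (l = 0 ∨ l = 1) ∧ (r = 0 ∨ r = 1) ∧ (t = 0 ∨ t = 1) ∧ (d = 0 ∨ d = 1) then
    vertexWeight q u v (l = 1) (r = 1) (t = 1) (d = 1)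
  else 0

/-- The entry in `{-1, 0, 1}` encoded by an element of `Fin 3`. -/
def entry (a : Fin 3) : ℤ := (a : ℤ) - 1

theorem occupation_injective : Function.Injective occupation := by
  intro a b
  cases a <;> cases b <;> simp [occupation]

theorem exists_occupation_of_edgeWeight_ne_zero {q u v : R} {l r t d : ℤ}
    (h : edgeWeight q u v l r t d ≠ 0) :
    (∃ b, occupation b = l) ∧ (∃ b, occupation b = r) ∧ (∃ b, occupation b = t) ∧
      ∃ b, occupation b = d := by
  have hb {m : ℤ} (hm : m = 0 ∨ m = 1) : ∃ b, occupation b = m :=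
    hm.elim (fun h => ⟨false, h.symm⟩) fun h => ⟨true, h.symm⟩
  rw [edgeWeight] at h
  split_ifs at h with h'
  · exact ⟨hb h'.1, hb h'.2.1, hb h'.2.2.1, hb h'.2.2.2⟩
  · exact absurd rfl h

theorem sum_vertexWeight_eq_sum_edgeWeight (q u v : R) (l r t : Bool) (s : ℤ) :
    (∑ b, if occupation b = s then vertexWeight q u v l r t b else 0) =
      ∑ a : Fin 3, if occupation l = entry a + occupation r ∧ occupation t = entry a + s then
        edgeWeight q u v (occupation l) (occupation r) (entry a + s) s else 0 := by
  by_cases h : ∃ b, occupation b = s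
  · obtain ⟨b, rfl⟩ := h
    simp only [occupation_injective.eq_iff, sum_ite_eq', mem_univ, if_true]
    rw [Fin.sum_univ_three]
    cases l <;> cases r <;> cases t <;> cases b <;>
      simp [edgeWeight, occupation, entry, vertexWeight]
  · rw [sum_eq_zero fun b _ => if_neg fun hb => h ⟨b, hb⟩, sum_eq_zero fun a _ => ?_]
    split_ifs
    · exact not_not.1 fun hne => h (exists_occupation_of_edgeWeight_ne_zero hne).2.2.2
    · rfl

theorem columnMatrix_eq_sum (q v : R) {n : ℕ} (u : Fin n → R) (l r : Fin n → Bool) (t d : Bool) :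
    columnMatrix q v u l r t d = ∑ a : Fin n → Fin 3,
      if (∀ i, occupation (l i) = entry (a i) + occupation (r i)) ∧
          occupation t = (∑ i, entry (a i)) + occupation d then
        ∏ i, edgeWeight q (u i) v (occupation (l i)) (occupation (r i))
          (entry (a i) + ((∑ k ∈ Ioi i, entry (a k)) + occupation d))
            ((∑ k ∈ Ioi i, entry (a k)) + occupation d)
      else 0 := by
  induction n generalizing t with
  | zero => simp [columnMatrix, Matrix.one_apply, occupation_injective.eq_iff]
  | succ n ih =>
    rw [columnMatrix, Matrix.mul_apply, ← (Fin.consEquiv fun _ => Fin 3).sum_comp,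
      Fintype.sum_prod_type, sum_comm]
    simp only [ih, mul_sum]
    rw [sum_comm]
    refine sum_congr rfl fun a _ => ?_
    simp only [Fin.consEquiv, Equiv.coe_fn_mk, Fin.forall_fin_succ, Fin.cons_zero, Fin.cons_succ,
      Fin.prod_univ_succ, Fin.sum_univ_succ, Fin.sum_Ioi_zero, Fin.sum_Ioi_succ, Fin.tail]
    set X := ∏ i : Fin n, edgeWeight q (u i.succ) v (occupation (l i.succ)) (occupation (r i.succ))
          (entry (a i) + ((∑ k ∈ Ioi i, entry (a k)) + occupation d))
            ((∑ k ∈ Ioi i, entry (a k)) + occupation d)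
    by_cases hP : ∀ i : Fin n, occupation (l i.succ) = entry (a i) + occupation (r i.succ)
    · have := sum_vertexWeight_eq_sum_edgeWeight q (u 0) v (l 0) (r 0) t
        ((∑ i, entry (a i)) + occupation d)
      replace this := congrArg (· * X) this
      simp only [sum_mul, ite_mul, zero_mul] at this
      simp only [hP, implies_true, true_and, and_true, mul_ite, mul_zero, add_assoc] at this ⊢
      exact this
    · simp [hP]

/-- The partition function as a sum over matrices, given by their columns. -/
theorem partitionFrom_eq_sum (q : R) {m n : ℕ} (u : Fin n → R) (v : Fin m → R)
    (l : Fin n → Bool) :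
    partitionFrom q u (List.ofFn v) l = ∑ f : Fin m → Fin n → Fin 3,
      if (∀ i, occupation (l i) = ∑ j, entry (f j i)) ∧ ∀ j, ∑ i, entry (f j i) = 1 then
        ∏ j, ∏ i, edgeWeight q (u i) (v j)
          (entry (f j i) + ∑ k ∈ Ioi j, entry (f k i)) (∑ k ∈ Ioi j, entry (f k i))
          (entry (f j i) + ∑ k ∈ Ioi i, entry (f j k)) (∑ k ∈ Ioi i, entry (f j k))
      else 0 := by
  induction m generalizing l with
  | zero =>
    have : l = (fun _ => false) ↔ ∀ i, occupation (l i) = 0 := by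
      rw [funext_iff]
      exact forall_congr' fun i => (occupation_injective.eq_iff (b := false)).symm
    simp [partitionFrom, this]
  | succ m ih =>
    rw [List.ofFn_succ, partitionFrom, ← (Fin.consEquiv fun _ => Fin n → Fin 3).sum_comp,
      Fintype.sum_prod_type]
    simp only [ih, columnMatrix_eq_sum, sum_mul_sum]
    rw [sum_comm]
    refine Fintype.sum_congr (M := R) _ _ fun a => ?_
    rw [sum_comm]
    refine sum_congr rfl fun f _ => ?_
    simp only [Fin.consEquiv, Equiv.coe_fn_mk, Fin.forall_fin_succ, Fin.cons_zero, Fin.cons_succ,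
      Fin.prod_univ_succ, Fin.sum_univ_succ, Fin.sum_Ioi_zero, Fin.sum_Ioi_succ]
    set X := ∏ j : Fin m, ∏ i, edgeWeight q (u i) (v j.succ)
          (entry (f j i) + ∑ k ∈ Ioi j, entry (f k i)) (∑ k ∈ Ioi j, entry (f k i))
          (entry (f j i) + ∑ k ∈ Ioi i, entry (f j k)) (∑ k ∈ Ioi i, entry (f j k))
    have h1 : occupation true = 1 := rfl
    have h0 : occupation false = 0 := rfl
    by_cases h : ∃ r : Fin n → Bool, ∀ i, occupation (r i) = ∑ j, entry (f j i)
    · obtain ⟨r, hr⟩ := h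
      rw [sum_eq_single r]
      · simp only [hr, h1, h0, add_zero, implies_true, true_and, ite_mul, mul_ite, mul_zero,
          zero_mul, ← ite_and]
        by_cases hl : ∀ i, occupation (l i) = entry (a i) + ∑ j, entry (f j i)
        · simp only [hl, implies_true, true_and, eq_comm (a := (1 : ℤ))]
          congr 1
          exact propext and_comm
        · simp [hl]
      · intro s _ hs
        refine mul_eq_zero_of_right _ (if_neg fun hc => hs ?_)
        funext i
        exact occupation_injective ((hc.1 i).trans (hr i).symm)
      · simp
    · refine (sum_eq_zero fun r _ => ?_).trans ?_
      · exact mul_eq_zero_of_right _ (if_neg fun hc => h ⟨r, hc.1⟩)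
      · split_ifs
        · by_contra hne
          have hne' := left_ne_zero_of_mul (Ne.symm hne)
          have hex (i) := (exists_occupation_of_edgeWeight_ne_zero
            (fun h0 => hne' (prod_eq_zero (mem_univ i) h0))).2.1
          choose r hr using hex
          exact h ⟨r, hr⟩
        · rfl

end Configurations

section AlternatingSignMatrices

/-- The sum of the entries to the right of a given entry. -/
def rightSum {n : ℕ} (A : Fin n → Fin n → ℤ) (i j : Fin n) : ℤ := ∑ k ∈ Ioi j, A i k

/-- The sum of the entries below a given entry. -/
def belowSum {n : ℕ} (A : Fin n → Fin n → ℤ) (i j : Fin n) : ℤ := ∑ k ∈ Ioi i, A k j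

theorem sum_filter_le_add_sum_Ioi {n : ℕ} (f : Fin n → ℤ) (j : Fin n) :
    (∑ k ∈ univ.filter (fun k : Fin n => k ≤ j), f k) + ∑ k ∈ Ioi j, f k = ∑ k, f k := by
  rw [← sum_filter_add_sum_filter_not univ fun k : Fin n => k ≤ j]
  congr 2
  ext k
  simp

theorem sum_filter_lt_add_sum_Ioi {n : ℕ} (f : Fin n → ℤ) (j : Fin n) :
    (∑ k ∈ univ.filter (fun k : Fin n => k < j), f k) + (f j + ∑ k ∈ Ioi j, f k) = ∑ k, f k := by
  rw [← sum_filter_le_add_sum_Ioi f j, ← add_assoc, add_comm _ (f j), ← sum_insert (by simp)]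
  congr 2
  ext k
  simp [le_iff_eq_or_lt]

theorem suffix_sum_of_prefix_sum {n : ℕ} {f : Fin n → ℤ} (hf : ∑ k, f k = 1)
    (h : ∀ j : Fin n, (∑ k ∈ univ.filter (fun k : Fin n => k ≤ j), f k) = 0 ∨
      (∑ k ∈ univ.filter (fun k : Fin n => k ≤ j), f k) = 1) (j : Fin n) :
    (f j + ∑ k ∈ Ioi j, f k = 0 ∨ f j + ∑ k ∈ Ioi j, f k = 1) ∧
      (∑ k ∈ Ioi j, f k = 0 ∨ ∑ k ∈ Ioi j, f k = 1) := by
  have h1 := sum_filter_le_add_sum_Ioi f j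
  have h2 := sum_filter_lt_add_sum_Ioi f j
  refine ⟨?_, by have := h j; lia⟩
  cases n with
  | zero => exact j.elim0
  | succ n =>
    cases j using Fin.cases with
    | zero =>
      rw [Fin.sum_Ioi_zero, ← Fin.sum_univ_succ, hf]
      exact Or.inr rfl
    | succ j =>
      have h3 := h j.castSucc
      have : univ.filter (fun k : Fin (n + 1) => k < j.succ) =
          univ.filter (fun k : Fin (n + 1) => k ≤ j.castSucc) := by
        ext k
        simp [Fin.lt_def, Fin.le_def]
      rw [this] at h2
      lia

variable {n : ℕ} {A : Fin n → Fin n → ℤ}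

theorem _root_.IsASM.row (h : IsASM A) (i j : Fin n) :
    (A i j + rightSum A i j = 0 ∨ A i j + rightSum A i j = 1) ∧
      (rightSum A i j = 0 ∨ rightSum A i j = 1) :=
  suffix_sum_of_prefix_sum (h.2.2.2.1 i) (h.2.1 i) j

theorem _root_.IsASM.column (h : IsASM A) (i j : Fin n) :
    (A i j + belowSum A i j = 0 ∨ A i j + belowSum A i j = 1) ∧
      (belowSum A i j = 0 ∨ belowSum A i j = 1) :=
  suffix_sum_of_prefix_sum (h.2.2.2.2 j) (fun i => h.2.2.1 i j) i

theorem entry_mem (a : Fin 3) : entry a = -1 ∨ entry a = 0 ∨ entry a = 1 := by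
  fin_cases a <;> simp [entry]

theorem partition_eq_sum {R : Type*} [CommRing R] (q : R) (u v : Fin n → R) [∀ e :
    Fin n → Fin n → Fin 3, Decidable (IsASM (asmMat e))] :
    partition q u (List.ofFn v) = ∑ e : Fin n → Fin n → Fin 3,
      if IsASM (asmMat e) then
        ∏ i, ∏ j, edgeWeight q (u i) (v j) (asmMat e i j + rightSum (asmMat e) i j)
          (rightSum (asmMat e) i j) (asmMat e i j + belowSum (asmMat e) i j)
            (belowSum (asmMat e) i j)
      else 0 := by
  rw [partition, partitionFrom_eq_sum, ← (Equiv.piComm fun _ _ => Fin 3).sum_comp]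
  refine sum_congr rfl fun e _ => ?_
  simp only [Equiv.piComm_apply]
  rw [prod_comm]
  change (if (∀ i, 1 = ∑ j, asmMat e i j) ∧ ∀ j, ∑ i, asmMat e i j = 1 then
    ∏ i, ∏ j, edgeWeight q (u i) (v j) (asmMat e i j + rightSum (asmMat e) i j)
          (rightSum (asmMat e) i j) (asmMat e i j + belowSum (asmMat e) i j)
            (belowSum (asmMat e) i j) else 0) = _
  by_cases hA : IsASM (asmMat e)
  · rw [if_pos hA, if_pos ⟨fun i => (hA.2.2.2.1 i).symm, hA.2.2.2.2⟩]
  · rw [if_neg hA]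
    split_ifs with h
    · by_contra hne
      refine hA ⟨fun i j => entry_mem (e i j), fun i j => ?_, fun i j => ?_,
        fun i => (h.1 i).symm, h.2⟩
      all_goals
        have hij := exists_occupation_of_edgeWeight_ne_zero fun h0 =>
          hne (prod_eq_zero (mem_univ i) (prod_eq_zero (mem_univ j) h0))
      · obtain ⟨b, hb⟩ := hij.2.1
        have h1 := sum_filter_le_add_sum_Ioi (asmMat e i) j
        rw [← h.1 i] at h1
        cases b <;> simp [occupation, rightSum] at hb <;> lia
      · obtain ⟨b, hb⟩ := hij.2.2.2
        have h1 := sum_filter_le_add_sum_Ioi (fun k => asmMat e k j) i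
        rw [h.2 j] at h1
        cases b <;> simp [occupation, belowSum] at hb <;> lia
    · rfl

end AlternatingSignMatrices

section Statistics

variable {n : ℕ} {A : Fin n → Fin n → ℤ}

theorem add_sum_Ioi (f : Fin n → ℤ) (j : Fin n) :
    f j + ∑ k ∈ Ioi j, f k = ∑ k, if j ≤ k then f k else 0 := by
  rw [← sum_filter, ← sum_insert (by simp)]
  congr 1
  ext k
  simp [le_iff_eq_or_lt]

theorem add_rightSum_eq (A : Fin n → Fin n → ℤ) (i j : Fin n) :
    A i j + rightSum A i j = ∑ k, if j ≤ k then A i k else 0 :=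
  add_sum_Ioi (A i) j

theorem belowSum_eq (A : Fin n → Fin n → ℤ) (i j : Fin n) :
    belowSum A i j = ∑ k, if i < k then A k j else 0 := by
  rw [belowSum, ← sum_filter]
  congr 1
  ext k
  simp

theorem _root_.IsASM.one_sub_rightSum (h : IsASM A) (i j : Fin n) :
    1 - rightSum A i j = ∑ k, if k ≤ j then A i k else 0 := by
  rw [rightSum, ← sum_filter, ← h.2.2.2.1 i, ← sum_filter_le_add_sum_Ioi (A i) j]
  ring

theorem _root_.IsASM.one_sub_add_belowSum (h : IsASM A) (i j : Fin n) :
    1 - (A i j + belowSum A i j) = ∑ k, if k < i then A k j else 0 := by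
  rw [belowSum, ← sum_filter, ← h.2.2.2.2 j, ← sum_filter_lt_add_sum_Ioi (fun k => A k j) i]
  ring

theorem sum_inversions (A : Fin n → Fin n → ℤ) :
    (∑ i : Fin n, ∑ i' : Fin n, ∑ j : Fin n, ∑ j' : Fin n,
      if i < i' ∧ j' ≤ j then A i j * A i' j' else 0) =
      ∑ i, ∑ j', (∑ j, if j' ≤ j then A i j else 0) * ∑ i', if i < i' then A i' j' else 0 := by
  refine sum_congr rfl fun i _ => ?_
  simp only [sum_mul_sum]
  rw [sum_comm]
  conv_rhs => rw [sum_comm]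
  refine sum_congr rfl fun j _ => ?_
  rw [sum_comm]
  refine sum_congr rfl fun j' _ => sum_congr rfl fun i' _ => ?_
  by_cases h1 : i < i' <;> by_cases h2 : j' ≤ j <;> simp [h1, h2]

theorem sum_inversions' (A : Fin n → Fin n → ℤ) :
    (∑ i : Fin n, ∑ i' : Fin n, ∑ j : Fin n, ∑ j' : Fin n,
      if i < i' ∧ j' ≤ j then A i j * A i' j' else 0) =
      ∑ i', ∑ j, (∑ i, if i < i' then A i j else 0) * ∑ j', if j' ≤ j then A i' j' else 0 := by
  rw [sum_comm]
  refine sum_congr rfl fun i' _ => ?_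
  simp only [sum_mul_sum]
  rw [sum_comm]
  refine sum_congr rfl fun j _ => sum_congr rfl fun i _ => sum_congr rfl fun j' _ => ?_
  by_cases h1 : i < i' <;> by_cases h2 : j' ≤ j <;> simp [h1, h2]

theorem _root_.IsASM.sum_add_rightSum (h : IsASM A) :
    ∑ i, ∑ j, (A i j + rightSum A i j) = ∑ i, ∑ j, (A i j + belowSum A i j) := by
  have h1 : ∑ i, ∑ j, (A i j + rightSum A i j) =
      ∑ j : Fin n, ∑ k, if j ≤ k then (1 : ℤ) else 0 := by
    rw [sum_comm]
    refine sum_congr rfl fun j _ => ?_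
    simp only [add_rightSum_eq]
    rw [sum_comm]
    refine sum_congr rfl fun k _ => ?_
    split_ifs
    · exact h.2.2.2.2 k
    · simp
  have h2 (i j) : A i j + belowSum A i j = ∑ k, if i ≤ k then A k j else 0 :=
    add_sum_Ioi (fun k => A k j) i
  rw [h1]
  refine sum_congr rfl fun i _ => ?_
  simp only [h2]
  rw [sum_comm]
  refine sum_congr rfl fun k _ => ?_
  split_ifs
  · exact (h.2.2.2.1 k).symm
  · simp

theorem edgeWeight_eq_pow {R : Type*} [CommRing R] (q u v : R) {a r d : ℤ}
    (hl : a + r = 0 ∨ a + r = 1) (hr : r = 0 ∨ r = 1) (ht : a + d = 0 ∨ a + d = 1)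
    (hd : d = 0 ∨ d = 1) :
    edgeWeight q u v (a + r) r (a + d) d =
      (u - q * v) ^ ((a + r) * d + (1 - (a + d)) * (1 - r)).toNat *
        (q * (u - v)) ^ ((a + r) * (1 - (a + d))).toNat *
        (u - v) ^ ((a + d) * (1 - (a + r))).toNat *
        ((q - 1) ^ 2 * u * v) ^ (if a = -1 then 1 else 0) := by
  rcases hl with hl | hl <;> rcases hr with rfl | rfl <;> rcases ht with ht | ht <;>
    rcases hd with rfl | rfl <;> obtain rfl : a = _ := eq_sub_of_add_eq hl <;>
    simp [edgeWeight, vertexWeight] at ht ⊢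

theorem _root_.IsASM.prod_edgeWeight {R : Type*} [CommRing R] {q u v x y : R} (h : IsASM A)
    (hx : (u - q * v) ^ 2 = x * (q * (u - v) ^ 2))
    (hy : (q - 1) ^ 2 * u * v = y * (q * (u - v) ^ 2)) :
    ∏ i, ∏ j, edgeWeight q u v (A i j + rightSum A i j) (rightSum A i j)
        (A i j + belowSum A i j) (belowSum A i j) =
      (q * (u - v) ^ 2) ^ (n * (n - 1) / 2) * (x ^ nuASM A * y ^ muASM A) := by
  have hnonneg {m : ℤ} (hm : m = 0 ∨ m = 1) : 0 ≤ m ∧ 0 ≤ 1 - m := by lia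
  have hmu : ∑ i, ∑ j, (if A i j = -1 then 1 else 0) = muASM A := by
    rw [muASM, card_filter, Fintype.sum_prod_type]
  have hnu0 : (∑ i, ∑ j, (A i j + rightSum A i j) * belowSum A i j) = nuASM A := by
    have : (∑ i, ∑ j, (A i j + rightSum A i j) * belowSum A i j) =
        ∑ i : Fin n, ∑ i' : Fin n, ∑ j : Fin n, ∑ j' : Fin n,
          if i < i' ∧ j' ≤ j then A i j * A i' j' else 0 := by
      simp only [sum_inversions, add_rightSum_eq, belowSum_eq]
    rw [nuASM, ← this, Int.toNat_of_nonneg]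
    exact sum_nonneg fun i _ => sum_nonneg fun j _ =>
      mul_nonneg (hnonneg (h.row i j).1).1 (hnonneg (h.column i j).2).1
  have hnu1 : (∑ i, ∑ j, (1 - (A i j + belowSum A i j)) * (1 - rightSum A i j)) = nuASM A := by
    rw [← hnu0]
    simp only [h.one_sub_add_belowSum, h.one_sub_rightSum]
    rw [← sum_inversions', sum_inversions]
    simp only [add_rightSum_eq, belowSum_eq]
  have hE : ∑ i, ∑ j, ((A i j + rightSum A i j) * belowSum A i j +
      (1 - (A i j + belowSum A i j)) * (1 - rightSum A i j)).toNat = 2 * nuASM A := by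
    zify
    rw [two_mul]
    nth_rw 1 [← hnu0]
    rw [← hnu1, ← sum_add_distrib]
    refine sum_congr rfl fun i _ => ?_
    rw [← sum_add_distrib]
    refine sum_congr rfl fun j _ => Int.toNat_of_nonneg (add_nonneg ?_ ?_)
    · exact mul_nonneg (hnonneg (h.row i j).1).1 (hnonneg (h.column i j).2).1
    · exact mul_nonneg (hnonneg (h.column i j).1).2 (hnonneg (h.row i j).2).2
  have hF1 : ((∑ i, ∑ j, ((A i j + rightSum A i j) * (1 - (A i j + belowSum A i j))).toNat : ℕ) :
      ℤ) = ∑ i, ∑ j, (A i j + rightSum A i j) * (1 - (A i j + belowSum A i j)) := by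
    push_cast
    exact sum_congr rfl fun i _ => sum_congr rfl fun j _ => Int.toNat_of_nonneg
      (mul_nonneg (hnonneg (h.row i j).1).1 (hnonneg (h.column i j).1).2)
  have hF2 : ((∑ i, ∑ j, ((A i j + belowSum A i j) * (1 - (A i j + rightSum A i j))).toNat : ℕ) :
      ℤ) = ∑ i, ∑ j, (A i j + belowSum A i j) * (1 - (A i j + rightSum A i j)) := by
    push_cast
    exact sum_congr rfl fun i _ => sum_congr rfl fun j _ => Int.toNat_of_nonneg
      (mul_nonneg (hnonneg (h.column i j).1).1 (hnonneg (h.row i j).1).2)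
  simp only [edgeWeight_eq_pow q u v (h.row _ _).1 (h.row _ _).2 (h.column _ _).1
    (h.column _ _).2, prod_mul_distrib, prod_pow_eq_pow_sum]
  rw [hE, hmu]
  set b := ∑ i, ∑ j, ((A i j + rightSum A i j) * (1 - (A i j + belowSum A i j))).toNat
  have hb : ∑ i, ∑ j, ((A i j + belowSum A i j) * (1 - (A i j + rightSum A i j))).toNat = b := by
    refine Nat.cast_injective (R := ℤ) ?_
    rw [hF1, hF2, ← sub_eq_zero]
    have hL := sub_eq_zero.2 h.sum_add_rightSum
    rw [← neg_eq_zero, ← hL]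
    simp only [← sum_sub_distrib, ← sum_neg_distrib]
    exact sum_congr rfl fun i _ => sum_congr rfl fun j _ => by ring
  have hcount : n * n = 2 * (b + nuASM A + muASM A) + n := by
    zify
    rw [show (2 * ((b : ℤ) + nuASM A + muASM A) + n) = nuASM A + nuASM A + b + b + (muASM A +
      muASM A) + n by ring]
    nth_rw 1 [← hnu0]
    nth_rw 1 [← hnu1]
    nth_rw 2 [← hb]
    rw [hF1, hF2, ← hmu]
    have hn : (n : ℤ) = ∑ i, ∑ j, A i j := by simp [h.2.2.2.1]
    have hnn : (n * n : ℤ) = ∑ i : Fin n, ∑ j : Fin n, 1 := by simp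
    rw [hnn]
    conv_rhs => rw [hn]
    push_cast
    simp only [← sum_add_distrib]
    refine sum_congr rfl fun i _ => sum_congr rfl fun j _ => ?_
    have h1 := h.row i j
    have h2 := h.column i j
    rcases h1.1 with e1 | e1 <;> rcases h1.2 with e2 | e2 <;> rcases h2.1 with e3 | e3 <;>
      rcases h2.2 with e4 | e4 <;> rw [e1, e3, e2, e4] <;>
      split_ifs <;> lia
  have hexp : n * (n - 1) / 2 = b + nuASM A + muASM A := by
    rw [Nat.mul_sub, hcount, mul_one, Nat.add_sub_cancel]
    simp
  rw [hb, hexp, pow_mul, hx, hy, mul_pow x, mul_pow y, pow_add, pow_add]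
  have hB : (q * (u - v) ^ 2) ^ b = (q * (u - v)) ^ b * (u - v) ^ b := by
    rw [← mul_pow]
    ring
  rw [hB]
  ring

end Statistics

section Transpose

variable {n : ℕ} {A : Fin n → Fin n → ℤ}

theorem _root_.IsASM.transpose (h : IsASM A) : IsASM fun i j => A j i :=
  ⟨fun i j => h.1 j i, fun i j => h.2.2.1 j i, fun i j => h.2.1 j i, h.2.2.2.2, h.2.2.2.1⟩

theorem isASM_transpose_iff : IsASM (fun i j => A j i) ↔ IsASM A :=
  ⟨fun h => h.transpose, fun h => h.transpose⟩

theorem nuASM_eq_toNat (A : Fin n → Fin n → ℤ) :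
    nuASM A = (∑ i, ∑ j, (A i j + rightSum A i j) * belowSum A i j).toNat := by
  simp only [nuASM, sum_inversions, add_rightSum_eq, belowSum_eq]

theorem _root_.IsASM.nuASM_transpose (h : IsASM A) : nuASM (fun i j => A j i) = nuASM A := by
  rw [nuASM_eq_toNat, nuASM_eq_toNat, sum_comm]
  congr 1
  refine sum_congr rfl fun i _ => sum_congr rfl fun j _ => ?_
  change (A i j + belowSum A i j) * rightSum A i j = _
  have h1 := h.row i j
  have h2 := h.column i j
  rcases h1.1 with e1 | e1 <;> rcases h1.2 with e2 | e2 <;> rcases h2.1 with e3 | e3 <;>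
    rcases h2.2 with e4 | e4 <;> rw [e1, e3, e2, e4] <;> lia

theorem muASM_transpose (A : Fin n → Fin n → ℤ) : muASM (fun i j => A j i) = muASM A := by
  simp only [muASM, card_filter, Fintype.sum_prod_type]
  exact sum_comm

theorem Zqua_transpose (n : ℕ) {R : Type*} [CommRing R] (x y z : R) :
    Zqua n x y 1 1 1 z = Zsing n x y z := by
  classical
  rw [Zsing, Zqua, Zqua, ← (Equiv.piComm fun _ _ => Fin 3).sum_comp]
  refine sum_congr rfl fun e _ => ?_
  have hT : asmMat ((Equiv.piComm fun _ _ => Fin 3) e) = fun i j => asmMat e j i := rfl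
  rw [hT]
  simp only [isASM_transpose_iff, one_pow, mul_one]
  split_ifs with h
  · rw [h.nuASM_transpose, muASM_transpose]
    rfl
  · rfl

end Transpose

section FirstRowAndColumn

variable {n : ℕ} {A : Fin (n + 1) → Fin (n + 1) → ℤ}

theorem _root_.IsASM.add_belowSum_zero (h : IsASM A) (j : Fin (n + 1)) :
    A 0 j + belowSum A 0 j = 1 := by
  rw [belowSum, Fin.sum_Ioi_zero, ← h.2.2.2.2 j, Fin.sum_univ_succ]

theorem _root_.IsASM.add_rightSum_zero (h : IsASM A) (i : Fin (n + 1)) :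
    A i 0 + rightSum A i 0 = 1 :=
  h.transpose.add_belowSum_zero i

theorem _root_.IsASM.top_row (h : IsASM A) (j : Fin (n + 1)) : A 0 j = 0 ∨ A 0 j = 1 := by
  have h1 := h.add_belowSum_zero j
  have h2 := (h.column 0 j).2
  lia

theorem _root_.IsASM.card_top_row_eq_one (h : IsASM A) : #{j | A 0 j = 1} = 1 := by
  zify
  refine Eq.trans ?_ (h.2.2.2.1 0)
  rw [card_filter]
  push_cast
  refine sum_congr rfl fun j _ => ?_
  rcases h.top_row j with e | e <;> simp [e]

theorem _root_.IsASM.rightSum_zero_eq_one_iff (h : IsASM A) (j : Fin (n + 1)) :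
    rightSum A 0 j = 1 ↔ A 0 j = 0 ∧ ∃ j', j < j' ∧ A 0 j' = 1 := by
  constructor
  · intro h1
    refine ⟨?_, ?_⟩
    · have := (h.row 0 j).1
      have := h.top_row j
      lia
    · by_contra! hne
      rw [rightSum, sum_eq_zero fun k hk => ?_] at h1
      · exact zero_ne_one h1
      · exact (h.top_row k).resolve_right (hne k (mem_Ioi.1 hk))
  · rintro ⟨-, k, hk, h1⟩
    refine (h.row 0 j).2.resolve_left fun h0 => ?_
    have := single_le_sum (f := A 0) (fun i _ => by
      rcases h.top_row i with e | e <;> simp [e]) (mem_Ioi.2 hk)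
    rw [rightSum] at h0
    lia

theorem _root_.IsASM.rhoT_eq (h : IsASM A) : rhoT A = #{j | rightSum A 0 j = 1} := by
  simp only [h.rightSum_zero_eq_one_iff]
  rfl

theorem _root_.IsASM.rhoT_eq_zero_iff (h : IsASM A) : rhoT A = 0 ↔ A 0 0 = 1 := by
  rw [h.rhoT_eq, card_eq_zero, filter_eq_empty_iff]
  constructor
  · intro h1
    have := (h.row 0 0).2.resolve_right (h1 (mem_univ 0))
    rw [← h.add_rightSum_zero 0, this, add_zero]
  · intro h1 j _ h2
    obtain ⟨-, k, hk, h3⟩ := (h.rightSum_zero_eq_one_iff j).1 h2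
    obtain ⟨a, ha⟩ := card_eq_one.1 h.card_top_row_eq_one
    have h4 : (0 : Fin (n + 1)) ∈ ({j | A 0 j = 1} : Finset _) := by simp [h1]
    have h5 : k ∈ ({j | A 0 j = 1} : Finset _) := by simp [h3]
    rw [ha, mem_singleton] at h4 h5
    rw [h5, ← h4] at hk
    exact absurd hk (Fin.not_lt_zero j)

theorem _root_.IsASM.prod_top_row (h : IsASM A) {R : Type*} [CommRing R] (b z : R) :
    ∏ j, ((if A 0 j = 1 then 1 else b) * (if rightSum A 0 j = 1 then z else 1)) =
      b ^ n * z ^ rhoT A := by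
  rw [prod_mul_distrib, prod_ite, prod_ite, prod_const_one, prod_const_one, prod_const, prod_const,
    one_mul, mul_one, h.rhoT_eq]
  congr 2
  have := card_filter_add_card_filter_not (s := univ) fun j => A 0 j = 1
  rw [h.card_top_row_eq_one, card_univ, Fintype.card_fin] at this
  lia

theorem edgeWeight_top {R : Type*} [CommRing R] {q u v u' b z : R} {a r d : ℤ}
    (h1 : u' - v = (u - v) * b) (h2 : u' - q * v = (u - q * v) * (b * z))
    (hl : a + r = 0 ∨ a + r = 1) (hr : r = 0 ∨ r = 1) (hd : d = 0 ∨ d = 1) (ht : a + d = 1) :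
    edgeWeight q u' v (a + r) r (a + d) d = edgeWeight q u v (a + r) r (a + d) d *
      ((if a = 1 then 1 else b) * (if r = 1 then z else 1)) := by
  rcases hl with hl | hl <;> rcases hr with rfl | rfl <;> rcases hd with rfl | rfl <;>
    obtain rfl : a = _ := eq_sub_of_add_eq hl <;>
    simp [edgeWeight, vertexWeight, h1, h2] at ht ⊢

theorem edgeWeight_left {R : Type*} [CommRing R] {q u v v' b z : R} {a r d : ℤ}
    (h1 : u - v' = (u - v) * b) (h2 : u - q * v' = (u - q * v) * (b * z))
    (hr : r = 0 ∨ r = 1) (ht : a + d = 0 ∨ a + d = 1) (hd : d = 0 ∨ d = 1) (hl : a + r = 1) :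
    edgeWeight q u v' (a + r) r (a + d) d = edgeWeight q u v (a + r) r (a + d) d *
      ((if a = 1 then 1 else b) * (if d = 1 then z else 1)) := by
  rcases ht with ht | ht <;> rcases hr with rfl | rfl <;> rcases hd with rfl | rfl <;>
    obtain rfl : a = _ := eq_sub_of_add_eq hl <;>
    simp [edgeWeight, vertexWeight, h1, h2, mul_assoc] at ht ⊢

theorem edgeWeight_top_left {R : Type*} [CommRing R] {q u v u' v' c : R} {a r d : ℤ}
    (h : u' - q * v' = (u - q * v) * c) (hr : r = 0 ∨ r = 1) (hd : d = 0 ∨ d = 1)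
    (hl : a + r = 1) (ht : a + d = 1) :
    edgeWeight q u' v' (a + r) r (a + d) d = edgeWeight q u v (a + r) r (a + d) d *
      (if a = 1 then 1 else c) := by
  rcases hr with rfl | rfl <;> rcases hd with rfl | rfl <;>
    obtain rfl : a = _ := eq_sub_of_add_eq hl <;>
    simp [edgeWeight, vertexWeight, h] at ht ⊢

/-- Parameters of the six-vertex model which yield a doubly refined enumeration. -/
structure Refinement {R : Type*} [CommRing R] (q u v u' v' x y b₁ b₂ z₁ z₂ k : R) : Prop where
  sq_eq : (u - q * v) ^ 2 = x * (q * (u - v) ^ 2)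
  mul_eq : (q - 1) ^ 2 * u * v = y * (q * (u - v) ^ 2)
  top_b : u' - v = (u - v) * b₁
  top_a : u' - q * v = (u - q * v) * (b₁ * z₁)
  left_b : u - v' = (u - v) * b₂
  left_a : u - q * v' = (u - q * v) * (b₂ * z₂)
  corner : u' - q * v' = (u - q * v) * (b₁ * z₁ * (b₂ * z₂) * k)

theorem _root_.IsASM.prod_edgeWeight_refined (h : IsASM A) {R : Type*} [CommRing R]
    {q u v u' v' x y b₁ b₂ z₁ z₂ k : R} (hp : Refinement q u v u' v' x y b₁ b₂ z₁ z₂ k) :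
    ∏ i, ∏ j, edgeWeight q ((Fin.cons u' fun _ => u : Fin (n + 1) → R) i)
        ((Fin.cons v' fun _ => v : Fin (n + 1) → R) j)
        (A i j + rightSum A i j) (rightSum A i j) (A i j + belowSum A i j) (belowSum A i j) =
      (q * (u - v) ^ 2) ^ ((n + 1) * n / 2) * (b₁ ^ n * b₂ ^ n) * (x ^ nuASM A * y ^ muASM A *
        (z₁ ^ rhoT A * z₂ ^ rhoL A) * (if A 0 0 = 1 then 1 else k)) := by
  have hfactor (i j) : edgeWeight q ((Fin.cons u' fun _ => u : Fin (n + 1) → R) i)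
        ((Fin.cons v' fun _ => v : Fin (n + 1) → R) j)
        (A i j + rightSum A i j) (rightSum A i j) (A i j + belowSum A i j) (belowSum A i j) =
      edgeWeight q u v (A i j + rightSum A i j) (rightSum A i j) (A i j + belowSum A i j)
        (belowSum A i j) *
      (if i = 0 then (if A 0 j = 1 then 1 else b₁) * (if rightSum A 0 j = 1 then z₁ else 1)
        else 1) *
      (if j = 0 then (if A i 0 = 1 then 1 else b₂) * (if belowSum A i 0 = 1 then z₂ else 1)
        else 1) *
      (if i = 0 then if j = 0 then if A 0 0 = 1 then 1 else k else 1 else 1) := by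
    have h1 := h.row i j
    have h2 := h.column i j
    cases i using Fin.cases with
    | zero =>
      cases j using Fin.cases with
      | zero =>
        simp only [Fin.cons_zero, if_true]
        have e1 := h.add_rightSum_zero 0
        have e2 := h.add_belowSum_zero 0
        rw [edgeWeight_top_left hp.corner h1.2 h2.2 e1 e2]
        rcases h1.2 with e3 | e3 <;> rcases h2.2 with e4 | e4 <;> rw [e3] at e1 <;>
          rw [e4] at e2
        · obtain e5 : A 0 0 = 1 := by lia
          simp [e5, e3, e4]
        · lia
        · lia
        · obtain e5 : A 0 0 = 0 := by lia
          simp [e5, e3, e4, mul_assoc]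
      | succ j =>
        simp only [Fin.cons_zero, Fin.cons_succ, if_true, Fin.succ_ne_zero, if_false, mul_one]
        exact edgeWeight_top hp.top_b hp.top_a h1.1 h1.2 h2.2 (h.add_belowSum_zero _)
    | succ i =>
      cases j using Fin.cases with
      | zero =>
        simp only [Fin.cons_zero, Fin.cons_succ, if_true, Fin.succ_ne_zero, if_false, mul_one]
        exact edgeWeight_left hp.left_b hp.left_a h1.2 h2.1 h2.2 (h.add_rightSum_zero _)
      | succ j => simp [Fin.succ_ne_zero]
  have hrow (g : Fin (n + 1) → R) : ∏ i : Fin (n + 1), ∏ j, (if i = 0 then g j else 1) =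
      ∏ j, g j := by
    simp [Fin.prod_univ_succ]
  set g : Fin (n + 1) → R := fun j =>
    (if A 0 j = 1 then 1 else b₁) * (if rightSum A 0 j = 1 then z₁ else 1) with hg
  set f : Fin (n + 1) → R := fun i =>
    (if A i 0 = 1 then 1 else b₂) * (if belowSum A i 0 = 1 then z₂ else 1) with hf
  have hg' : ∏ j, g j = b₁ ^ n * z₁ ^ rhoT A := h.prod_top_row b₁ z₁
  have hf' : ∏ i, f i = b₂ ^ n * z₂ ^ rhoL A := h.transpose.prod_top_row b₂ z₂
  have hW := h.prod_edgeWeight hp.sq_eq hp.mul_eq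
  rw [Nat.add_sub_cancel] at hW
  have hsplit (i j) := (hfactor i j).trans
    (show _ = _ * (if i = 0 then g j else 1) * (if j = 0 then f i else 1) * _ from rfl)
  simp only [hsplit, prod_mul_distrib, hrow, hg', hf', hW,
    prod_ite_eq', mem_univ, if_true]
  ring

theorem _root_.IsASM.rhoL_eq_zero_iff (h : IsASM A) : rhoL A = 0 ↔ A 0 0 = 1 :=
  h.transpose.rhoT_eq_zero_iff

theorem partition_refined (n : ℕ) {R : Type*} [CommRing R]
    {q u v u' v' x y b₁ b₂ z₁ z₂ k : R} (hp : Refinement q u v u' v' x y b₁ b₂ z₁ z₂ k) :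
    partition q (Fin.cons u' fun _ => u : Fin (n + 1) → R) (v' :: List.ofFn fun _ : Fin n => v) =
      (q * (u - v) ^ 2) ^ ((n + 1) * n / 2) * (b₁ ^ n * b₂ ^ n) *
        (k * Zadj (n + 1) x y z₁ z₂ + (1 - k) * Zsing (n + 1) x y 0) := by
  classical
  have hv : (v' :: List.ofFn fun _ : Fin n => v) =
      List.ofFn (Fin.cons v' fun _ => v : Fin (n + 1) → R) := by
    simp [List.ofFn_succ]
  rw [hv, partition_eq_sum, Zadj, Zsing, Zqua, Zqua, mul_sum, mul_sum, ← sum_add_distrib, mul_sum]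
  refine sum_congr rfl fun e _ => ?_
  split_ifs with h
  · rw [h.prod_edgeWeight_refined hp]
    simp only [one_pow, mul_one]
    rcases eq_or_ne (asmMat e 0 0) 1 with h1 | h1
    · rw [h.rhoT_eq_zero_iff.2 h1, h.rhoL_eq_zero_iff.2 h1, if_pos h1]
      ring
    · rw [zero_pow (mt h.rhoT_eq_zero_iff.1 h1), if_neg h1]
      ring
  · ring

end FirstRowAndColumn

theorem Zun_zero {R : Type*} [CommRing R] (x y : R) : Zun 0 x y = 1 := by
  have h (e : Fin 0 → Fin 0 → Fin 3) : IsASM (asmMat e) := by simp [IsASM]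
  simp [Zun, Zqua, h, nuASM, muASM]

/-- Spectral parameters, normalised by `u - v = 1`, whose vertex weights realise the statistics
`x` and `y`; here `ρ = u - q * v`. -/
structure Uniformization {L : Type*} [Field L] (q ρ x y : L) : Prop where
  q_ne_zero : q ≠ 0
  q_ne_one : q ≠ 1
  ρ_ne_zero : ρ ≠ 0
  ρ_ne_one : ρ ≠ 1
  ρ_ne_q : ρ ≠ q
  sq_eq : ρ ^ 2 = q * x
  mul_eq : (ρ - 1) * (ρ - q) = q * y

namespace Uniformization

variable {L : Type*} [Field L] {q ρ x y : L}

theorem refinement (h : Uniformization q ρ x y) {b₁ b₂ z₁ z₂ k : L}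
    (h₁ : ρ * (b₁ * z₁) = b₁ - 1 + ρ) (h₂ : ρ * (b₂ * z₂) = q * b₂ - q + ρ)
    (hk : ρ * (b₁ * z₁ * (b₂ * z₂) * k) = b₁ + q * b₂ + ρ - 1 - q) :
    Refinement q ((ρ - q) / (1 - q)) ((ρ - 1) / (1 - q)) ((ρ - 1) / (1 - q) + b₁)
      ((ρ - q) / (1 - q) - b₂) x y b₁ b₂ z₁ z₂ k := by
  have hq : 1 - q ≠ 0 := sub_ne_zero.2 h.q_ne_one.symm
  have hu : (ρ - q) / (1 - q) = (ρ - 1) / (1 - q) + 1 := by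
    field_simp
    ring
  have hv : (1 - q) * ((ρ - 1) / (1 - q)) = ρ - 1 := mul_div_cancel₀ _ hq
  rw [hu]
  generalize (ρ - 1) / (1 - q) = v at hv
  have hρ : ρ = 1 + (1 - q) * v := by rw [hv]; ring
  have e1 : v + 1 - q * v = ρ := by rw [hρ]; ring
  constructor
  · linear_combination h.sq_eq + (v + 1 - q * v + ρ) * e1
  · linear_combination h.mul_eq + ((1 - q) * (v + 1) + ρ - 1) * hv
  · ring
  · linear_combination e1 - b₁ * z₁ * e1 - h₁
  · ring
  · linear_combination e1 - b₂ * z₂ * e1 - h₂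
  · linear_combination e1 - b₁ * z₁ * (b₂ * z₂) * k * e1 - hk

theorem sub_eq_one (h : Uniformization q ρ x y) :
    (ρ - q) / (1 - q) - (ρ - 1) / (1 - q) = 1 := by
  have hq : 1 - q ≠ 0 := sub_ne_zero.2 h.q_ne_one.symm
  field_simp
  ring

theorem sub_mul_eq (h : Uniformization q ρ x y) :
    (ρ - q) / (1 - q) - q * ((ρ - 1) / (1 - q)) = ρ := by
  have hq : 1 - q ≠ 0 := sub_ne_zero.2 h.q_ne_one.symm
  field_simp
  ring

theorem partition_refined (h : Uniformization q ρ x y) (n : ℕ) {b₁ b₂ z₁ z₂ k : L}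
    (h₁ : ρ * (b₁ * z₁) = b₁ - 1 + ρ) (h₂ : ρ * (b₂ * z₂) = q * b₂ - q + ρ)
    (hk : ρ * (b₁ * z₁ * (b₂ * z₂) * k) = b₁ + q * b₂ + ρ - 1 - q) :
    partition q (Fin.cons ((ρ - 1) / (1 - q) + b₁) fun _ => (ρ - q) / (1 - q) : Fin (n + 1) → L)
        (((ρ - q) / (1 - q) - b₂) :: List.ofFn fun _ : Fin n => (ρ - 1) / (1 - q)) =
      q ^ ((n + 1) * n / 2) * (b₁ ^ n * b₂ ^ n) *
        (k * Zadj (n + 1) x y z₁ z₂ + (1 - k) * Zsing (n + 1) x y 0) := by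
  rw [SixVertex.partition_refined n (h.refinement h₁ h₂ hk), h.sub_eq_one, one_pow, mul_one]

theorem partition_row (h : Uniformization q ρ x y) (n : ℕ) {b₁ z₁ : L}
    (h₁ : ρ * (b₁ * z₁) = b₁ - 1 + ρ) :
    partition q (Fin.cons ((ρ - 1) / (1 - q) + b₁) fun _ => (ρ - q) / (1 - q) : Fin (n + 1) → L)
        ((ρ - 1) / (1 - q) :: List.ofFn fun _ : Fin n => (ρ - 1) / (1 - q)) =
      q ^ ((n + 1) * n / 2) * b₁ ^ n * Zsing (n + 1) x y z₁ := by
  have := h.partition_refined n (b₂ := 1) (z₂ := 1) (k := 1) h₁ (by ring)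
    (by linear_combination h₁)
  rw [sub_eq_iff_eq_add.1 h.sub_eq_one, add_sub_cancel_left] at this
  rw [sub_eq_iff_eq_add.1 h.sub_eq_one, this]
  simp only [Zadj, Zsing]
  ring

theorem partition_column (h : Uniformization q ρ x y) (n : ℕ) {b₂ z₂ : L}
    (h₂ : ρ * (b₂ * z₂) = q * b₂ - q + ρ) :
    partition q (Fin.cons ((ρ - q) / (1 - q)) fun _ => (ρ - q) / (1 - q) : Fin (n + 1) → L)
        (((ρ - q) / (1 - q) - b₂) :: List.ofFn fun _ : Fin n => (ρ - 1) / (1 - q)) =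
      q ^ ((n + 1) * n / 2) * b₂ ^ n * Zsing (n + 1) x y z₂ := by
  have := h.partition_refined n (b₁ := 1) (z₁ := 1) (k := 1) (by ring) h₂
    (by linear_combination h₂)
  rw [add_comm ((ρ - 1) / (1 - q)), ← sub_eq_iff_eq_add.1 h.sub_eq_one] at this
  rw [this, Zadj, Zqua_transpose]
  ring

theorem partition_homogeneous (h : Uniformization q ρ x y) (n : ℕ) :
    partition q (fun _ : Fin n => (ρ - q) / (1 - q))
        (List.ofFn fun _ : Fin n => (ρ - 1) / (1 - q)) =
      q ^ (n * (n - 1) / 2) * Zun n x y := by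
  cases n with
  | zero =>
    rw [Zun_zero, mul_one, List.ofFn_zero, partition, partitionFrom]
    exact (if_pos (funext fun i : Fin 0 => i.elim0)).trans (pow_zero q).symm
  | succ n =>
    have := h.partition_row n (b₁ := 1) (z₁ := 1) (by ring)
    rw [add_comm ((ρ - 1) / (1 - q)), ← sub_eq_iff_eq_add.1 h.sub_eq_one, one_pow, mul_one] at this
    rw [List.ofFn_succ, Zun, Nat.add_sub_cancel, ← Zsing, ← this]
    congr 1
    ext i
    cases i using Fin.cases <;> simp

theorem Zsing_zero (h : Uniformization q ρ x y) (n : ℕ) : Zsing (n + 1) x y 0 = Zun n x y := by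
  have hq : 1 - q ≠ 0 := sub_ne_zero.2 h.q_ne_one.symm
  have h1 := h.partition_row n (b₁ := 1 - ρ) (z₁ := 0) (by ring)
  have h2 : (ρ - 1) / (1 - q) + (1 - ρ) = q * ((ρ - 1) / (1 - q)) := by
    field_simp
    ring
  have h3 : q * ((ρ - 1) / (1 - q)) - (ρ - 1) / (1 - q) = 1 - ρ := by
    field_simp
    ring
  rw [h2, partition_cons_mul, h.sub_eq_one, h.partition_homogeneous] at h1
  simp only [List.map_ofFn, List.prod_ofFn, Function.comp_def, h3, prod_const, card_univ,
    Fintype.card_fin, mul_one] at h1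
  have h4 : (n + 1) * n / 2 = n * (n - 1) / 2 + n := Nat.triangle_succ n
  rw [h4, pow_add] at h1
  have h5 := pow_ne_zero n (sub_ne_zero.2 h.ρ_ne_one.symm)
  have h6 := pow_ne_zero n h.q_ne_zero
  have h7 := pow_ne_zero (n * (n - 1) / 2) h.q_ne_zero
  refine mul_left_cancel₀ (mul_ne_zero (mul_ne_zero h5 h6) h7) ?_
  linear_combination -h1

end Uniformization

namespace Uniformization

variable {L : Type*} [Field L] {q ρ x y : L}

theorem Zadj_recursion (h : Uniformization q ρ x y) (n : ℕ) {z₁ z₂ : L} (hx : x ≠ 0)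
    (hz₁ : z₁ ≠ 0) (hz₂ : z₂ ≠ 0) (h₁ : 1 - ρ * z₁ ≠ 0) (h₂ : q - ρ * z₂ ≠ 0)
    (hz : y * (z₁ * z₂) ≠ (z₁ - 1) * (z₂ - 1)) :
    (z₁ - 1) * (z₂ - 1) * (Zadj (n + 2) x y z₁ z₂ - Zun (n + 1) x y) * Zun n x y =
      z₁ * z₂ * (y * Zadj (n + 1) x y z₁ z₂ * Zun (n + 1) x y +
        (x * ((z₁ - 1) * (z₂ - 1)) - y) * Zsing (n + 1) x y z₁ * Zsing (n + 1) x y z₂) := by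
  have hρ1 : 1 - ρ ≠ 0 := sub_ne_zero.2 h.ρ_ne_one.symm
  have hρq : q - ρ ≠ 0 := sub_ne_zero.2 h.ρ_ne_q.symm
  obtain ⟨b₁, hb₁, e₁⟩ : ∃ b₁, b₁ ≠ 0 ∧ ρ * (b₁ * z₁) = b₁ - 1 + ρ :=
    ⟨(1 - ρ) / (1 - ρ * z₁), div_ne_zero hρ1 h₁, by field_simp; ring⟩
  obtain ⟨b₂, hb₂, e₂⟩ : ∃ b₂, b₂ ≠ 0 ∧ ρ * (b₂ * z₂) = q * b₂ - q + ρ :=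
    ⟨(q - ρ) / (q - ρ * z₂), div_ne_zero hρq h₂, by field_simp; ring⟩
  obtain ⟨k, hk⟩ : ∃ k, ρ * (b₁ * z₁ * (b₂ * z₂) * k) = b₁ + q * b₂ + ρ - 1 - q := by
    have hc := mul_ne_zero h.ρ_ne_zero (mul_ne_zero (mul_ne_zero hb₁ hz₁) (mul_ne_zero hb₂ hz₂))
    exact ⟨(b₁ + q * b₂ + ρ - 1 - q) / (ρ * (b₁ * z₁ * (b₂ * z₂))), by
      rw [← mul_assoc, mul_div_cancel₀ _ hc]⟩
  have hB : (b₁ - 1) * (b₂ - 1) = x * (z₁ * z₂) * (b₁ * b₂) * (1 - k) := by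
    refine mul_left_cancel₀ h.q_ne_zero ?_
    linear_combination b₁ * b₂ * (z₁ * z₂) * (1 - k) * h.sq_eq + ρ * hk - ρ * b₂ * z₂ * e₁ -
      (b₁ - 1 + ρ) * e₂
  have hy : y * ((b₁ - 1) * (b₂ - 1)) = x * (b₁ * b₂) * ((z₁ - 1) * (z₂ - 1)) := by
    have e₁' : ρ * b₁ * (z₁ - 1) = (b₁ - 1) * (1 - ρ) := by linear_combination e₁
    have e₂' : ρ * b₂ * (z₂ - 1) = (b₂ - 1) * (q - ρ) := by linear_combination e₂
    refine mul_left_cancel₀ h.q_ne_zero ?_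
    linear_combination (b₁ * b₂ * ((z₁ - 1) * (z₂ - 1))) * h.sq_eq -
      (b₁ - 1) * (b₂ - 1) * h.mul_eq - ρ * b₂ * (z₂ - 1) * e₁' - (b₁ - 1) * (1 - ρ) * e₂'
  have hk0 : k ≠ 0 := by
    rintro rfl
    refine hz (mul_left_cancel₀ (mul_ne_zero hx (mul_ne_zero hb₁ hb₂)) ?_)
    linear_combination hy - y * hB
  have hmain : (b₁ - 1) * (b₂ - 1) *
      (k * Zadj (n + 2) x y z₁ z₂ + (1 - k) * Zun (n + 1) x y) * Zun n x y =
      x * (z₁ * z₂) * (b₁ * b₂ * Zun (n + 1) x y *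
        (k * Zadj (n + 1) x y z₁ z₂ + (1 - k) * Zun n x y) -
        k * (b₁ + b₂ - 1) * Zsing (n + 1) x y z₂ * Zsing (n + 1) x y z₁) := by
    have hp := h.refinement e₁ e₂ hk
    have h1 := h.partition_refined (n + 1) e₁ e₂ hk
    have h2 := h.partition_homogeneous n
    have h3 := h.partition_homogeneous (n + 1)
    have h4 := h.partition_refined n e₁ e₂ hk
    have h5 := h.partition_column n e₂
    have h6 := h.partition_row n e₁
    have hD := h.sub_eq_one
    have hρ := h.sub_mul_eq
    generalize (ρ - q) / (1 - q) = u at *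
    generalize (ρ - 1) / (1 - q) = v at *
    have hbil := partition_bilinear q (v + b₁) u (u - b₂) v (fun _ : Fin n => u) fun _ => v
    have hcons : (Fin.cons u fun _ => u : Fin (n + 1) → L) = fun _ => u := by
      ext i
      cases i using Fin.cases <;> simp
    have hofFn : (v :: List.ofFn fun _ : Fin n => v) = List.ofFn fun _ : Fin (n + 1) => v := by
      rw [List.ofFn_succ]
    have w₁ : straightWeight q (v + b₁) v = ρ * (b₁ * z₁) * b₁ := by
      rw [straightWeight, hp.top_b, hp.top_a, hρ, hD, one_mul]
    have w₂ : straightWeight q u (u - b₂) = ρ * (b₂ * z₂) * b₂ := by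
      rw [straightWeight, hp.left_b, hp.left_a, hρ, hD, one_mul]
    have w₃ : straightWeight q (v + b₁) (u - b₂) =
        ρ * (b₁ * z₁ * (b₂ * z₂) * k) * (b₁ + b₂ - 1) := by
      rw [straightWeight, hp.corner, hρ]
      linear_combination -ρ * (b₁ * z₁ * (b₂ * z₂) * k) * hD
    have w₄ : straightWeight q u v = ρ := by
      rw [straightWeight, hρ, hD, mul_one]
    have w₅ : (v + b₁ - u) * (v - (u - b₂)) = (b₁ - 1) * (b₂ - 1) := by
      obtain rfl := sub_eq_iff_eq_add.1 hD
      ring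
    have t₁ : (n + 1 + 1) * (n + 1) / 2 = (n + 1) * n / 2 + (n + 1) := Nat.triangle_succ (n + 1)
    have t₂ : (n + 1) * n / 2 = n * (n - 1) / 2 + n := Nat.triangle_succ n
    rw [hcons] at h5
    rw [hofFn] at h6
    rw [hcons, hofFn, w₁, w₂, w₃, w₄, w₅, h1, h2, h3, h4, h5, h6, h.Zsing_zero, h.Zsing_zero,
      Nat.add_sub_cancel, t₁, t₂] at hbil
    simp only [pow_add, pow_one] at hbil
    have c₁ := pow_ne_zero (n * (n - 1) / 2) h.q_ne_zero
    have c₂ := pow_ne_zero n h.q_ne_zero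
    have c₃ := pow_ne_zero n hb₁
    have c₄ := pow_ne_zero n hb₂
    generalize q ^ (n * (n - 1) / 2) = C₁ at *
    generalize q ^ n = C₂ at *
    generalize b₁ ^ n = C₃ at *
    generalize b₂ ^ n = C₄ at *
    have hc : (C₁ * C₂) ^ 2 * (C₃ * b₁ * (C₄ * b₂)) ≠ 0 := by positivity
    refine mul_left_cancel₀ (mul_ne_zero hc h.q_ne_zero) ?_
    linear_combination hbil + (C₁ * C₂) ^ 2 * (C₃ * b₁ * (C₄ * b₂)) * (z₁ * z₂) *
      (b₁ * b₂ * Zun (n + 1) x y * (k * Zadj (n + 1) x y z₁ z₂ + (1 - k) * Zun n x y) -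
        k * (b₁ + b₂ - 1) * Zsing (n + 1) x y z₂ * Zsing (n + 1) x y z₁) * h.sq_eq
  refine mul_left_cancel₀ (mul_ne_zero hk0 (mul_ne_zero hx (mul_ne_zero hb₁ hb₂))) ?_
  linear_combination y * hmain -
    k * (Zadj (n + 2) x y z₁ z₂ - Zun (n + 1) x y) * Zun n x y * hy -
    y * Zun (n + 1) x y * Zun n x y * hB +
    k * x * (z₁ * z₂) * Zsing (n + 1) x y z₁ * Zsing (n + 1) x y z₂ * hy

end Uniformization

theorem Zadj_one {L : Type*} [Field L] {q ρ x y : L} (h : Uniformization q ρ x y) (z₁ z₂ : L) :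
    Zadj 1 x y z₁ z₂ = 1 := by
  classical
  rw [← Zun_zero x y, ← h.Zsing_zero, Zadj, Zsing, Zqua, Zqua]
  refine sum_congr rfl fun e _ => ?_
  split_ifs with he
  · have h1 : asmMat e 0 0 = 1 := by simpa using he.2.2.2.1 0
    rw [he.rhoT_eq_zero_iff.2 h1, he.rhoL_eq_zero_iff.2 h1]
    simp
  · rfl

/-- The generic uniformization exists over an algebraically closed field. -/
theorem exists_uniformization {L : Type*} [Field L] [IsAlgClosed L] {x y : L} (hx : x ≠ 0)
    (hy : y ≠ 0) (hxy : 4 * x ≠ (x + 1 - y) ^ 2) :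
    ∃ q ρ, Uniformization q ρ x y ∧ ∀ z, x * z ^ 2 + 1 ≠ z * (x + 1 - y) →
      1 - ρ * z ≠ 0 ∧ q - ρ * z ≠ 0 := by
  obtain ⟨ρ, hρ⟩ : ∃ ρ : L, ρ ^ 2 - (x + 1 - y) * ρ + x = 0 := by
    obtain ⟨ρ, hρ⟩ := IsAlgClosed.exists_root
      (Polynomial.C 1 * Polynomial.X ^ 2 + Polynomial.C (-(x + 1 - y)) * Polynomial.X +
        Polynomial.C x) (by rw [Polynomial.degree_quadratic one_ne_zero]; simp)
    refine ⟨ρ, ?_⟩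
    simp only [Polynomial.IsRoot.def, Polynomial.eval_add, Polynomial.eval_mul, Polynomial.eval_C,
      Polynomial.eval_pow, Polynomial.eval_X] at hρ
    linear_combination hρ
  have hρ0 : ρ ≠ 0 := by
    rintro rfl
    exact hx (by linear_combination hρ)
  have hm : (ρ - 1) * (ρ - ρ ^ 2 / x) = ρ ^ 2 / x * y := by
    field_simp
    linear_combination -hρ
  have hm0 : (ρ - 1) * (ρ - ρ ^ 2 / x) ≠ 0 := by
    rw [hm]
    positivity
  refine ⟨ρ ^ 2 / x, ρ, ⟨by positivity, ?_, hρ0, sub_ne_zero.1 (left_ne_zero_of_mul hm0),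
    sub_ne_zero.1 (right_ne_zero_of_mul hm0), by field_simp, hm⟩, fun z hz => ⟨?_, ?_⟩⟩
  · intro h
    rw [div_eq_one_iff_eq hx] at h
    refine hxy (mul_left_cancel₀ hx ?_)
    linear_combination (2 * x + (x + 1 - y) * ρ) * hρ + ((x + 1 - y) ^ 2 - 2 * x -
      (x + 1 - y) * ρ) * h
  · intro h
    refine hz (mul_left_cancel₀ (pow_ne_zero 2 hρ0) ?_)
    linear_combination hρ + (ρ * (x + 1 - y) - x * (1 + ρ * z)) * h
  · intro h
    have h : ρ = x * z := by
      refine mul_left_cancel₀ hρ0 ?_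
      rw [sub_eq_zero, div_eq_iff hx] at h
      linear_combination h
    subst h
    refine hz (mul_left_cancel₀ hx ?_)
    linear_combination hρ

theorem map_Zqua {R S : Type*} [CommRing R] [CommRing S] (f : R →+* S) (n : ℕ)
    (x y z1 z2 z3 z4 : R) :
    f (Zqua n x y z1 z2 z3 z4) = Zqua n (f x) (f y) (f z1) (f z2) (f z3) (f z4) := by
  simp [Zqua, apply_ite f]

theorem isASM_identity (n : ℕ) :
    IsASM (asmMat fun i j : Fin n => if i = j then 2 else 1) := by
  have h : (asmMat fun i j : Fin n => if i = j then 2 else 1) =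
      fun i j => if i = j then 1 else 0 := by
    ext i j
    rw [asmMat]
    split_ifs <;> simp
  rw [h]
  refine ⟨fun i j => ?_, fun i j => ?_, fun i j => ?_, fun i => ?_, fun j => ?_⟩
  · dsimp only
    split_ifs <;> simp
  · rw [sum_ite_eq]
    split_ifs <;> simp
  · rw [sum_ite_eq']
    split_ifs <;> simp
  · simp
  · simp

theorem Zun_one_one_ne_zero (n : ℕ) : Zun n (1 : ℚ) 1 ≠ 0 := by
  classical
  refine ne_of_gt ?_
  simp only [Zun, Zqua, one_pow, mul_one]
  refine sum_pos' (fun e _ => ?_) ⟨fun i j => if i = j then 2 else 1, mem_univ _, ?_⟩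
  · split_ifs <;> simp
  · rw [if_pos (isASM_identity n)]
    exact one_pos

theorem Zadj_eq_of_uniformization {L : Type*} [Field L] {q ρ x y z₁ z₂ : L}
    (h : Uniformization q ρ x y) (hx : x ≠ 0) (hy : y ≠ 0) (hz₁ : z₁ ≠ 0) (hz₂ : z₂ ≠ 0)
    (hz₁' : z₁ ≠ 1) (hz₂' : z₂ ≠ 1) (h₁ : 1 - ρ * z₁ ≠ 0) (h₂ : q - ρ * z₂ ≠ 0)
    (hz : y * (z₁ * z₂) ≠ (z₁ - 1) * (z₂ - 1)) (hZ : ∀ n, Zun n x y ≠ 0) (n : ℕ) :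
    Zadj (n + 1) x y z₁ z₂ = Zun n x y * (1 + ∑ i ∈ Icc 1 n,
      (y * z₁ * z₂ / ((z₁ - 1) * (z₂ - 1))) ^ (n + 1 - i) *
        (1 + (x * (z₁ - 1) * (z₂ - 1) - y) * Zsing i x y z₁ * Zsing i x y z₂ /
          (y * Zun (i - 1) x y * Zun i x y))) := by
  induction n with
  | zero => simp [Zadj_one h, Zun_zero]
  | succ n ih =>
    have hrec := h.Zadj_recursion n hx hz₁ hz₂ h₁ h₂ hz
    have hd₁ := sub_ne_zero.2 hz₁'
    have hd₂ := sub_ne_zero.2 hz₂'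
    have hZ0 := hZ n
    have hZ1 := hZ (n + 1)
    have hsum : ∑ i ∈ Icc 1 n, (y * z₁ * z₂ / ((z₁ - 1) * (z₂ - 1))) ^ (n + 1 + 1 - i) *
        (1 + (x * (z₁ - 1) * (z₂ - 1) - y) * Zsing i x y z₁ * Zsing i x y z₂ /
          (y * Zun (i - 1) x y * Zun i x y)) =
        y * z₁ * z₂ / ((z₁ - 1) * (z₂ - 1)) * (Zadj (n + 1) x y z₁ z₂ / Zun n x y - 1) := by
      rw [ih, mul_div_cancel_left₀ _ hZ0, add_sub_cancel_left, mul_sum]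
      refine sum_congr rfl fun i hi => ?_
      rw [Nat.sub_add_comm (by grind : i ≤ n + 1), pow_succ]
      ring
    rw [sum_Icc_succ_top (by lia), hsum, Nat.add_sub_cancel_left, Nat.add_sub_cancel, pow_one]
    field_simp
    linear_combination hrec

theorem algebraMap_ne_zero_of_eval (c : Fin 4 → ℚ) {p : MvPolynomial (Fin 4) ℚ}
    (h : MvPolynomial.eval c p ≠ 0) : algebraMap (MvPolynomial (Fin 4) ℚ) K4 p ≠ 0 := by
  rw [map_ne_zero_iff _ (IsFractionRing.injective _ _)]
  rintro rfl
  exact h (map_zero _)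

theorem Zadj_eq (n : ℕ) :
    Zadj (n + 1) vx vy vz1 vz2 = Zun n vx vy * (1 + ∑ i ∈ Icc 1 n,
      (vy * vz1 * vz2 / ((vz1 - 1) * (vz2 - 1))) ^ (n + 1 - i) *
        (1 + (vx * (vz1 - 1) * (vz2 - 1) - vy) * Zsing i vx vy vz1 * Zsing i vx vy vz2 /
          (vy * Zun (i - 1) vx vy * Zun i vx vy))) := by
  let X (i : Fin 4) : MvPolynomial (Fin 4) ℚ := MvPolynomial.X i
  have hx : vx ≠ 0 := algebraMap_ne_zero_of_eval 1 (p := X 0) (by simp [X])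
  have hy : vy ≠ 0 := algebraMap_ne_zero_of_eval 1 (p := X 1) (by simp [X])
  have hz₁ : vz1 ≠ 0 := algebraMap_ne_zero_of_eval 1 (p := X 2) (by simp [X])
  have hz₂ : vz2 ≠ 0 := algebraMap_ne_zero_of_eval 1 (p := X 3) (by simp [X])
  have hz₁' : vz1 ≠ 1 := by
    have := algebraMap_ne_zero_of_eval 0 (p := X 2 - 1) (by simp [X])
    rwa [map_sub, map_one, sub_ne_zero] at this
  have hz₂' : vz2 ≠ 1 := by
    have := algebraMap_ne_zero_of_eval 0 (p := X 3 - 1) (by simp [X])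
    rwa [map_sub, map_one, sub_ne_zero] at this
  have hxy : 4 * vx ≠ (vx + 1 - vy) ^ 2 := by
    have := algebraMap_ne_zero_of_eval 1 (p := 4 * X 0 - (X 0 + 1 - X 1) ^ 2)
      (by simp [X]; norm_num)
    simpa [map_ofNat (algebraMap (MvPolynomial (Fin 4) ℚ) K4) 4, sub_ne_zero, X, vx, vy] using this
  have hxz₁ : vx * vz1 ^ 2 + 1 ≠ vz1 * (vx + 1 - vy) := by
    have := algebraMap_ne_zero_of_eval 1 (p := X 0 * X 2 ^ 2 + 1 - X 2 * (X 0 + 1 - X 1))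
      (by simp [X])
    simpa [sub_ne_zero, X, vx, vy, vz1, vz2] using this
  have hxz₂ : vx * vz2 ^ 2 + 1 ≠ vz2 * (vx + 1 - vy) := by
    have := algebraMap_ne_zero_of_eval 1 (p := X 0 * X 3 ^ 2 + 1 - X 3 * (X 0 + 1 - X 1))
      (by simp [X])
    simpa [sub_ne_zero, X, vx, vy, vz1, vz2] using this
  have hz : vy * (vz1 * vz2) ≠ (vz1 - 1) * (vz2 - 1) := by
    have := algebraMap_ne_zero_of_eval 1 (p := X 1 * (X 2 * X 3) - (X 2 - 1) * (X 3 - 1))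
      (by simp [X])
    simpa [sub_ne_zero, X, vx, vy, vz1, vz2] using this
  have hZ (m : ℕ) : Zun m vx vy ≠ 0 := by
    have := algebraMap_ne_zero_of_eval 1 (p := Zun m (X 0) (X 1))
      (by simpa [X, Zun, map_Zqua] using Zun_one_one_ne_zero m)
    simpa only [Zun, map_Zqua, map_one, X, vx, vy] using this
  let f := algebraMap K4 (AlgebraicClosure K4)
  have hf : Function.Injective f := f.injective
  have map_Zun (m : ℕ) : f (Zun m vx vy) = Zun m (f vx) (f vy) := by
    simp only [Zun, map_Zqua, map_one]
  have map_Zsing (m : ℕ) (z : K4) : f (Zsing m vx vy z) = Zsing m (f vx) (f vy) (f z) := by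
    simp only [Zsing, map_Zqua, map_one]
  have map_Zadj : f (Zadj (n + 1) vx vy vz1 vz2) =
      Zadj (n + 1) (f vx) (f vy) (f vz1) (f vz2) := by
    simp only [Zadj, map_Zqua, map_one]
  obtain ⟨q, ρ, h, hρ⟩ := exists_uniformization (x := f vx) (y := f vy)
    (by simpa using hx) (by simpa using hy) (by simpa [map_ofNat f 4] using hf.ne hxy)
  obtain ⟨h₁, -⟩ := hρ (f vz1) (by simpa using hf.ne hxz₁)
  obtain ⟨-, h₂⟩ := hρ (f vz2) (by simpa using hf.ne hxz₂)
  refine hf ?_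
  have key := Zadj_eq_of_uniformization h (by simpa using hx) (by simpa using hy)
    (by simpa using hz₁) (by simpa using hz₂) (by simpa using hf.ne hz₁')
    (by simpa using hf.ne hz₂') h₁ h₂ (by simpa using hf.ne hz)
    (fun m => by rw [← map_Zun]; simpa using hZ m) n
  simpa only [map_Zadj, map_mul, map_add, map_one, map_sum, map_pow, map_div₀, map_sub, map_Zun,
    map_Zsing] using key

end SixVertex

/-- Closed expression for the adjacent-boundary doubly-refined ASM generating
function, as an identity in the field of rational functions `ℚ(x,y,z1,z2)`
(the convention `Z_0(x,y) = 1` holds definitionally: `Zun 0 x y = 1`). -/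
theorem stmt6 (n : ℕ) (hn : 2 ≤ n) :
    Zadj n vx vy vz1 vz2 =
      Zun (n - 1) vx vy *
        (1 + ∑ i ∈ Finset.Icc 1 (n - 1),
          (vy * vz1 * vz2 / ((vz1 - 1) * (vz2 - 1))) ^ (n - i) *
            (1 + (vx * (vz1 - 1) * (vz2 - 1) - vy) *
                Zsing i vx vy vz1 * Zsing i vx vy vz2 /
              (vy * Zun (i - 1) vx vy * Zun i vx vy))) := by
  obtain ⟨m, rfl⟩ := Nat.exists_eq_add_of_le' (one_le_two.trans hn)
  exact SixVertex.Zadj_eq m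
end
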